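/- arXiv:2005.01875 — 2 statements merged into one kernel-verified Lean document; each statement's English description precedes it below -/
import Mathlib

section
/- Let l ≥ 1. For every finite Souslin measurable colouring c of 𝓔_∞(ω·l) and every E ∈ 𝓔_∞(ω·l), there exists F ∈ 𝓔_∞(ω·l) with F ≤ E such that c is constant on 𝓔_∞(ω·l) ↾ F = {F' ∈ 𝓔_∞(ω·l) : F' ≤ F}. -/
open Set

namespace DualRamsey

/-- `F` is a coarsening of `E` (written `F ≤ E` in the paper): every class of `F`
is a union of classes of `E`. -/
def Coarsens {X : Type*} (F E : Setoid X) : Prop := ∀ a b, E.r a b → F.r a b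

/-- The set of equivalence classes of a setoid. -/
def classes {X : Type*} (E : Setoid X) : Set (Set X) := {C | ∃ x, C = {y | E.r x y}}

/-- The set of minimal representatives of the classes of an equivalence relation on ℕ. -/
def minReps (E : Setoid ℕ) : Set ℕ := {n | ∀ m, E.r n m → n ≤ m}

/-- `pRep E k` is `p_k(E)`, the k-th minimal representative in increasing order. -/
noncomputable def pRep (E : Setoid ℕ) (k : ℕ) : ℕ := Nat.nth (· ∈ minReps E) k

/-- `approx n E` is the n-th approximation `r_n(E)`: `E` restricted to `{0,…,p_n(E)-1}`,
identified with its graph. -/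
noncomputable def approx (n : ℕ) (E : Setoid ℕ) : Set (ℕ × ℕ) :=
  {q | q.1 < pRep E n ∧ q.2 < pRep E n ∧ E.r q.1 q.2}

/-- Basic set `[a, E]` relative to a space `S` of equivalence relations. -/
noncomputable def basicSet (S : Set (Setoid ℕ)) (a : Set (ℕ × ℕ)) (E : ↥S) : Set ↥S :=
  {F | Coarsens F.1 E.1 ∧ ∃ n, approx n F.1 = a}

/-- The Ellentuck topology on a space `S` of equivalence relations. -/
noncomputable def ellentuckTop (S : Set (Setoid ℕ)) : TopologicalSpace ↥S :=
  TopologicalSpace.generateFrom {U | ∃ a E, U = basicSet S a E}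

def IsRamsey (S : Set (Setoid ℕ)) (X : Set ↥S) : Prop :=
  ∀ (a : Set (ℕ × ℕ)) (B : ↥S), (basicSet S a B).Nonempty →
    ∃ A ∈ basicSet S a B, basicSet S a A ⊆ X ∨ basicSet S a A ∩ X = ∅

def IsRamseyNull (S : Set (Setoid ℕ)) (X : Set ↥S) : Prop :=
  ∀ (a : Set (ℕ × ℕ)) (B : ↥S), (basicSet S a B).Nonempty →
    ∃ A ∈ basicSet S a B, basicSet S a A ∩ X = ∅

/-- The property of Baire with respect to the Ellentuck topology. -/
noncomputable def HasBP (S : Set (Setoid ℕ)) (X : Set ↥S) : Prop :=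
  ∃ O M : Set ↥S, (ellentuckTop S).IsOpen O ∧ @IsMeagre _ (ellentuckTop S) M ∧
    X = (O \ M) ∪ (M \ O)

/-- The Souslin operation applied to a scheme indexed by finite sequences of naturals. -/
def souslinOp {X : Type*} (A : List ℕ → Set X) : Set X :=
  ⋃ x : ℕ → ℕ, ⋂ n : ℕ, A ((List.range n).map x)

/-- `Y` belongs to the smallest field of sets containing all `t`-open sets and
closed under the Souslin operation. -/
def SouslinMeasurable {X : Type*} (t : TopologicalSpace X) (Y : Set X) : Prop :=
  ∀ 𝒜 : Set (Set X),
    (∀ U, t.IsOpen U → U ∈ 𝒜) →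
    (∀ A ∈ 𝒜, Aᶜ ∈ 𝒜) →
    (∀ A ∈ 𝒜, ∀ B ∈ 𝒜, A ∪ B ∈ 𝒜) →
    (∀ f : List ℕ → Set X, (∀ s, f s ∈ 𝒜) → souslinOp f ∈ 𝒜) →
    Y ∈ 𝒜

/-- The graph of an equivalence relation as a boolean-valued function. -/
noncomputable def graphMap {X : Type*} (E : Setoid X) : X × X → Bool :=
  fun q => @decide (E.r q.1 q.2) (Classical.dec _)

/-- The metrizable topology on a space of equivalence relations, as a subspace of
`2^(X × X)` via graphs. -/
noncomputable def graphTop {X : Type*} (S : Set (Setoid X)) : TopologicalSpace ↥S :=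
  TopologicalSpace.induced (fun E => graphMap E.1) inferInstance



/-! Equivalence relations on `ω·l`, identified with `ℕ × Fin l` where `(n,i)`
corresponds to the ordinal `ω·i + n`. -/

/-- The ordinal order on `ω·l ≅ ℕ × Fin l`. -/
def ordLE {l : ℕ} (a b : ℕ × Fin l) : Prop := a.2 < b.2 ∨ (a.2 = b.2 ∧ a.1 ≤ b.1)

/-- The lexicographic order `⪯` on `ω·l ≅ ℕ × Fin l`. -/
def lexLE {l : ℕ} (a b : ℕ × Fin l) : Prop := a.1 < b.1 ∨ (a.1 = b.1 ∧ a.2 ≤ b.2)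

/-- The set `p(E)` of minimal (in the ordinal order) representatives of the classes. -/
def minRepsL {l : ℕ} (E : Setoid (ℕ × Fin l)) : Set (ℕ × Fin l) :=
  {a | ∀ b, E.r a b → ordLE a b}

/-- The set of `⪯`-minimal representatives of the classes. -/
def lexMinRepsL {l : ℕ} (E : Setoid (ℕ × Fin l)) : Set (ℕ × Fin l) :=
  {a | ∀ b, E.r a b → lexLE a b}

/-- The `n`-th element of `ω·l` in the `⪯`-order. -/
def decodeL (l : ℕ) (hl : 0 < l) (n : ℕ) : ℕ × Fin l := (n / l, ⟨n % l, Nat.mod_lt n hl⟩)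

/-- `p_k(E)`: the `k`-th element of `p(E)` in the `⪯`-increasing enumeration. -/
noncomputable def pRepL (l : ℕ) (hl : 0 < l) (E : Setoid (ℕ × Fin l)) (k : ℕ) :
    ℕ × Fin l :=
  decodeL l hl (Nat.nth (fun n => decodeL l hl n ∈ minRepsL E) k)

/-- `𝓔_∞(ω·l)`: equivalence relations on `ω·l` with infinitely many classes whose
`⪯`-increasing enumeration `(p_k)` of minimal representatives satisfies
`p_k ∈ ω × {k mod l}`, and whose `⪯`-minimal representatives coincide with the
(ordinal-)minimal representatives. -/
noncomputable def EInfL (l : ℕ) (hl : 0 < l) : Set (Setoid (ℕ × Fin l)) :=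
  {E | (classes E).Infinite ∧
    (∀ k : ℕ, (pRepL l hl E k).2 = ⟨k % l, Nat.mod_lt k hl⟩) ∧
    lexMinRepsL E = minRepsL E}

/-- Rigid surjections of ℕ respecting residues mod `l`. -/
structure Rg (l : ℕ) where
  f : ℕ → ℕ
  surj : ∀ n, ∃ x, f x = n
  rigid : ∀ x j, j < f x → ∃ y, y < x ∧ f y = j
  res : ∀ x, f x % l ≤ x % l
  first : ∀ x, (∀ y, y < x → f y ≠ f x) → x % l = f x % l

namespace Rg
variable {l : ℕ}

instance : CoeFun (Rg l) (fun _ => ℕ → ℕ) := ⟨Rg.f⟩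

theorem ext' {a b : Rg l} (h : ∀ x, a x = b x) : a = b := by
  cases a; cases b
  congr
  funext x
  exact h x

instance : Monoid (Rg l) where
  mul a b :=
    { f := fun x => a (b x)
      surj := fun n => by
        obtain ⟨y, hy⟩ := a.surj n
        obtain ⟨x, hx⟩ := b.surj y
        exact ⟨x, by rw [hx, hy]⟩
      rigid := fun x j hj => by
        obtain ⟨y, hy, hy'⟩ := a.rigid _ _ hj
        obtain ⟨z, hz, hz'⟩ := b.rigid _ _ hy
        exact ⟨z, hz, by rw [hz', hy']⟩
      res := fun x => (a.res _).trans (b.res _)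
      first := fun x hx => by
        have h1 : x % l = b x % l := b.first x (fun y hy h => hx y hy (by rw [h]))
        rw [h1]
        apply a.first
        intro y hy h
        obtain ⟨z, hz, hz'⟩ := b.rigid _ _ hy
        exact hx z hz (by rw [hz', h]) }
  one :=
    { f := fun x => x
      surj := fun n => ⟨n, rfl⟩
      rigid := fun x j hj => ⟨j, hj, rfl⟩
      res := fun x => le_rfl
      first := fun x _ => rfl }
  mul_assoc a b c := rfl
  one_mul a := rfl
  mul_one a := rfl

@[simp] theorem mul_apply (a b : Rg l) (x : ℕ) : (a * b) x = a (b x) := rfl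
@[simp] theorem one_apply (x : ℕ) : (1 : Rg l) x = x := rfl

theorem le_self (a : Rg l) (x : ℕ) : a x ≤ x := by
  induction x using Nat.strong_induction_on with
  | _ x ih =>
    by_contra h
    push Not at h
    obtain ⟨y, hy, hy'⟩ := a.rigid x x h
    have := ih y hy
    omega

/-- first occurrence of the value `n`. -/
def pp (n : ℕ) (a : Rg l) : ℕ := Nat.find (a.surj n)

@[simp] theorem apply_pp (n : ℕ) (a : Rg l) : a (pp n a) = n := Nat.find_spec (a.surj n)

theorem pp_le {n : ℕ} {a : Rg l} {x : ℕ} (h : a x = n) : pp n a ≤ x := Nat.find_min' _ h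

theorem lt_of_lt_pp {n : ℕ} {a : Rg l} {x : ℕ} (h : x < pp n a) : a x < n := by
  by_contra h1
  push Not at h1
  rcases h1.lt_or_eq with h2 | h2
  · obtain ⟨y, hy, hy'⟩ := a.rigid _ _ h2
    have := pp_le hy'
    omega
  · have := pp_le h2.symm
    omega

theorem le_pp (n : ℕ) (a : Rg l) : n ≤ pp n a := by
  have := a.le_self (pp n a)
  simpa using this

theorem pp_mod (n : ℕ) (a : Rg l) : pp n a % l = n % l := by
  have := a.first (pp n a) (fun y hy h => by
    have := lt_of_lt_pp hy
    simp at h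
    omega)
  simpa using this

theorem pp_strictMono (a : Rg l) : StrictMono (fun n => pp n a) := by
  intro m n h
  by_contra h1
  simp only [not_lt] at h1
  rcases h1.lt_or_eq with h2 | h2
  · have := lt_of_lt_pp h2
    simp at this
    omega
  · have : a (pp n a) = a (pp m a) := by rw [h2]
    simp at this
    omega

theorem pp_eq {n : ℕ} {a : Rg l} {k : ℕ} (h : a k = n) (h' : ∀ x, x < k → a x < n) :
    pp n a = k := by
  apply le_antisymm (pp_le h)
  by_contra h1
  push Not at h1
  have := h' _ h1
  simp at this

theorem pp_mul (n : ℕ) (a b : Rg l) : pp n (a * b) = pp (pp n a) b := by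
  apply pp_eq
  · simp
  · intro x hx
    show a (b x) < n
    exact lt_of_lt_pp (lt_of_lt_pp hx)

theorem le_of_le_pp {n : ℕ} {a : Rg l} {x : ℕ} (h : x ≤ pp n a) : a x ≤ n := by
  rcases h.lt_or_eq with h | h
  · exact (lt_of_lt_pp h).le
  · subst h; simp

/-- elements fixing `0,…,k`. -/
def Fx (k : ℕ) (h : Rg l) : Prop := ∀ i, i ≤ k → h i = i

theorem Fx_one (k : ℕ) : Fx k (1 : Rg l) := fun _ _ => rfl
theorem Fx.mul {k : ℕ} {a b : Rg l} (ha : Fx k a) (hb : Fx k b) : Fx k (a * b) := by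
  intro i hi
  rw [mul_apply, hb i hi, ha i hi]
theorem Fx.mono {k k' : ℕ} {a : Rg l} (ha : Fx k a) (h : k' ≤ k) : Fx k' a :=
  fun i hi => ha i (hi.trans h)
theorem Fx_zero (a : Rg l) : Fx 0 a := by
  intro i hi
  have := a.le_self i
  omega
theorem Fx.pp_eq {k : ℕ} {a : Rg l} (ha : Fx k a) {i : ℕ} (hi : i ≤ k) : pp i a = i :=
  Rg.pp_eq (ha i hi) (fun x hx => by rw [ha x (by omega)]; exact hx)

/-- canonical approximations of depth `k`. -/
def T (k : ℕ) : Set (Rg l) := {a | (∀ x, x < k → a x < a k) ∧ ∀ i, a (k + i) = a k + i}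

theorem T_one (k : ℕ) : (1 : Rg l) ∈ T k := ⟨fun x hx => hx, fun _ => rfl⟩

theorem T.pp {k : ℕ} {a : Rg l} (h : a ∈ T k) : pp (a k) a = k := Rg.pp_eq rfl h.1

theorem T.mod {k : ℕ} {a : Rg l} (h : a ∈ T k) : k % l = a k % l := by
  have := pp_mod (a k) a
  rwa [T.pp h] at this

theorem T.add {k : ℕ} {a : Rg l} (h : a ∈ T k) (j : ℕ) : a ∈ T (k + j) := by
  refine ⟨fun x hx => ?_, fun i => ?_⟩
  · rw [h.2 j]
    by_cases h1 : x < k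
    · have := h.1 x h1; omega
    · have := h.2 (x - k)
      rw [show k + (x - k) = x by omega] at this
      omega
  · rw [h.2 j, add_assoc, h.2]; omega

theorem T_finite (k : ℕ) : (T k : Set (Rg l)).Finite := by
  let φ : Rg l → (Fin (k + 1) → Fin (k + 1)) := fun a i => ⟨a i, by
    have := a.le_self i
    have := i.2
    omega⟩
  apply Set.Finite.of_finite_image (f := φ) (Set.toFinite _)
  intro a ha b hb hab
  have h1 : ∀ i, i ≤ k → a i = b i := by
    intro i hi
    have := congrFun hab ⟨i, by omega⟩
    simpa [φ] using this
  apply ext'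
  intro x
  by_cases hx : x ≤ k
  · exact h1 x hx
  · have h2 := ha.2 (x - k)
    have h3 := hb.2 (x - k)
    rw [show k + (x - k) = x by omega] at h2 h3
    rw [h2, h3, h1 k le_rfl]

theorem mod_shift {l n k i : ℕ} (h : n % l = k % l) : (n + i) % l = (k + i) % l :=
  Nat.ModEq.add_right i h

/-- gluing `a` below `k` with the part of `g` above `k'`. -/
def glue (a g : Rg l) (k k' : ℕ) (h1 : ∀ x, x < k → a x < a k) (h2 : ∀ x, x < k' → g x < g k')
    (h3 : a k = g k') : Rg l :=
  have hk : k = pp (a k) a := (pp_eq rfl h1).symm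
  have hk' : k' = pp (g k') g := (pp_eq rfl h2).symm
  have hm : k % l = k' % l := by rw [hk, hk', pp_mod, pp_mod, h3]
  { f := fun y => if y ≤ k then a y else g (k' + (y - k))
    surj := by
      intro v
      by_cases hv : v ≤ a k
      · refine ⟨pp v a, ?_⟩
        have : pp v a ≤ k := by
          rw [hk]; exact (pp_strictMono a).monotone hv
        simp [this]
      · have : k' < pp v g := by
          rw [hk']; exact pp_strictMono g (by omega)
        refine ⟨k + (pp v g - k'), ?_⟩
        have h5 : ¬ (k + (pp v g - k') ≤ k) := by omega
        simp only [h5, if_false]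
        rw [show k' + (k + (pp v g - k') - k) = pp v g by omega, apply_pp]
    rigid := by
      intro x j hj
      by_cases hx : x ≤ k
      · simp only [hx, if_true] at hj
        obtain ⟨y, hy, hy'⟩ := a.rigid _ _ hj
        have : y ≤ k := by omega
        exact ⟨y, hy, by simp [this, hy']⟩
      · simp only [hx, if_false] at hj
        by_cases hja : j ≤ a k
        · refine ⟨pp j a, ?_, ?_⟩
          · have : pp j a ≤ k := by
              rw [hk]; exact (pp_strictMono a).monotone hja
            omega
          · have : pp j a ≤ k := by
              rw [hk]; exact (pp_strictMono a).monotone hja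
            simp [this]
        · obtain ⟨y, hy, hy'⟩ := g.rigid _ _ hj
          have hy2 : k' < y := by
            by_contra hc
            rcases (not_lt.1 hc).lt_or_eq with h | h
            · have := h2 y h; omega
            · subst h; omega
          refine ⟨k + (y - k'), by omega, ?_⟩
          have h5 : ¬ (k + (y - k') ≤ k) := by omega
          simp only [h5, if_false]
          rw [show k' + (k + (y - k') - k) = y by omega, hy']
    res := by
      intro x
      by_cases hx : x ≤ k
      · simp only [hx, if_true]; exact a.res x
      · simp only [hx, if_false]
        refine (g.res _).trans ?_
        have := mod_shift (i := x - k) hm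
        rw [show k + (x - k) = x by omega] at this
        rw [this]
    first := by
      intro x hx
      by_cases hxk : x ≤ k
      · simp only [hxk, if_true] at hx ⊢
        apply a.first
        intro y hy
        have := hx y hy
        rwa [if_pos (by omega)] at this
      · simp only [hxk, if_false] at hx ⊢
        have := mod_shift (i := x - k) hm
        rw [show k + (x - k) = x by omega] at this
        rw [this]
        apply g.first
        intro y hy h
        by_cases hja : g y ≤ a k
        · have h7 : pp (g y) a ≤ k := by
            rw [hk]; exact (pp_strictMono a).monotone hja
          apply hx (pp (g y) a) (by omega)
          rw [if_pos h7, apply_pp, h]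
        · have hy2 : k' < y := by
            by_contra hc
            rcases (not_lt.1 hc).lt_or_eq with h | h
            · have := h2 y h; omega
            · subst h; omega
          apply hx (k + (y - k')) (by omega)
          have h5 : ¬ (k + (y - k') ≤ k) := by omega
          simp only [h5, if_false]
          rw [show k' + (k + (y - k') - k) = y by omega, h] }

theorem glue_le (a g : Rg l) (k k' : ℕ) (h1 h2 h3) {y : ℕ} (hy : y ≤ k) :
    glue a g k k' h1 h2 h3 y = a y := by
  simp [glue, hy]

theorem glue_add (a g : Rg l) (k k' : ℕ) (h1 h2 h3) (i : ℕ) :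
    glue a g k k' h1 h2 h3 (k + i) = g (k' + i) := by
  rcases Nat.eq_zero_or_pos i with h | h
  · subst h; simp [glue, h3]
  · have : ¬ (k + i ≤ k) := by omega
    simp only [glue, this, if_false]
    congr 1; omega

/-- truncation. -/
def tr (n : ℕ) (a : Rg l) : Rg l :=
  glue a 1 (pp n a) n (fun x hx => by simpa using lt_of_lt_pp hx) (fun x hx => hx) (by simp)

theorem tr_le {n : ℕ} {a : Rg l} {x : ℕ} (h : x ≤ pp n a) : tr n a x = a x := glue_le _ _ _ _ _ _ _ h

theorem tr_mem (n : ℕ) (a : Rg l) : tr n a ∈ T (pp n a) := by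
  refine ⟨fun x hx => ?_, fun i => ?_⟩
  · rw [tr_le hx.le, tr_le le_rfl]; simpa using lt_of_lt_pp hx
  · rw [tr_le le_rfl, tr, glue_add]; simp

theorem T_eq {k : ℕ} {a b : Rg l} (ha : a ∈ T k) (hb : b ∈ T k) (h : ∀ x, x ≤ k → a x = b x) :
    a = b := by
  apply ext'
  intro x
  by_cases hx : x ≤ k
  · exact h x hx
  · have h2 := ha.2 (x - k)
    have h3 := hb.2 (x - k)
    rw [show k + (x - k) = x by omega] at h2 h3
    rw [h2, h3, h k le_rfl]

/-- the unit part of `f` at level `n`. -/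
def up (n : ℕ) (f : Rg l) : Rg l :=
  { f := fun x => if x ≤ pp n f then x else if f x < n then pp (f x) f else pp n f + (f x - n)
    surj := by
      intro v
      by_cases hv : v ≤ pp n f
      · exact ⟨v, by simp [hv]⟩
      · refine ⟨pp (n + (v - pp n f)) f, ?_⟩
        have h1 : pp n f < pp (n + (v - pp n f)) f := pp_strictMono f (by omega)
        have h2 : ¬ (pp (n + (v - pp n f)) f ≤ pp n f) := by omega
        simp only [h2, if_false, apply_pp]
        rw [if_neg (by omega)]
        omega
    rigid := by
      intro x j hj
      by_cases hx : x ≤ pp n f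
      · simp only [hx, if_true] at hj
        exact ⟨j, hj, by rw [if_pos (by omega)]⟩
      · by_cases hjp : j ≤ pp n f
        · exact ⟨j, by omega, by rw [if_pos hjp]⟩
        · simp only [hx, if_false] at hj
          by_cases hfx : f x < n
          · simp only [hfx, if_true] at hj
            have := pp_strictMono f hfx
            simp at this
            omega
          · simp only [hfx, if_false] at hj
            obtain ⟨y, hy, hy'⟩ := f.rigid x (n + (j - pp n f)) (by omega)
            refine ⟨y, hy, ?_⟩
            have : ¬ (y ≤ pp n f) := by
              intro hc
              have := le_of_le_pp hc
              omega
            rw [if_neg this, if_neg (by omega)]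
            omega
    res := by
      intro x
      by_cases hx : x ≤ pp n f
      · simp [hx]
      · simp only [hx, if_false]
        by_cases hfx : f x < n
        · simp only [hfx, if_true]
          rw [pp_mod]; exact f.res x
        · simp only [hfx, if_false]
          rw [mod_shift (pp_mod n f), show n + (f x - n) = f x by omega]
          exact f.res x
    first := by
      intro x hx
      by_cases hxp : x ≤ pp n f
      · simp [hxp]
      · simp only [hxp, if_false] at hx ⊢
        by_cases hfx : f x < n
        · exfalso
          simp only [hfx, if_true] at hx
          have := pp_strictMono f hfx
          simp only at this
          exact hx (pp (f x) f) (by omega) (by rw [if_pos (by omega)])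
        · simp only [hfx, if_false] at hx ⊢
          rw [mod_shift (pp_mod n f), show n + (f x - n) = f x by omega]
          apply f.first
          intro y hy h
          by_cases hyp : y ≤ pp n f
          · have h9 := le_of_le_pp hyp
            have h10 : f x = n := by omega
            apply hx (pp n f) (by omega)
            simp [h10]
          · apply hx y hy
            rw [if_neg hyp, h, if_neg hfx] }

theorem up_Fx (n : ℕ) (f : Rg l) : Fx (pp n f) (up n f) := by
  intro i hi
  simp [up, hi]

theorem T_decomp {k : ℕ} {a g : Rg l} (ha : a ∈ T k) (h : ∀ x, x ≤ k → g x = a x) :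
    ∃ u, Fx k u ∧ g = a * u := by
  have hp : pp (a k) g = k := pp_eq (h k le_rfl) (fun x hx => by rw [h x hx.le]; exact ha.1 x hx)
  refine ⟨up (a k) g, ?_, ?_⟩
  · have := up_Fx (a k) g
    rwa [hp] at this
  · apply ext'
    intro x
    simp only [mul_apply, up, hp]
    split_ifs with h1 h2
    · exact h x h1
    · have : pp (g x) g < k := by
        rw [← hp]; exact pp_strictMono g h2
      rw [← h _ this.le, apply_pp]
    · rw [ha.2]; omega

theorem T_agree {k : ℕ} {a u : Rg l} (hu : Fx k u) : ∀ x, x ≤ k → (a * u) x = a x := by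
  intro x hx
  rw [mul_apply, hu x hx]

theorem tr_decomp (n : ℕ) (f : Rg l) : ∃ u, Fx (pp n f) u ∧ f = tr n f * u :=
  T_decomp (tr_mem n f) (fun _ hx => (tr_le hx).symm)

theorem T_comm {k : ℕ} {c u : Rg l} (hc : c ∈ T k) (hu : Fx k u) :
    ∃ u', Fx (c k) u' ∧ c * u = u' * c := by
  have hA : ∀ x, x < k → (c * u) x < (c * u) k := by
    intro x hx
    rw [T_agree hu x hx.le, T_agree hu k le_rfl]
    exact hc.1 x hx
  have hB : (1 : Rg l) (c k) = (c * u) k := by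
    rw [T_agree hu k le_rfl]; rfl
  refine ⟨glue 1 (c * u) (c k) k (fun x hx => hx) hA hB, ?_, ?_⟩
  · intro i hi
    rw [glue_le _ _ _ _ _ _ _ hi]; rfl
  · apply ext'
    intro x
    by_cases hx : x ≤ k
    · have h1 : c x ≤ c k := by
        rcases hx.lt_or_eq with h | h
        · exact (hc.1 x h).le
        · rw [h]
      rw [T_agree hu x hx, mul_apply, glue_le _ _ _ _ _ _ _ h1]; rfl
    · have h2 := hc.2 (x - k)
      rw [show k + (x - k) = x by omega] at h2
      rw [mul_apply (glue _ _ _ _ _ _ _), h2, glue_add, show k + (x - k) = x by omega]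

/-- same `n`-th approximation -/
def Eqv (n : ℕ) (f g : Rg l) : Prop := ∀ x, x ≤ pp n f → g x = f x

theorem Eqv.pp {n : ℕ} {f g : Rg l} (h : Eqv n f g) : pp n g = pp n f :=
  pp_eq (by rw [h _ le_rfl]; simp) (fun x hx => by rw [h x hx.le]; exact lt_of_lt_pp hx)

theorem Eqv.symm {n : ℕ} {f g : Rg l} (h : Eqv n f g) : Eqv n g f := by
  intro x hx
  rw [h.pp] at hx
  exact (h x hx).symm

theorem Eqv.tr {n : ℕ} {f g : Rg l} (h : Eqv n f g) : tr n g = tr n f := by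
  have h1 := tr_mem n g
  rw [h.pp] at h1
  apply T_eq h1 (tr_mem n f)
  intro x hx
  rw [tr_le hx, tr_le (by rw [h.pp]; exact hx), h x hx]

theorem Eqv.mul {n : ℕ} {f g : Rg l} (h : Eqv n f g) (c : Rg l) : Eqv n (f * c) (g * c) := by
  intro x hx
  rw [pp_mul] at hx
  rw [mul_apply, mul_apply]
  exact h _ (le_of_le_pp hx)

theorem Eqv.mono {n m : ℕ} {f g : Rg l} (h : Eqv n f g) (hm : m ≤ n) : Eqv m f g :=
  fun x hx => h x (hx.trans ((pp_strictMono f).monotone hm))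

theorem Eqv_tr (n : ℕ) (f : Rg l) : Eqv n f (Rg.tr n f) := fun _ hx => tr_le hx

theorem Eqv_T {k : ℕ} {a u : Rg l} (ha : a ∈ T k) (hu : Fx k u) : Eqv (a k) a (a * u) := by
  intro x hx
  rw [T.pp ha] at hx
  exact T_agree hu x hx

theorem T_mul {k : ℕ} {a c : Rg l} (ha : a ∈ T (c k)) (hc : c ∈ T k) : a * c ∈ T k := by
  refine ⟨fun x hx => ha.1 _ (hc.1 x hx), fun i => ?_⟩
  rw [mul_apply, hc.2, ha.2]; rfl

end Rg

namespace CS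
open Filter
variable {L : Type}

/-- substitution in a variable word -/
def sub1 (c : L) (x : List (Option L)) : List L := x.map (fun o => o.getD c)

def HasLine (A : Set (List L)) : Prop := ∃ x : List (Option L), none ∈ x ∧ ∀ c, sub1 c x ∈ A

theorem sub1_append (c : L) (x y : List (Option L)) : sub1 c (x ++ y) = sub1 c x ++ sub1 c y := by
  simp [sub1]

theorem sub1_some (c : L) (x : List L) : sub1 c (x.map some) = x := by
  simp [sub1]

theorem exists_line_ultrafilter [Finite L] :
    ∃ w : Ultrafilter (List L), ∀ A ∈ w, HasLine A := by
  have hne : (Filter.generate {A : Set (List L) | ¬ HasLine Aᶜ}).NeBot := by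
    rw [Filter.generate_neBot_iff]
    intro t ht hfin
    by_contra hemp
    rw [Set.not_nonempty_iff_eq_empty] at hemp
    have hcol : ∀ v : List L, ∃ A : t, v ∉ A.1 := by
      intro v
      have : v ∉ ⋂₀ t := by rw [hemp]; simp
      simp only [Set.mem_sInter, not_forall] at this
      obtain ⟨A, hA, hv⟩ := this
      exact ⟨⟨A, hA⟩, hv⟩
    choose col hcol using hcol
    have : Finite t := hfin
    obtain ⟨ι, _, hι⟩ := Combinatorics.Line.exists_mono_in_high_dimension L t
    let e := Fintype.equivFin ι
    obtain ⟨ln, c, hc⟩ := hι (fun v => col (List.ofFn (v ∘ e.symm)))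
    apply ht c.2
    refine ⟨List.ofFn (ln.idxFun ∘ e.symm), ?_, ?_⟩
    · obtain ⟨i, hi⟩ := ln.proper
      rw [List.mem_ofFn]
      exact ⟨e i, by simp [hi]⟩
    · intro a
      have h1 : col (List.ofFn (ln a ∘ e.symm)) = c := hc a
      have h2 := hcol (List.ofFn (ln a ∘ e.symm))
      rw [h1] at h2
      have h3 : sub1 a (List.ofFn (ln.idxFun ∘ e.symm)) = List.ofFn (ln a ∘ e.symm) := by
        rw [sub1, List.map_ofFn]
        rfl
      rw [h3]
      exact h2
  refine ⟨Ultrafilter.of (Filter.generate {A : Set (List L) | ¬ HasLine Aᶜ}), fun A hA => ?_⟩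
  by_contra h
  have h1 : Aᶜ ∈ Filter.generate {A : Set (List L) | ¬ HasLine Aᶜ} := by
    apply Filter.mem_generate_of_mem
    simpa using h
  have h2 : Aᶜ ∈ Ultrafilter.of (Filter.generate {A : Set (List L) | ¬ HasLine Aᶜ}) :=
    Ultrafilter.of_le _ h1
  exact (Ultrafilter.compl_mem_iff_notMem.1 h2) hA

theorem exists_idem_line [Finite L] :
    ∃ w : Ultrafilter (List L), (∀ A ∈ w, HasLine A) ∧
      ∀ A : Set (List L), A ∈ w ↔ ∀ᶠ m in (w : Filter (List L)), ∀ᶠ m' in (w : Filter (List L)),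
        m ++ m' ∈ A := by
  let : Semigroup (List L) := { mul := fun a b => a ++ b, mul_assoc := List.append_assoc }
  let : Semigroup (Ultrafilter (List L)) := Ultrafilter.semigroup
  have hmul : ∀ (U V : Ultrafilter (List L)) (A : Set (List L)), A ∈ U * V ↔
    ∀ᶠ m in (U : Filter (List L)), ∀ᶠ m' in (V : Filter (List L)), m ++ m' ∈ A := by
    intro U V A
    exact Ultrafilter.eventually_mul U V (fun m => m ∈ A)
  obtain ⟨w, hw, hi⟩ := exists_idempotent_in_compact_subsemigroup
    (M := Ultrafilter (List L)) (fun r => Ultrafilter.continuous_mul_left r)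
    {w | ∀ A ∈ w, HasLine A} exists_line_ultrafilter
    (by
      apply IsClosed.isCompact
      have : {w : Ultrafilter (List L) | ∀ A ∈ w, HasLine A} =
          ⋂ A ∈ {A : Set (List L) | ¬ HasLine A}, {w : Ultrafilter (List L) | A ∈ w}ᶜ := by
        ext w
        simp only [Set.mem_ofPred_eq, Set.mem_iInter, Set.mem_compl_iff]
        constructor
        · intro h A hA hw
          exact hA (h A hw)
        · intro h A hw
          by_contra hA
          exact h A hA hw
      rw [this]
      apply isClosed_biInter
      intro A _
      exact (ultrafilter_isOpen_basic A).isClosed_compl)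
    (by
      intro x hx y hy A hA
      rw [hmul] at hA
      obtain ⟨m, hm⟩ := hA.exists
      obtain ⟨z, hz, hz'⟩ := hy _ hm
      refine ⟨m.map some ++ z, by simp [hz], fun c => ?_⟩
      rw [sub1_append, sub1_some]
      exact hz' c)
  refine ⟨w, hw, fun A => ?_⟩
  rw [← hmul, hi]

theorem split_word (x : List (Option L)) (h : none ∈ x) :
    ∃ (s : List L) (t : List (Option L)), x = s.map some ++ none :: t := by
  induction x with
  | nil => simp at h
  | cons o x ih =>
    cases o with
    | none => exact ⟨[], x, rfl⟩
    | some a =>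
      have : none ∈ x := by simpa using h
      obtain ⟨s, t, hst⟩ := ih this
      exact ⟨a :: s, t, by simp [hst]⟩

/-- substitution of variables -/
def subB (b : ℕ → L) (Y : List (L ⊕ ℕ)) : List L := Y.map (Sum.elim id b)

theorem limit_word (Y P : ℕ → List (L ⊕ ℕ)) (hP : ∀ k, P k ++ [Sum.inr k] <+: Y (k + 1))
    (hY : ∀ k, Y k <+: P k) (hv : ∀ k j, Sum.inr j ∈ P k → j < k) :
    ∃ (W : ℕ → L ⊕ ℕ), ∀ m, P m = (List.range (P m).length).map W ∧
      W (P m).length = Sum.inr m ∧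
      (∀ x, x < (P m).length → ∀ j, W x = Sum.inr j → j < m) := by
  have hstep : ∀ k, Y k <+: Y (k + 1) := fun k =>
    (hY k).trans ((List.prefix_append _ _).trans (hP k))
  have hmono : ∀ k d, Y k <+: Y (k + d) := by
    intro k d
    induction d with
    | zero => exact List.prefix_rfl
    | succ d ih => exact ih.trans (hstep _)
  have hlen : ∀ k, k ≤ (Y k).length := by
    intro k
    induction k with
    | zero => simp
    | succ k ih =>
      have h1 := (hP k).length_le
      have h2 := (hY k).length_le
      simp at h1
      omega
  have hpre : ∀ (A B : List (L ⊕ ℕ)), A <+: B → ∀ q, q < A.length → A[q]? = B[q]? := by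
    rintro A B ⟨z, rfl⟩ q hq
    rw [List.getElem?_append_left hq]
  let W : ℕ → L ⊕ ℕ := fun q => ((Y (q + 1))[q]?).getD (Sum.inr 0)
  have hW : ∀ k q, q < (Y k).length → (Y k)[q]? = some (W q) := by
    intro k q hq
    have h1 : q < (Y (q + 1)).length := hlen (q + 1)
    have h2 : (Y k)[q]? = (Y (q + 1))[q]? := by
      rcases le_total k (q + 1) with h | h
      · obtain ⟨d, hd⟩ := Nat.exists_eq_add_of_le h
        rw [hd]
        exact hpre _ _ (hmono k d) q hq
      · obtain ⟨d, rfl⟩ := Nat.exists_eq_add_of_le h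
        exact (hpre _ _ (hmono (q + 1) d) q h1).symm
    rw [h2, List.getElem?_eq_getElem h1]
    simp [W, List.getElem?_eq_getElem h1]
  have hW' : ∀ m q, q < (P m).length → (P m)[q]? = some (W q) := by
    intro m q hq
    have h3 : P m <+: Y (m + 1) := (List.prefix_append _ _).trans (hP m)
    rw [hpre _ _ h3 q hq]
    exact hW _ _ (lt_of_lt_of_le hq h3.length_le)
  refine ⟨W, fun m => ⟨?_, ?_, ?_⟩⟩
  · apply List.ext_getElem?
    intro q
    by_cases hq : q < (P m).length
    · rw [hW' m q hq]
      simp [hq]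
    · rw [List.getElem?_eq_none (by omega), List.getElem?_eq_none (by simp; omega)]
  · have h1 := hpre _ _ (hP m) (P m).length (by simp)
    have h2 := hW (m + 1) (P m).length (by
      have := (hP m).length_le
      simp at this
      omega)
    rw [h2] at h1
    simp at h1
    exact h1.symm
  · intro x hx j hj
    apply hv
    have := hW' m x hx
    rw [hj] at this
    exact List.mem_of_getElem? this

theorem cs_aux [Finite L] (w : Ultrafilter (List L)) (v : Ultrafilter (List (Option L)))
    (hidem : ∀ A : Set (List L), A ∈ w ↔ ∀ᶠ m in (w : Filter (List L)),
      ∀ᶠ m' in (w : Filter (List L)), m ++ m' ∈ A)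
    (hv : ∀ A ∈ w, ∀ᶠ x in (v : Filter (List (Option L))), none ∈ x ∧ ∀ c, sub1 c x ∈ A)
    (pre : List (Option L) → List L)
    (post : List (Option L) → List (Option L))
    (hpp : ∀ x, none ∈ x → x = (pre x).map some ++ none :: post x)
    (A : Set (List L))
    (hA : ∀ᶠ y in (w : Filter (List L)), ∀ᶠ x in (v : Filter (List (Option L))), y ++ pre x ∈ A) :
    ∃ (W : ℕ → L ⊕ ℕ) (s : ℕ → ℕ), ∀ m, W (s m) = Sum.inr m ∧
      (∀ x, x < s m → ∀ j, W x = Sum.inr j → j < m) ∧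
      ∀ b : ℕ → L, (List.range (s m)).map (fun x => Sum.elim id b (W x)) ∈ A := by
  set A1 : Set (List L) := {y | ∀ᶠ x in (v : Filter (List (Option L))), y ++ pre x ∈ A} with hA1
  have hA1w : A1 ∈ w := hA
  set A2 : Set (List L) := {y | y ∈ A1 ∧ ∀ᶠ m in (w : Filter (List L)), y ++ m ∈ A1} with hA2
  have hA2w : A2 ∈ w := by
    have h1 := (hidem A1).1 hA1w
    have h2 : ∀ᶠ y in (w : Filter (List L)), y ∈ A1 := hA1w
    exact h2.and h1
  have hA2s : ∀ y ∈ A2, ∀ᶠ m in (w : Filter (List L)), y ++ m ∈ A2 := by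
    intro y hy
    have h1 : {m | y ++ m ∈ A1} ∈ w := hy.2
    have h2 := (hidem _).1 h1
    filter_upwards [hy.2, h2] with m hm hm2
    refine ⟨hm, ?_⟩
    filter_upwards [hm2] with m' hm'
    simpa using hm'
  have step : ∀ (k : ℕ) (Y : List (L ⊕ ℕ)), ((∀ j, Sum.inr j ∈ Y → j < k) ∧ ∀ b, subB b Y ∈ A2) →
      ∃ P Y' : List (L ⊕ ℕ), Y <+: P ∧ P ++ [Sum.inr k] <+: Y' ∧ (∀ j, Sum.inr j ∈ P → j < k) ∧
        (∀ b, subB b P ∈ A) ∧ (∀ j, Sum.inr j ∈ Y' → j < k + 1) ∧ ∀ b, subB b Y' ∈ A2 := by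
    rintro k Y ⟨hk, hY⟩
    have hfin : (Set.range (fun b : ℕ → L => subB b Y)).Finite := by
      apply (List.finite_length_eq L Y.length).subset
      rintro _ ⟨b, rfl⟩
      simp [subB]
    have e1 : ∀ᶠ x in (v : Filter (List (Option L))),
        ∀ y ∈ Set.range (fun b : ℕ → L => subB b Y), y ++ pre x ∈ A := by
      rw [Filter.eventually_all_finite hfin]
      rintro _ ⟨b, rfl⟩
      exact (hY b).1
    have e2 : {m | ∀ y ∈ Set.range (fun b : ℕ → L => subB b Y), y ++ m ∈ A2} ∈ w := by
      show ∀ᶠ m in (w : Filter (List L)), ∀ y ∈ Set.range (fun b : ℕ → L => subB b Y), y ++ m ∈ A2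
      rw [Filter.eventually_all_finite hfin]
      rintro _ ⟨b, rfl⟩
      exact hA2s _ (hY b)
    obtain ⟨x, hx1, hx2, hx3⟩ := (e1.and (hv _ e2)).exists
    have hx4 := hpp x hx2
    refine ⟨Y ++ (pre x).map Sum.inl, Y ++ x.map (fun o => o.elim (Sum.inr k) Sum.inl),
      List.prefix_append _ _, ?_, ?_, ?_, ?_, ?_⟩
    · refine ⟨(post x).map (fun o => o.elim (Sum.inr k) Sum.inl), ?_⟩
      conv_rhs => rw [hx4]
      simp
    · intro j hj
      simp at hj
      exact hk j hj
    · intro b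
      have := hx1 _ ⟨b, rfl⟩
      simpa [subB] using this
    · intro j hj
      rw [List.mem_append] at hj
      rcases hj with hj | hj
      · exact (hk j hj).trans (Nat.lt_succ_self k)
      · rw [List.mem_map] at hj
        obtain ⟨o, _, ho⟩ := hj
        cases o with
        | none => simp at ho; omega
        | some a => simp at ho
    · intro b
      have := hx3 (b k) _ ⟨b, rfl⟩
      have h5 : subB b (Y ++ x.map (fun o => o.elim (Sum.inr k) Sum.inl)) =
          subB b Y ++ sub1 (b k) x := by
        simp only [subB, sub1, List.map_append, List.map_map]
        congr 1
        apply List.map_congr_left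
        intro o _
        cases o <;> rfl
      rw [h5]
      exact this
  choose! P N hYP hPN hPv hPA hNv hN2 using step
  obtain ⟨y0, hy0⟩ := w.nonempty_of_mem hA2w
  let Y : ℕ → List (L ⊕ ℕ) := fun n => Nat.rec (y0.map Sum.inl) (fun k y => N k y) n
  have hYs : ∀ k, Y (k + 1) = N k (Y k) := fun k => rfl
  have hgood : ∀ k, (∀ j, Sum.inr j ∈ Y k → j < k) ∧ ∀ b, subB b (Y k) ∈ A2 := by
    intro k
    induction k with
    | zero =>
      refine ⟨fun j hj => ?_, fun b => ?_⟩
      · simp [Y] at hj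
      · simpa [Y, subB] using hy0
    | succ k ih =>
      rw [hYs]
      exact ⟨hNv k _ ih, hN2 k _ ih⟩
  obtain ⟨W, hW⟩ := limit_word Y (fun k => P k (Y k)) (fun k => hPN k _ (hgood k))
    (fun k => hYP k _ (hgood k)) (fun k => hPv k _ (hgood k))
  refine ⟨W, fun m => (P m (Y m)).length, fun m => ⟨(hW m).2.1, (hW m).2.2, fun b => ?_⟩⟩
  have := hPA m _ (hgood m) b
  rw [subB, (hW m).1, List.map_map] at this
  exact this

/-- The Carlson–Simpson theorem. -/
theorem carlson_simpson [Finite L] (S : Set (List L)) :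
    ∃ (W : ℕ → L ⊕ ℕ) (s : ℕ → ℕ), (∀ m, W (s m) = Sum.inr m ∧
      (∀ x, x < s m → ∀ j, W x = Sum.inr j → j < m)) ∧
      ((∀ m, ∀ b : ℕ → L, (List.range (s m)).map (fun x => Sum.elim id b (W x)) ∈ S) ∨
       (∀ m, ∀ b : ℕ → L, (List.range (s m)).map (fun x => Sum.elim id b (W x)) ∉ S)) := by
  obtain ⟨w, hw, hidem⟩ := exists_idem_line (L := L)
  have hmon : Monotone (fun A : Set (List L) => {x : List (Option L) | none ∈ x ∧ ∀ c, sub1 c x ∈ A}) := by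
    intro A B h x hx
    exact ⟨hx.1, fun c => h (hx.2 c)⟩
  have hne : ((w : Filter (List L)).lift'
      (fun A : Set (List L) => {x : List (Option L) | none ∈ x ∧ ∀ c, sub1 c x ∈ A})).NeBot := by
    rw [Filter.lift'_neBot_iff hmon]
    intro A hA
    exact hw A hA
  let v := Ultrafilter.of ((w : Filter (List L)).lift'
      (fun A : Set (List L) => {x : List (Option L) | none ∈ x ∧ ∀ c, sub1 c x ∈ A}))
  have hv : ∀ A ∈ w, ∀ᶠ x in (v : Filter (List (Option L))), none ∈ x ∧ ∀ c, sub1 c x ∈ A := by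
    intro A hA
    exact Ultrafilter.of_le _ (Filter.mem_lift' hA)
  have hsp := split_word (L := L)
  choose! pre post hpp using hsp
  by_cases hS : ∀ᶠ y in (w : Filter (List L)), ∀ᶠ x in (v : Filter (List (Option L))), y ++ pre x ∈ S
  · obtain ⟨W, s, h⟩ := cs_aux w v hidem hv pre post hpp S hS
    exact ⟨W, s, fun m => ⟨(h m).1, (h m).2.1⟩, Or.inl fun m => (h m).2.2⟩
  · rw [← Ultrafilter.eventually_not] at hS
    have hS' : ∀ᶠ y in (w : Filter (List L)), ∀ᶠ x in (v : Filter (List (Option L))),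
        y ++ pre x ∈ Sᶜ := by
      filter_upwards [hS] with y hy
      rw [← Ultrafilter.eventually_not] at hy
      exact hy
    obtain ⟨W, s, h⟩ := cs_aux w v hidem hv pre post hpp Sᶜ hS'
    exact ⟨W, s, fun m => ⟨(h m).1, (h m).2.1⟩, Or.inr fun m => (h m).2.2⟩

end CS

namespace Rg
variable {l : ℕ}

/-- blocks of letters -/
def Blk (l k : ℕ) : Type := {b : Fin l → Fin (k + 1) // ∀ i : Fin l, (b i : ℕ) % l ≤ (k + 1 + i) % l}

instance (l k : ℕ) : Finite (Blk l k) := by unfold Blk; infer_instance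

/-- the function coded by a word of blocks -/
def blkFun (hl : 0 < l) (k : ℕ) (W : ℕ → Blk l k ⊕ ℕ) (x : ℕ) : ℕ :=
  if x ≤ k then x else
    Sum.elim (fun b => (b.1 ⟨(x - k - 1) % l, Nat.mod_lt _ hl⟩ : ℕ))
      (fun j => k + 1 + (l * j + (x - k - 1) % l)) (W ((x - k - 1) / l))

theorem blkFun_le (hl : 0 < l) (k : ℕ) (W : ℕ → Blk l k ⊕ ℕ) {x : ℕ} (h : x ≤ k) :
    blkFun hl k W x = x := by simp [blkFun, h]

theorem blk_arith (hl : 0 < l) (k q i : ℕ) (hi : i < l) :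
    (k + 1 + (l * q + i) - k - 1) % l = i ∧ (k + 1 + (l * q + i) - k - 1) / l = q := by
  have h : k + 1 + (l * q + i) - k - 1 = l * q + i := by omega
  rw [h]
  constructor
  · rw [Nat.mul_add_mod, Nat.mod_eq_of_lt hi]
  · rw [Nat.mul_add_div hl, Nat.div_eq_of_lt hi, add_zero]

theorem blkFun_inl (hl : 0 < l) (k : ℕ) (W : ℕ → Blk l k ⊕ ℕ) {q i : ℕ} (hi : i < l) {b : Blk l k}
    (h : W q = Sum.inl b) : blkFun hl k W (k + 1 + (l * q + i)) = (b.1 ⟨i, hi⟩ : ℕ) := by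
  have h1 : ¬ (k + 1 + (l * q + i) ≤ k) := by omega
  obtain ⟨h2, h3⟩ := blk_arith hl k q i hi
  simp only [blkFun, h1, if_false, h2, h3, h, Sum.elim_inl]

theorem blkFun_inr (hl : 0 < l) (k : ℕ) (W : ℕ → Blk l k ⊕ ℕ) {q i : ℕ} (hi : i < l) {j : ℕ}
    (h : W q = Sum.inr j) : blkFun hl k W (k + 1 + (l * q + i)) = k + 1 + (l * j + i) := by
  have h1 : ¬ (k + 1 + (l * q + i) ≤ k) := by omega
  obtain ⟨h2, h3⟩ := blk_arith hl k q i hi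
  simp only [blkFun, h1, if_false, h2, h3, h, Sum.elim_inr]

theorem blk_cases (hl : 0 < l) (k x : ℕ) :
    x ≤ k ∨ ∃ q i, i < l ∧ x = k + 1 + (l * q + i) := by
  by_cases h : x ≤ k
  · exact Or.inl h
  · refine Or.inr ⟨(x - k - 1) / l, (x - k - 1) % l, Nat.mod_lt _ hl, ?_⟩
    rw [Nat.div_add_mod]; omega

theorem blk_mod (k q i : ℕ) : (k + 1 + (l * q + i)) % l = (k + 1 + i) % l := by
  rw [show k + 1 + (l * q + i) = k + 1 + i + l * q by ring, Nat.add_mul_mod_self_left]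

/-- the element of `Rg l` coded by a word of blocks -/
def blk (hl : 0 < l) (k : ℕ) (W : ℕ → Blk l k ⊕ ℕ) (s : ℕ → ℕ)
    (hs : ∀ m, W (s m) = Sum.inr m ∧ ∀ x, x < s m → ∀ j, W x = Sum.inr j → j < m) : Rg l where
  f := blkFun hl k W
  surj := by
    intro v
    rcases blk_cases hl k v with h | ⟨q, i, hi, rfl⟩
    · exact ⟨v, blkFun_le hl k W h⟩
    · exact ⟨k + 1 + (l * s q + i), blkFun_inr hl k W hi (hs q).1⟩
  rigid := by
    intro x j' hj
    rcases blk_cases hl k x with h | ⟨q, i, hi, rfl⟩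
    · rw [blkFun_le hl k W h] at hj
      exact ⟨j', hj, blkFun_le hl k W (by omega)⟩
    · rcases blk_cases hl k j' with h' | ⟨j2, i2, hi2, rfl⟩
      · exact ⟨j', by omega, blkFun_le hl k W h'⟩
      · refine ⟨k + 1 + (l * s j2 + i2), ?_, blkFun_inr hl k W hi2 (hs j2).1⟩
        cases hW : W q with
        | inl b =>
          rw [blkFun_inl hl k W hi hW] at hj
          have := (b.1 ⟨i, hi⟩).2
          omega
        | inr j =>
          rw [blkFun_inr hl k W hi hW] at hj
          have hsj : s j ≤ q := by
            by_contra hc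
            have := (hs j).2 q (by omega) j hW
            omega
          have hj2 : j2 ≤ j := by
            by_contra hc
            have : l * (j + 1) ≤ l * j2 := Nat.mul_le_mul_left l (by omega)
            rw [mul_add] at this
            omega
          rcases hj2.lt_or_eq with h3 | h3
          · have h4 : s j2 < s j := by
              by_contra hc
              rcases (not_lt.1 hc).lt_or_eq with h5 | h5
              · have := (hs j2).2 _ h5 j (hs j).1
                omega
              · have h6 := (hs j2).1
                rw [← h5, (hs j).1] at h6
                simp at h6
                omega
            have : l * (s j2 + 1) ≤ l * q := Nat.mul_le_mul_left l (by omega)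
            rw [mul_add] at this
            omega
          · subst h3
            have : l * s j2 ≤ l * q := Nat.mul_le_mul_left l hsj
            omega
  res := by
    intro x
    rcases blk_cases hl k x with h | ⟨q, i, hi, rfl⟩
    · rw [blkFun_le hl k W h]
    · cases hW : W q with
      | inl b =>
        rw [blkFun_inl hl k W hi hW, blk_mod]
        exact b.2 ⟨i, hi⟩
      | inr j =>
        rw [blkFun_inr hl k W hi hW, blk_mod, blk_mod]
  first := by
    intro x hx
    rcases blk_cases hl k x with h | ⟨q, i, hi, rfl⟩
    · rw [blkFun_le hl k W h]
    · cases hW : W q with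
      | inl b =>
        exfalso
        have h2 := (b.1 ⟨i, hi⟩).2
        apply hx (b.1 ⟨i, hi⟩ : ℕ) (by omega)
        rw [blkFun_inl hl k W hi hW, blkFun_le hl k W (by omega)]
      | inr j =>
        rw [blkFun_inr hl k W hi hW, blk_mod, blk_mod]

theorem Blk_zero_mem (l k : ℕ) : ∀ i : Fin l, ((0 : Fin (k + 1)) : ℕ) % l ≤ (k + 1 + i) % l := by
  intro i; simp

/-- words as elements -/
def wordW {k : ℕ} (w : List (Blk l k)) (q : ℕ) : Blk l k ⊕ ℕ :=
  if h : q < w.length then Sum.inl w[q] else Sum.inr (q - w.length)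

theorem wordW_spec {k : ℕ} (w : List (Blk l k)) (m : ℕ) :
    wordW w (w.length + m) = Sum.inr m ∧
      ∀ x, x < w.length + m → ∀ j, wordW w x = Sum.inr j → j < m := by
  constructor
  · simp [wordW]
  · intro x hx j hj
    unfold wordW at hj
    split_ifs at hj with h
    simp at hj
    omega

/-- the pigeonhole principle -/
theorem pigeonhole (hl : 0 < l) (k : ℕ) (S : Set (Rg l))
    (hS : ∀ u u', Eqv (k + 1) u u' → (u ∈ S ↔ u' ∈ S)) :
    ∃ h : Rg l, Fx k h ∧ ((∀ u, Fx k u → u * h ∈ S) ∨ (∀ u, Fx k u → u * h ∉ S)) := by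
  obtain ⟨W, s, hs, hcol⟩ := CS.carlson_simpson
    {w : List (Blk l k) | blk hl k (wordW w) (fun m => w.length + m) (wordW_spec w) ∈ S}
  have key : ∀ u, Fx k u → ∃ (m : ℕ) (b : ℕ → Blk l k), ∀ w : List (Blk l k),
      w = (List.range (s m)).map (fun x => Sum.elim id b (W x)) →
      Eqv (k + 1) (blk hl k (wordW w) (fun m => w.length + m) (wordW_spec w)) (u * blk hl k W s hs) := by
    intro u hu
    have hm : ∃ m, pp (k + 1) u = k + 1 + l * m := by
      have h1 := pp_mod (k + 1) u
      have h2 := le_pp (k + 1) u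
      have h3 := (Nat.modEq_iff_dvd' h2).1 h1.symm
      obtain ⟨m, hm⟩ := h3
      exact ⟨m, by omega⟩
    obtain ⟨m, hm⟩ := hm
    have hb : ∀ j, ∃ b : Blk l k, j < m → ∀ i : Fin l, u (k + 1 + (l * j + i)) = (b.1 i : ℕ) := by
      intro j
      by_cases hj : j < m
      · have hlt : ∀ i : Fin l, u (k + 1 + (l * j + i)) < k + 1 := by
          intro i
          apply lt_of_lt_pp
          rw [hm]
          have : l * (j + 1) ≤ l * m := Nat.mul_le_mul_left l (by omega)
          rw [mul_add] at this
          have := i.2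
          omega
        refine ⟨⟨fun i => ⟨u (k + 1 + (l * j + i)), hlt i⟩, fun i => ?_⟩, fun _ i => rfl⟩
        have := u.res (k + 1 + (l * j + i))
        rwa [blk_mod] at this
      · exact ⟨⟨fun _ => 0, Blk_zero_mem l k⟩, fun h => absurd h hj⟩
    choose b hb using hb
    refine ⟨m, b, ?_⟩
    rintro w hw x hx
    have hlen : w.length = s m := by rw [hw]; simp
    have hval : blk hl k (wordW w) (fun m => w.length + m) (wordW_spec w) (k + 1 + (l * s m + 0))
        = k + 1 + (l * 0 + 0) := by
      apply blkFun_inr hl k _ hl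
      have := (wordW_spec w 0).1
      rwa [hlen] at this
    have hx2 : x ≤ k + 1 + l * s m := by
      refine hx.trans (pp_le ?_)
      simpa using hval
    rw [mul_apply]
    rcases blk_cases hl k x with h | ⟨q, i, hi, rfl⟩
    · have e1 : blk hl k W s hs x = x := blkFun_le hl k W h
      have e2 : blk hl k (wordW w) (fun m => w.length + m) (wordW_spec w) x = x :=
        blkFun_le hl k _ h
      rw [e1, e2, hu x h]
    · have hq : q ≤ s m := by
        by_contra hc
        have : l * (s m + 1) ≤ l * q := Nat.mul_le_mul_left l (by omega)
        rw [mul_add] at this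
        omega
      rcases hq.lt_or_eq with hq | hq
      · have hwq : wordW w q = Sum.inl (Sum.elim id b (W q)) := by
          have : q < w.length := by omega
          simp only [wordW, this, dif_pos]
          subst hw
          simp
        have e2 : blk hl k (wordW w) (fun m => w.length + m) (wordW_spec w) (k + 1 + (l * q + i)) =
            ((Sum.elim id b (W q)).1 ⟨i, hi⟩ : ℕ) := blkFun_inl hl k _ hi hwq
        rw [e2]
        cases hWq : W q with
        | inl c =>
          have e1 : blk hl k W s hs (k + 1 + (l * q + i)) = _ := blkFun_inl hl k W hi hWq
          rw [e1, hu _ (by have := (c.1 ⟨i, hi⟩).2; omega)]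
          rfl
        | inr j =>
          have e1 : blk hl k W s hs (k + 1 + (l * q + i)) = _ := blkFun_inr hl k W hi hWq
          rw [e1]
          exact hb j ((hs m).2 q hq j hWq) ⟨i, hi⟩
      · subst hq
        have hi0 : i = 0 := by omega
        subst hi0
        have e1 : blk hl k W s hs (k + 1 + (l * s m + 0)) = k + 1 + (l * m + 0) :=
          blkFun_inr hl k W hl (hs m).1
        rw [hval, e1, add_zero, ← hm]
        simp
  refine ⟨blk hl k W s hs, fun i hi => blkFun_le hl k W hi, ?_⟩
  rcases hcol with hcol | hcol
  · left
    intro u hu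
    obtain ⟨m, b, h⟩ := key u hu
    exact (hS _ _ (h _ rfl)).1 (hcol m b)
  · right
    intro u hu
    obtain ⟨m, b, h⟩ := key u hu
    exact fun hc => hcol m b ((hS _ _ (h _ rfl)).2 hc)

end Rg

namespace Rg
variable {l : ℕ}

/-- partial products -/
def prodG (g : ℕ → Rg l) (n : ℕ) : ℕ → Rg l
  | 0 => 1
  | d + 1 => g (n + d) * prodG g n d

theorem prodG_succ' (g : ℕ → Rg l) (n d : ℕ) : prodG g n (d + 1) = prodG g (n + 1) d * g n := by
  induction d with
  | zero => rfl
  | succ d ih =>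
    rw [prodG, ih, prodG, mul_assoc, show n + (d + 1) = n + 1 + d by omega]

theorem prodG_stable (g : ℕ → Rg l) (k0 : ℕ) (hg : ∀ n, Fx (k0 + n) (g n)) (n d x : ℕ)
    (h : prodG g n d x ≤ k0 + n + d) (e : ℕ) : prodG g n (d + e) x = prodG g n d x := by
  induction e with
  | zero => rfl
  | succ e ih =>
    rw [← add_assoc, prodG, mul_apply, ih]
    exact hg _ _ (by omega)

theorem prodG_stable' (g : ℕ → Rg l) (k0 : ℕ) (hg : ∀ n, Fx (k0 + n) (g n)) (n x d : ℕ)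
    (h : x ≤ d) : prodG g n d x = prodG g n x x := by
  obtain ⟨e, rfl⟩ := Nat.exists_eq_add_of_le h
  apply prodG_stable g k0 hg
  have := (prodG g n x).le_self x
  omega

/-- infinite products -/
def limG (g : ℕ → Rg l) (k0 : ℕ) (hg : ∀ n, Fx (k0 + n) (g n)) (n : ℕ) : Rg l where
  f := fun x => prodG g n x x
  surj := by
    intro v
    obtain ⟨x, hx⟩ := (prodG g n v).surj v
    refine ⟨x, ?_⟩
    rw [← prodG_stable' g k0 hg n x (v + x) (by omega),
      prodG_stable g k0 hg n v x (by rw [hx]; omega), hx]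
  rigid := by
    intro x j hj
    obtain ⟨y, hy, hy'⟩ := (prodG g n x).rigid _ _ hj
    exact ⟨y, hy, by rw [← prodG_stable' g k0 hg n y x hy.le, hy']⟩
  res := fun x => (prodG g n x).res x
  first := by
    intro x hx
    apply (prodG g n x).first
    intro y hy
    have := hx y hy
    rwa [← prodG_stable' g k0 hg n y x hy.le] at this

theorem limG_Fx (g : ℕ → Rg l) (k0 : ℕ) (hg : ∀ n, Fx (k0 + n) (g n)) (n : ℕ) :
    Fx (k0 + n) (limG g k0 hg n) := by
  intro i hi
  have : prodG g n i i = prodG g n 0 i := by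
    have := prodG_stable g k0 hg n 0 i (by show i ≤ _; omega) i
    rwa [zero_add] at this
  exact this

theorem limG_succ (g : ℕ → Rg l) (k0 : ℕ) (hg : ∀ n, Fx (k0 + n) (g n)) (n : ℕ) :
    limG g k0 hg n = limG g k0 hg (n + 1) * g n := by
  apply ext'
  intro x
  show prodG g n x x = prodG g (n + 1) (g n x) (g n x)
  rw [← prodG_stable' g k0 hg n x (x + 1) (by omega), prodG_succ',
    ← prodG_stable' g k0 hg (n + 1) (g n x) x ((g n).le_self x)]
  rfl

theorem fusion (P : ℕ → Rg l → Prop) (k0 : ℕ)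
    (h1 : ∀ k, k0 ≤ k → ∀ E, ∃ h, Fx k h ∧ P k (h * E))
    (h2 : ∀ k, k0 ≤ k → ∀ E h, P k E → Fx k h → P k (h * E)) (E : Rg l) :
    ∃ h, Fx k0 h ∧ ∀ k, k0 ≤ k → P k (h * E) := by
  choose! H hH hP using h1
  let e : ℕ → Rg l := fun n => Nat.rec E (fun n x => H (k0 + n) x * x) n
  have he : ∀ n, e (n + 1) = H (k0 + n) (e n) * e n := fun n => rfl
  let g : ℕ → Rg l := fun n => H (k0 + n) (e n)
  have hg : ∀ n, Fx (k0 + n) (g n) := fun n => hH _ (by omega) _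
  have hlim : ∀ n, limG g k0 hg 0 * E = limG g k0 hg n * e n := by
    intro n
    induction n with
    | zero => rfl
    | succ n ih => rw [ih, limG_succ, he, mul_assoc]
  refine ⟨limG g k0 hg 0, limG_Fx g k0 hg 0, fun k hk => ?_⟩
  obtain ⟨n, rfl⟩ := Nat.exists_eq_add_of_le hk
  rw [hlim (n + 1)]
  apply h2 _ hk
  · rw [he]; exact hP _ hk _
  · exact (limG_Fx g k0 hg (n + 1)).mono (by omega)

theorem dec_all (D : ℕ → Rg l → Rg l → Prop) (k0 : ℕ)
    (h1 : ∀ k, k0 ≤ k → ∀ a ∈ T k, ∀ E, ∃ h, Fx k h ∧ D k a (h * E))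
    (h2 : ∀ k, k0 ≤ k → ∀ a ∈ T k, ∀ E h, D k a E → Fx k h → D k a (h * E)) (E : Rg l) :
    ∃ h, Fx k0 h ∧ ∀ k, k0 ≤ k → ∀ a ∈ T k, D k a (h * E) := by
  apply fusion (fun k E => ∀ a ∈ T k, D k a E) k0
  · intro k hk
    have : ∀ s : Set (Rg l), s.Finite → s ⊆ T k → ∀ E, ∃ h, Fx k h ∧ ∀ a ∈ s, D k a (h * E) := by
      intro s hs
      induction s, hs using Set.Finite.induction_on with
      | empty => exact fun _ E => ⟨1, Fx_one k, by simp⟩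
      | insert _ _ ih =>
        intro hsub E
        obtain ⟨h, hh, hD⟩ := ih (fun x hx => hsub (Set.mem_insert_of_mem _ hx)) E
        obtain ⟨h', hh', hD'⟩ := h1 k hk _ (hsub (Set.mem_insert _ _)) (h * E)
        refine ⟨h' * h, hh'.mul hh, ?_⟩
        intro b hb
        rcases Set.mem_insert_iff.1 hb with rfl | hb'
        · exact hD'
        · exact h2 k hk b (hsub hb) (h * E) h' (hD b hb') hh'
    exact this _ (T_finite k) (subset_refl _)
  · intro k hk E h hP hh a ha
    exact h2 k hk a ha E h (hP a ha) hh

def null (Y : Set (Rg l)) (a : Rg l) (k : ℕ) (B : Rg l) : Prop := ∀ u, Fx k u → a * u * B ∉ Y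
def live (Y : Set (Rg l)) (a : Rg l) (k : ℕ) (B : Rg l) : Prop := ∀ h, Fx k h → ¬ null Y a k (h * B)

theorem null.mul {Y : Set (Rg l)} {a : Rg l} {k : ℕ} {B h : Rg l} (hn : null Y a k B)
    (hh : Fx k h) : null Y a k (h * B) := fun u hu => hn (u * h) (hu.mul hh)

theorem live.mul {Y : Set (Rg l)} {a : Rg l} {k : ℕ} {B h : Rg l} (hn : live Y a k B)
    (hh : Fx k h) : live Y a k (h * B) := fun g hg => hn (g * h) (hg.mul hh)

theorem live.not_null {Y : Set (Rg l)} {a : Rg l} {k : ℕ} {B : Rg l} (hn : live Y a k B) :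
    ¬ null Y a k B := hn 1 (Fx_one k)

theorem exists_dec (Y : Set (Rg l)) (a : Rg l) (k : ℕ) (B : Rg l) :
    ∃ h, Fx k h ∧ (null Y a k (h * B) ∨ live Y a k (h * B)) := by
  by_cases hc : live Y a k B
  · exact ⟨1, Fx_one k, Or.inr hc⟩
  · unfold live at hc
    push Not at hc
    obtain ⟨h, hh, hn⟩ := hc
    exact ⟨h, hh, Or.inl hn⟩

theorem Eqv_decomp {n : ℕ} {f g : Rg l} (h : Eqv n f g) :
    ∃ u, Fx (pp n f) u ∧ g = tr n f * u :=
  T_decomp (tr_mem n f) (fun x hx => by rw [tr_le hx, h x hx])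

theorem Eqv_of_tr {n : ℕ} {f u : Rg l} (hu : Fx (pp n f) u) : Eqv n f (tr n f * u) := by
  intro x hx
  rw [T_agree hu x hx, tr_le hx]

theorem pp_T_mul {k : ℕ} {a : Rg l} (ha : a ∈ T k) (C : Rg l) : pp (a k) (a * C) = pp k C := by
  rw [pp_mul, T.pp ha]

theorem transfer_live {Y : Set (Rg l)} {k : ℕ} {a C B : Rg l} (ha : a ∈ T k)
    (h : live Y (tr (a k) (a * C)) (pp (a k) (a * C)) B) : live Y a k (C * B) := by
  have hc := tr_mem k C
  have hck : tr k C (pp k C) = k := by rw [tr_le le_rfl, apply_pp]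
  have htr : tr (a k) (a * C) = a * tr k C := by
    have h1 := tr_mem (a k) (a * C)
    rw [pp_T_mul ha] at h1
    refine T_eq h1 (T_mul (by rw [hck]; exact ha) hc) ?_
    intro x hx
    rw [tr_le (by rw [pp_T_mul ha]; exact hx), mul_apply, mul_apply, tr_le hx]
  rw [pp_T_mul ha, htr] at h
  intro g hg hnull
  obtain ⟨g', hg', hgg⟩ := T_decomp (g := g * C) hc (fun x hx => by
    rw [mul_apply, hg _ (le_of_le_pp hx), tr_le hx])
  apply h g' hg'
  intro u hu
  obtain ⟨u', hu', huu⟩ := T_comm hc hu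
  rw [hck] at hu'
  have h3 := hnull u' hu'
  have h4 : a * u' * (g * (C * B)) = a * tr k C * u * (g' * B) := by
    calc a * u' * (g * (C * B)) = a * u' * (g * C) * B := rfl
      _ = a * (u' * tr k C) * g' * B := by rw [hgg]; rfl
      _ = _ := by rw [← huu]; rfl
  rwa [h4] at h3

theorem transfer_null {Y : Set (Rg l)} {k : ℕ} {a C B : Rg l} (ha : a ∈ T k)
    (h : null Y (tr (a k) (a * C)) (pp (a k) (a * C)) B) : null Y a k (C * B) := by
  intro u hu
  obtain ⟨u', hu', he⟩ := Eqv_decomp ((Eqv_T ha hu).mul C)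
  have := h u' hu'
  rw [← he] at this
  exact this

theorem lemP (hl : 0 < l) (Y : Set (Rg l)) (k0 : ℕ) (a0 : Rg l) (ha0 : a0 ∈ T k0) (B0 : Rg l) :
    ∃ h, Fx k0 h ∧ (null Y a0 k0 (h * B0) ∨ ∃ H, Fx k0 H ∧ ∀ u, Fx k0 u → ∀ n, a0 k0 ≤ n →
      live Y (tr n (a0 * u * H)) (pp n (a0 * u * H)) (h * B0)) := by
  obtain ⟨h1, hh1, hdec⟩ := dec_all (fun k a B => null Y a k B ∨ live Y a k B) k0
    (fun k _ a _ E => exists_dec Y a k E)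
    (fun k _ a _ E h hD hh => hD.imp (fun x => x.mul hh) (fun x => x.mul hh)) B0
  refine ⟨h1, hh1, ?_⟩
  set B := h1 * B0 with hB
  by_cases hnull : null Y a0 k0 B
  · exact Or.inl hnull
  have hlive0 : live Y a0 k0 B := (hdec k0 le_rfl a0 ha0).resolve_left hnull
  right
  let Lv : ℕ → Rg l → Prop := fun n f => live Y (tr n f) (pp n f) B
  have hLv : ∀ n f g, Eqv n f g → (Lv n f ↔ Lv n g) := by
    intro n f g h
    simp only [Lv]
    rw [h.tr, h.pp]
  obtain ⟨H, hH, hQ⟩ := dec_all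
    (fun k a C => Lv (a k) (a * C) → ∀ u, Fx k u → Lv (a k + 1) (a * u * C)) k0
    (by
      intro k hk a ha C
      by_cases hL : Lv (a k) (a * C)
      · obtain ⟨h, hh, hcol⟩ := pigeonhole hl k {u | Lv (a k + 1) (a * u * C)} (by
          intro u u' huu
          apply hLv
          apply Eqv.mul
          intro x hx
          rw [mul_apply, mul_apply, huu x]
          rw [pp_mul] at hx
          have h5 : pp (a k + 1) a = k + 1 := by
            have h6 := T.pp (T.add ha 1)
            rwa [ha.2 1] at h6
          rwa [h5] at hx)
        refine ⟨h, hh, ?_⟩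
        rcases hcol with hcol | hcol
        · intro _ u hu
          exact hcol u hu
        · exfalso
          have hlive : live Y a k (C * B) := transfer_live ha hL
          apply hlive h hh
          intro u hu
          have h6 : ¬ Lv (a k + 1) (a * (u * h) * C) := hcol u hu
          have h7 : k0 ≤ pp (a k + 1) (a * (u * h) * C) := by
            have e1 : pp (a k) (a * (u * h) * C) = pp k C := by
              have := ((Eqv_T ha (hu.mul hh)).mul C).pp
              rw [this, pp_T_mul ha]
            have e2 := pp_strictMono (a * (u * h) * C) (Nat.lt_succ_self (a k))
            have e3 := le_pp k C
            simp only [Nat.succ_eq_add_one] at e2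
            omega
          have h8 := (hdec _ h7 _ (tr_mem _ _)).resolve_right h6
          obtain ⟨v, hv, hvv⟩ := tr_decomp (a k + 1) (a * (u * h) * C)
          have h9 := h8 v hv
          rw [← hvv] at h9
          exact h9
      · refine ⟨1, Fx_one k, fun h => absurd h hL⟩)
    (by
      intro k hk a ha C h hD hh hL u hu
      have h3 : Lv (a k) (a * C) :=
        (hLv _ _ _ ((Eqv_T ha hh).mul C)).2 hL
      exact hD h3 (u * h) (hu.mul hh)) 1
  refine ⟨H, hH, ?_⟩
  intro u hu n hn
  induction n, hn using Nat.le_induction with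
  | base =>
    have h3 : Eqv (a0 k0) a0 (a0 * (u * H)) := Eqv_T ha0 (hu.mul hH)
    have h4 : Lv (a0 k0) a0 := by
      simp only [Lv]
      have : tr (a0 k0) a0 = a0 := by
        have h1 := tr_mem (a0 k0) a0
        rw [T.pp ha0] at h1
        exact T_eq h1 ha0 (fun x hx => tr_le (by rw [T.pp ha0]; exact hx))
      rw [this, T.pp ha0]
      exact hlive0
    exact (hLv _ _ _ h3).1 h4
  | succ n hn ih =>
    have hk : k0 ≤ pp n (a0 * u) := by
      have h3 := (Eqv_T ha0 hu).pp
      rw [T.pp ha0] at h3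
      rw [← h3]
      exact (pp_strictMono _).monotone hn
    have h4 := hQ _ hk _ (tr_mem n (a0 * u))
    have h5 : tr n (a0 * u) (pp n (a0 * u)) = n := by rw [tr_le le_rfl, apply_pp]
    rw [h5] at h4
    obtain ⟨v, hv, hvv⟩ := tr_decomp n (a0 * u)
    have h6 : Lv n (tr n (a0 * u) * (H * 1)) :=
      (hLv _ _ _ ((Eqv_tr n (a0 * u)).mul H)).1 ih
    have h7 := h4 h6 v hv
    rw [← hvv] at h7
    exact h7

theorem open_lemma (hl : 0 < l) (O : Set (Rg l)) (B0 : Rg l)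
    (hO : ∀ g, g * B0 ∈ O → ∃ n, ∀ g', Eqv n g g' → g' * B0 ∈ O)
    (k0 : ℕ) (a0 : Rg l) (ha0 : a0 ∈ T k0) :
    ∃ h, Fx k0 h ∧ ((∀ u, Fx k0 u → a0 * u * (h * B0) ∈ O) ∨
      (∀ u, Fx k0 u → a0 * u * (h * B0) ∉ O)) := by
  obtain ⟨h, hh, hn | ⟨H, hH, hlive⟩⟩ := lemP hl Oᶜ k0 a0 ha0 B0
  · exact ⟨h, hh, Or.inl fun u hu => not_not.1 (hn u hu)⟩
  · refine ⟨H * h, hH.mul hh, Or.inr fun u hu hmem => ?_⟩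
    obtain ⟨n, hn⟩ := hO (a0 * u * (H * h)) hmem
    apply (hlive u hu (max n (a0 k0)) (le_max_right _ _)).not_null
    intro v hv
    rw [Set.notMem_compl_iff]
    have h1 := (Eqv_of_tr hv).mul h
    exact hn _ (h1.mono (le_max_left _ _))

/-- completely Ramsey sets -/
def CR (X : Set (Rg l)) : Prop := ∀ k, ∀ a ∈ T k, ∀ E, ∃ h, Fx k h ∧
  ((∀ u, Fx k u → a * u * (h * E) ∈ X) ∨ (∀ u, Fx k u → a * u * (h * E) ∉ X))

theorem CR.compl {X : Set (Rg l)} (h : CR X) : CR Xᶜ := by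
  intro k a ha E
  obtain ⟨g, hg, h1 | h1⟩ := h k a ha E
  · exact ⟨g, hg, Or.inr fun u hu => by simpa using h1 u hu⟩
  · exact ⟨g, hg, Or.inl h1⟩

theorem CR_open (hl : 0 < l) (O : Set (Rg l))
    (hO : ∀ B0 g, g * B0 ∈ O → ∃ n, ∀ g', Eqv n g g' → g' * B0 ∈ O) : CR O :=
  fun k a ha E => open_lemma hl O E (hO E) k a ha

def hom (X : Set (Rg l)) (a : Rg l) (k : ℕ) (B : Rg l) : Prop :=
  (∀ u, Fx k u → a * u * B ∈ X) ∨ (∀ u, Fx k u → a * u * B ∉ X)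

theorem hom.mul {Y : Set (Rg l)} {a : Rg l} {k : ℕ} {B h : Rg l} (hn : hom Y a k B)
    (hh : Fx k h) : hom Y a k (h * B) :=
  hn.imp (fun H u hu => H (u * h) (hu.mul hh)) (fun H u hu => H (u * h) (hu.mul hh))

theorem finite_step (D : ℕ → Rg l → Prop) (k N : ℕ)
    (h1 : ∀ j E, ∃ h, Fx k h ∧ D j (h * E))
    (h2 : ∀ j E h, D j E → Fx k h → D j (h * E)) (E : Rg l) :
    ∃ h, Fx k h ∧ ∀ j, j < N → D j (h * E) := by
  induction N with
  | zero => exact ⟨1, Fx_one k, fun j hj => absurd hj (Nat.not_lt_zero j)⟩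
  | succ N ih =>
    obtain ⟨h, hh, hD⟩ := ih
    obtain ⟨h', hh', hD'⟩ := h1 N (h * E)
    refine ⟨h' * h, hh'.mul hh, fun j hj => ?_⟩
    rcases Nat.lt_succ_iff_lt_or_eq.1 hj with hj | rfl
    · exact h2 j (h * E) h' (hD j hj) hh'
    · exact hD'

theorem dec_all_nat (D : ℕ → ℕ → Rg l → Rg l → Prop) (k0 : ℕ)
    (h1 : ∀ j k, k0 ≤ k → ∀ a ∈ T k, ∀ E, ∃ h, Fx k h ∧ D j k a (h * E))
    (h2 : ∀ j k, k0 ≤ k → ∀ a ∈ T k, ∀ E h, D j k a E → Fx k h → D j k a (h * E)) (E : Rg l) :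
    ∃ h, Fx k0 h ∧ ∀ k, k0 ≤ k → ∀ a ∈ T k, ∀ j, j < k + 1 → D j k a (h * E) :=
  dec_all (fun k a B => ∀ j, j < k + 1 → D j k a B) k0
    (fun k hk a ha E => finite_step (fun j B => D j k a B) k (k + 1)
      (fun j E => h1 j k hk a ha E) (fun j E h => h2 j k hk a ha E h) E)
    (fun k hk a ha E h hD hh j hj => h2 j k hk a ha E h (hD j hj) hh) E

theorem CR_iUnion (hl : 0 < l) (Y : ℕ → Set (Rg l)) (hY : ∀ j, CR (Y j)) : CR (⋃ j, Y j) := by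
  intro k0 a0 ha0 E
  obtain ⟨h, hh, hD⟩ := dec_all_nat (fun j k a B => hom (Y j) a k B) k0
    (fun j k _ a ha E => hY j k a ha E) (fun j k _ a _ E h hD hh => hD.mul hh) E
  obtain ⟨H, hH, hr⟩ := open_lemma hl (⋃ j, Y j) (h * E) (by
    intro g hg
    rw [Set.mem_iUnion] at hg
    obtain ⟨j, hj⟩ := hg
    refine ⟨max j k0, fun g' hg' => ?_⟩
    rw [Set.mem_iUnion]
    refine ⟨j, ?_⟩
    have h1 := le_pp (max j k0) g
    have h2 := le_max_left j k0
    have h3 := le_max_right j k0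
    obtain ⟨u, hu, hgu⟩ := tr_decomp (max j k0) g
    obtain ⟨u', hu', hgu'⟩ := Eqv_decomp hg'
    rcases hD _ (by omega) _ (tr_mem (max j k0) g) j (by omega) with h5 | h5
    · rw [hgu']
      exact h5 u' hu'
    · exfalso
      apply h5 u hu
      rw [← hgu]
      exact hj) k0 a0 ha0
  exact ⟨H * h, hH.mul hh, hr⟩

theorem CR_union (hl : 0 < l) {A B : Set (Rg l)} (hA : CR A) (hB : CR B) : CR (A ∪ B) := by
  have : A ∪ B = ⋃ j : ℕ, (if j = 0 then A else B) := by
    ext x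
    simp only [Set.mem_union, Set.mem_iUnion]
    constructor
    · rintro (h | h)
      · exact ⟨0, by simpa using h⟩
      · exact ⟨1, by simpa using h⟩
    · rintro ⟨j, hj⟩
      split_ifs at hj
      · exact Or.inl hj
      · exact Or.inr hj
  rw [this]
  apply CR_iUnion hl
  intro j
  split_ifs
  · exact hA
  · exact hB

end Rg

namespace Rg
variable {l : ℕ}

def sous (A : List ℕ → Set (Rg l)) (s : List ℕ) : Set (Rg l) :=
  {z | ∃ x : ℕ → ℕ, (List.range s.length).map x = s ∧ ∀ n, z ∈ A ((List.range n).map x)}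

theorem sous_sub {A : List ℕ → Set (Rg l)} {s : List ℕ} {z : Rg l} (h : z ∈ sous A s) : z ∈ A s := by
  obtain ⟨x, hx, hz⟩ := h
  have := hz s.length
  rwa [hx] at this

theorem sous_ext {A : List ℕ → Set (Rg l)} {s : List ℕ} {z : Rg l} (h : z ∈ sous A s) :
    ∃ j, z ∈ sous A (s ++ [j]) := by
  obtain ⟨x, hx, hz⟩ := h
  refine ⟨x s.length, x, ?_, hz⟩
  rw [List.length_append, List.length_singleton, List.range_succ, List.map_append, hx]
  rfl

theorem sous_nil (A : List ℕ → Set (Rg l)) : sous A [] = souslinOp A := by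
  ext z
  simp [sous, souslinOp]

def Phi (Y : Set (Rg l)) (B : Rg l) (K : ℕ) (f : Rg l) : Prop :=
  ∀ n, K ≤ pp n f → live Y (tr n f) (pp n f) B

theorem CR_Phi (hl : 0 < l) (Y : Set (Rg l)) (B : Rg l) (K : ℕ) : CR {f | ¬ Phi Y B K f} := by
  apply CR_open hl
  intro B0 g hg
  have hg' : ¬ Phi Y B K (g * B0) := hg
  unfold Phi at hg'
  push Not at hg'
  obtain ⟨n, hn, hL⟩ := hg'
  refine ⟨n, fun g' he hP => ?_⟩
  have h1 := he.mul B0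
  have := hP n (by rw [h1.pp]; exact hn)
  rw [h1.tr, h1.pp] at this
  exact hL this

theorem mem_Phi {Y : Set (Rg l)} {B : Rg l} {K : ℕ}
    (hd : ∀ k, K ≤ k → ∀ a ∈ T k, null Y a k B ∨ live Y a k B) {g : Rg l} (hg : g * B ∈ Y) :
    Phi Y B K g := by
  intro n hn
  refine (hd _ hn _ (tr_mem n g)).resolve_left fun h => ?_
  obtain ⟨u, hu, he⟩ := tr_decomp n g
  apply h u hu
  rw [← he]
  exact hg

theorem null_of_CR {N Y : Set (Rg l)} {B : Rg l} {K : ℕ} (hN : CR N)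
    (h1 : ∀ g ∈ N, Phi Y B K g) (h2 : ∀ g ∈ N, g * B ∉ Y) (k : ℕ) (a : Rg l) (ha : a ∈ T k)
    (C : Rg l) : ∃ h, Fx k h ∧ ∀ u, Fx k u → a * u * (h * C) ∉ N := by
  obtain ⟨h, hh, hi | hi⟩ := hN k a ha C
  · exfalso
    have ha' := T.add ha K
    have h3 : a * (h * C) ∈ N := hi 1 (Fx_one k)
    have h4 := h1 _ h3 (a (k + K)) (by
      rw [pp_T_mul ha']
      have := le_pp (k + K) (h * C)
      omega)
    have h5 := (transfer_live ha' h4).not_null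
    unfold null at h5
    push Not at h5
    obtain ⟨u, hu, hY⟩ := h5
    exact h2 _ (hi u (hu.mono (by omega))) hY
  · exact ⟨h, hh, hi⟩

theorem CR_souslin (hl : 0 < l) (A : List ℕ → Set (Rg l)) (hA : ∀ s, CR (A s)) :
    CR (souslinOp A) := by
  intro k0 a0 ha0 E
  obtain ⟨h1, hh1, hdec⟩ := dec_all_nat
    (fun j k a B => ∀ s : List ℕ, Encodable.encode s = j →
      (null (sous A s) a k B ∨ live (sous A s) a k B) ∧ hom (A s) a k B) k0
    (by
      intro j k hk a ha E
      by_cases hs : ∃ s : List ℕ, Encodable.encode s = j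
      · obtain ⟨s, rfl⟩ := hs
        obtain ⟨h, hh, h3⟩ := exists_dec (sous A s) a k E
        obtain ⟨h', hh', h4⟩ := hA s k a ha (h * E)
        refine ⟨h' * h, hh'.mul hh, fun s' hs' => ?_⟩
        obtain rfl := Encodable.encode_injective hs'
        exact ⟨h3.imp (fun x => x.mul hh') (fun x => x.mul hh'), h4⟩
      · exact ⟨1, Fx_one k, fun s h => absurd ⟨s, h⟩ hs⟩)
    (by
      intro j k hk a ha E h hD hh s hs
      obtain ⟨h3, h4⟩ := hD s hs
      exact ⟨h3.imp (fun x => x.mul hh) (fun x => x.mul hh), h4.mul hh⟩) E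
  set B1 := h1 * E with hB1
  let K : List ℕ → ℕ := fun s => max k0 (Encodable.encode s)
  have hK0 : ∀ s, k0 ≤ K s := fun s => le_max_left _ _
  have hKe : ∀ s, Encodable.encode s ≤ K s := fun s => le_max_right _ _
  have hd : ∀ s k, K s ≤ k → ∀ a ∈ T k,
      (null (sous A s) a k B1 ∨ live (sous A s) a k B1) ∧ hom (A s) a k B1 := by
    intro s k hk a ha
    exact hdec k ((hK0 s).trans hk) a ha (Encodable.encode s)
      (Nat.lt_succ_of_le ((hKe s).trans hk)) s rfl
  let Ph : List ℕ → Rg l → Prop := fun s f => Phi (sous A s) B1 (K s) f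
  let N : List ℕ → Set (Rg l) := fun s => {f | Ph s f ∧ ∀ j, ¬ Ph (s ++ [j]) f}
  have hNCR : ∀ s, CR (N s) := by
    intro s
    have hU : CR ({f | ¬ Ph s f} ∪ ⋃ j : ℕ, {f | ¬ Ph (s ++ [j]) f}ᶜ) :=
      CR_union hl (CR_Phi hl _ _ _) (CR_iUnion hl _ fun j => (CR_Phi hl _ _ _).compl)
    have : N s = ({f | ¬ Ph s f} ∪ ⋃ j : ℕ, {f | ¬ Ph (s ++ [j]) f}ᶜ)ᶜ := by
      ext f
      simp [N]
    rw [this]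
    exact hU.compl
  have hNnull : ∀ s k, ∀ a ∈ T k, ∀ C, ∃ h, Fx k h ∧ ∀ u, Fx k u → a * u * (h * C) ∉ N s := by
    intro s k a ha C
    refine null_of_CR (Y := sous A s) (B := B1) (K := K s) (hNCR s) (fun g hg => hg.1) ?_ k a ha C
    intro g hg hY
    obtain ⟨j, hj⟩ := sous_ext hY
    exact hg.2 j (mem_Phi (fun k hk a ha => (hd _ k hk a ha).1) hj)
  obtain ⟨H2, hH2, hav⟩ := dec_all_nat
    (fun j k a C => ∀ s : List ℕ, Encodable.encode s = j → ∀ u, Fx k u → a * u * C ∉ N s) k0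
    (by
      intro j k hk a ha C
      by_cases hs : ∃ s : List ℕ, Encodable.encode s = j
      · obtain ⟨s, rfl⟩ := hs
        obtain ⟨h, hh, h3⟩ := hNnull s k a ha C
        refine ⟨h, hh, fun s' hs' => ?_⟩
        obtain rfl := Encodable.encode_injective hs'
        exact h3
      · exact ⟨1, Fx_one k, fun s h => absurd ⟨s, h⟩ hs⟩)
    (by
      intro j k hk a ha E h hD hh s hs u hu
      exact hD s hs (u * h) (hu.mul hh)) 1
  have hav' : ∀ s w, w * H2 ∉ N s := by
    intro s w
    obtain ⟨v, hv, he⟩ := tr_decomp (K s) w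
    have h3 := le_pp (K s) w
    have := hav _ ((hK0 s).trans h3) _ (tr_mem (K s) w) (Encodable.encode s)
      (Nat.lt_succ_of_le ((hKe s).trans h3)) s rfl v hv
    rw [← he] at this
    exact this
  obtain ⟨h', hh', hn | ⟨H, hH, hlive⟩⟩ := lemP hl (sous A []) k0 a0 ha0 (H2 * B1)
  · refine ⟨h' * H2 * h1, (hh'.mul hH2).mul hh1, Or.inr fun u hu hm => hn u hu ?_⟩
    rw [sous_nil]
    exact hm
  · refine ⟨H * h' * H2 * h1, ((hH.mul hh').mul hH2).mul hh1, Or.inl fun u hu => ?_⟩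
    set f := a0 * u * H with hf
    have hP0 : Ph [] (f * (h' * H2)) := by
      intro n hn
      have hge : a0 k0 ≤ n := by
        by_contra hlt
        have e1 := (Eqv_T ha0 (((hu.mul hH).mul (hh'.mul hH2)))).pp
        rw [T.pp ha0] at e1
        have e2 := pp_strictMono (f * (h' * H2)) (not_le.1 hlt)
        have e3 : pp (a0 k0) (f * (h' * H2)) = k0 := e1
        have e4 := hK0 []
        simp only at e2
        omega
      refine (hd [] _ hn _ (tr_mem _ _)).1.resolve_left fun hnull => ?_
      apply (hlive u hu n hge).not_null
      have e1 : tr n f (pp n f) = n := by rw [tr_le le_rfl, apply_pp]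
      have e2 := (Eqv_tr n f).mul (h' * H2)
      refine transfer_null (C := h' * H2) (B := B1) (tr_mem n f) ?_
      rw [e1, e2.tr, e2.pp]
      exact hnull
    have hstep : ∀ s, Ph s (f * (h' * H2)) → ∃ j, Ph (s ++ [j]) (f * (h' * H2)) := by
      intro s hs
      by_contra hc
      push Not at hc
      exact hav' s (f * h') ⟨hs, hc⟩
    choose! J hJ using hstep
    let S : ℕ → List ℕ := fun n => Nat.rec [] (fun _ s => s ++ [J s]) n
    have hS : ∀ n, S (n + 1) = S n ++ [J (S n)] := fun n => rfl
    have hSP : ∀ n, Ph (S n) (f * (h' * H2)) := by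
      intro n
      induction n with
      | zero => exact hP0
      | succ n ih => rw [hS]; exact hJ _ ih
    have hSx : ∀ n, (List.range n).map (fun n => J (S n)) = S n := by
      intro n
      induction n with
      | zero => rfl
      | succ n ih => rw [List.range_succ, List.map_append, ih, hS]; rfl
    have hmem : f * (h' * H2) * B1 ∈ souslinOp A := by
      simp only [souslinOp, Set.mem_iUnion, Set.mem_iInter]
      refine ⟨fun n => J (S n), fun n => ?_⟩
      rw [hSx]
      have h3 := le_pp (K (S n)) (f * (h' * H2))
      have h4 := hSP n _ h3
      rcases (hd (S n) _ h3 _ (tr_mem _ _)).2 with h5 | h5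
      · obtain ⟨v, hv, he⟩ := tr_decomp (K (S n)) (f * (h' * H2))
        have := h5 v hv
        rw [← he] at this
        exact this
      · exact absurd (fun v hv hm => h5 v hv (sous_sub hm)) h4.not_null
    exact hmem

end Rg

namespace Rg
variable {l : ℕ}

def code (a : ℕ × Fin l) : ℕ := a.1 * l + a.2

theorem code_decode (hl : 0 < l) (n : ℕ) : code (decodeL l hl n) = n := by
  simp only [code, decodeL]
  exact Nat.div_add_mod' n l

theorem decode_code (hl : 0 < l) (a : ℕ × Fin l) : decodeL l hl (code a) = a := by
  obtain ⟨n, i, hi⟩ := a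
  simp only [code, decodeL, Prod.mk.injEq, Fin.mk.injEq]
  constructor
  · rw [add_comm, Nat.add_mul_div_right _ _ hl, Nat.div_eq_of_lt hi, zero_add]
  · rw [add_comm, Nat.add_mul_mod_self_right, Nat.mod_eq_of_lt hi]

theorem decode_surj (hl : 0 < l) (a : ℕ × Fin l) : ∃ x, a = decodeL l hl x :=
  ⟨code a, (decode_code hl a).symm⟩

theorem div_le_of_mod_eq (hl : 0 < l) {x y : ℕ} (h : x % l = y % l) : x / l ≤ y / l ↔ x ≤ y := by
  have h1 := Nat.div_add_mod' x l
  have h2 := Nat.div_add_mod' y l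
  constructor
  · intro h3
    have := Nat.mul_le_mul_right l h3
    omega
  · exact fun h3 => Nat.div_le_div_right h3

theorem ord_decode (hl : 0 < l) (x y : ℕ) : ordLE (decodeL l hl x) (decodeL l hl y) ↔
    x % l < y % l ∨ (x % l = y % l ∧ x ≤ y) := by
  simp only [ordLE, decodeL, Fin.mk_lt_mk, Fin.mk.injEq]
  constructor
  · rintro (h | ⟨h, h'⟩)
    · exact Or.inl h
    · exact Or.inr ⟨h, (div_le_of_mod_eq hl h).1 h'⟩
  · rintro (h | ⟨h, h'⟩)
    · exact Or.inl h
    · exact Or.inr ⟨h, (div_le_of_mod_eq hl h).2 h'⟩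

theorem lex_decode (hl : 0 < l) (x y : ℕ) : lexLE (decodeL l hl x) (decodeL l hl y) ↔ x ≤ y := by
  simp only [lexLE, decodeL, Fin.mk_le_mk]
  have h1 := Nat.div_add_mod' x l
  have h2 := Nat.div_add_mod' y l
  have h3 := Nat.mod_lt x hl
  have h4 := Nat.mod_lt y hl
  constructor
  · rintro (h | ⟨h, h'⟩)
    · have := Nat.mul_le_mul_right l (Nat.succ_le_of_lt h)
      rw [Nat.succ_mul] at this
      omega
    · rw [h] at h1
      omega
  · intro h
    rcases (Nat.div_le_div_right (c := l) h).lt_or_eq with h5 | h5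
    · exact Or.inl h5
    · refine Or.inr ⟨h5, ?_⟩
      rw [h5] at h1
      omega

/-- The equivalence relation of a rigid surjection. -/
def toS (f : Rg l) : Setoid (ℕ × Fin l) where
  r a b := f (code a) = f (code b)
  iseqv := ⟨fun _ => rfl, fun h => h.symm, fun h h' => h.trans h'⟩

theorem toS_r (f : Rg l) (a b : ℕ × Fin l) : (toS f).r a b ↔ f (code a) = f (code b) := Iff.rfl

theorem lexMin_iff (hl : 0 < l) (f : Rg l) (x : ℕ) :
    decodeL l hl x ∈ lexMinRepsL (toS f) ↔ x = pp (f x) f := by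
  constructor
  · intro h
    have h1 := h (decodeL l hl (pp (f x) f)) (by
      rw [toS_r, code_decode, code_decode, apply_pp])
    rw [lex_decode] at h1
    exact le_antisymm h1 (pp_le rfl)
  · intro h b hb
    obtain ⟨y, rfl⟩ := decode_surj hl b
    rw [toS_r, code_decode, code_decode] at hb
    rw [lex_decode, h]
    exact pp_le hb.symm

theorem ordMin_iff (hl : 0 < l) (f : Rg l) (x : ℕ) :
    decodeL l hl x ∈ minRepsL (toS f) ↔ x = pp (f x) f := by
  constructor
  · intro h
    have h1 := h (decodeL l hl (pp (f x) f)) (by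
      rw [toS_r, code_decode, code_decode, apply_pp])
    rw [ord_decode, pp_mod] at h1
    have h2 := f.res x
    have h3 : pp (f x) f ≤ x := pp_le rfl
    omega
  · intro h b hb
    obtain ⟨y, rfl⟩ := decode_surj hl b
    rw [toS_r, code_decode, code_decode] at hb
    rw [ord_decode]
    have h1 := pp_mod (f x) f
    rw [← h] at h1
    have h2 := f.res y
    rw [← hb] at h2
    have h3 : pp (f x) f ≤ y := pp_le hb.symm
    omega

theorem nth_toS (hl : 0 < l) (f : Rg l) (k : ℕ) :
    Nat.nth (fun n => decodeL l hl n ∈ minRepsL (toS f)) k = pp k f := by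
  have hset : {n | decodeL l hl n ∈ minRepsL (toS f)} = Set.range (fun k => pp k f) := by
    ext x
    rw [Set.mem_ofPred_eq, ordMin_iff]
    constructor
    · intro h
      exact ⟨f x, h.symm⟩
    · rintro ⟨k, rfl⟩
      simp only [apply_pp]
  have hinf : {n | decodeL l hl n ∈ minRepsL (toS f)}.Infinite := by
    rw [hset]
    exact Set.infinite_range_of_injective (pp_strictMono f).injective
  have := ((Nat.nth_strictMono hinf).range_inj (pp_strictMono f)).1
    (by rw [Nat.range_nth_of_infinite hinf, hset])
  exact congrFun this k

theorem toS_mem (hl : 0 < l) (f : Rg l) : toS f ∈ EInfL l hl := by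
  refine ⟨?_, ?_, ?_⟩
  · refine Set.infinite_of_injective_forall_mem
      (f := fun v => {y | (toS f).r (decodeL l hl (pp v f)) y}) ?_ (fun v => ⟨_, rfl⟩)
    intro v w h
    have h1 : decodeL l hl (pp w f) ∈ {y | (toS f).r (decodeL l hl (pp w f)) y} := rfl
    have h' : {y | (toS f).r (decodeL l hl (pp v f)) y} =
      {y | (toS f).r (decodeL l hl (pp w f)) y} := h
    rw [← h'] at h1
    have h2 : f (code (decodeL l hl (pp v f))) = f (code (decodeL l hl (pp w f))) := h1
    rwa [code_decode, code_decode, apply_pp, apply_pp] at h2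
  · intro k
    rw [pRepL, nth_toS]
    simp only [decodeL, pp_mod]
  · ext a
    obtain ⟨x, rfl⟩ := decode_surj hl a
    rw [lexMin_iff, ordMin_iff]

def phi (hl : 0 < l) (f : Rg l) : ↥(EInfL l hl) := ⟨toS f, toS_mem hl f⟩

theorem exists_toS (hl : 0 < l) (E : Setoid (ℕ × Fin l)) (hE : E ∈ EInfL l hl) :
    ∃ f : Rg l, toS f = E := by
  classical
  obtain ⟨hinf, hres, hlex⟩ := hE
  let r : ℕ → ℕ → Prop := fun x y => E.r (decodeL l hl x) (decodeL l hl y)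
  have hrefl : ∀ x, r x x := fun x => E.refl' _
  have hsymm : ∀ {x y}, r x y → r y x := fun h => E.symm' h
  have htrans : ∀ {x y z}, r x y → r y z → r x z := fun h h' => E.trans' h h'
  let P : ℕ → Prop := fun n => decodeL l hl n ∈ minRepsL E
  have hP : ∀ x, P x ↔ ∀ z, r x z → x ≤ z := by
    intro x
    show decodeL l hl x ∈ minRepsL E ↔ _
    rw [← hlex]
    constructor
    · intro h z hz
      exact (lex_decode hl _ _).1 (h _ hz)
    · intro h b hb
      obtain ⟨z, rfl⟩ := decode_surj hl b
      exact (lex_decode hl _ _).2 (h z hb)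
  have hex : ∀ x, ∃ y, r y x := fun x => ⟨x, hrefl x⟩
  let μ : ℕ → ℕ := fun x => Nat.find (hex x)
  have hμ : ∀ x, r (μ x) x := fun x => Nat.find_spec (hex x)
  have hμle : ∀ {x y}, r y x → μ x ≤ y := fun h => Nat.find_min' (hex _) h
  have hμP : ∀ x, P (μ x) := fun x => (hP _).2 fun z hz => hμle (htrans (hsymm hz) (hμ x))
  have hμeq : ∀ {x y}, r x y → μ x = μ y := fun {x y} h =>
    le_antisymm (hμle (htrans (hμ y) (hsymm h))) (hμle (htrans (hμ x) h))
  have hμP' : ∀ {x}, P x → μ x = x := fun {x} h =>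
    le_antisymm (hμle (hrefl x)) ((hP x).1 h _ (hsymm (hμ x)))
  have hPinf : {n | P n}.Infinite := by
    intro hfin
    apply hinf
    apply (hfin.image (fun x => {y | E.r (decodeL l hl x) y})).subset
    rintro C ⟨a, rfl⟩
    obtain ⟨x, rfl⟩ := decode_surj hl a
    refine ⟨μ x, hμP x, ?_⟩
    ext y
    exact ⟨fun h => E.trans' (hsymm (hμ x)) h, fun h => E.trans' (hμ x) h⟩
  have hnr : ∀ k, Nat.nth P k % l = k % l := by
    intro k
    have := hres k
    simp only [pRepL, decodeL, Fin.mk.injEq] at this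
    exact this
  have hnth : ∀ x, Nat.nth P (Nat.count P (μ x)) = μ x := fun x => Nat.nth_count (hμP x)
  have hcn : ∀ k, Nat.count P (μ (Nat.nth P k)) = k := by
    intro k
    rw [hμP' (Nat.nth_mem_of_infinite hPinf k), Nat.count_nth_of_infinite hPinf]
  have hμmod : ∀ x, Nat.count P (μ x) % l = μ x % l := by
    intro x
    rw [← hnr, hnth]
  refine ⟨⟨fun x => Nat.count P (μ x), fun n => ⟨_, hcn n⟩, ?_, ?_, ?_⟩, ?_⟩
  · intro x j hj
    refine ⟨Nat.nth P j, ?_, hcn j⟩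
    exact (Nat.nth_lt_of_lt_count hj).trans_le (hμle (hrefl x))
  · intro x
    rw [hμmod]
    have := hμP x _ (hμ x)
    rw [ord_decode] at this
    omega
  · intro x hx
    rw [hμmod]
    have h1 : μ (μ x) = μ x := hμeq (hμ x)
    have h2 : μ x ≤ x := hμle (hrefl x)
    rcases h2.lt_or_eq with h3 | h3
    · exact absurd (by rw [h1]) (hx _ h3)
    · rw [h3]
  · apply Setoid.ext
    intro a b
    obtain ⟨x, rfl⟩ := decode_surj hl a
    obtain ⟨y, rfl⟩ := decode_surj hl b
    show Nat.count P (μ (code (decodeL l hl x))) = Nat.count P (μ (code (decodeL l hl y))) ↔ r x y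
    rw [code_decode, code_decode]
    constructor
    · intro h
      have h1 : μ x = μ y := by rw [← hnth x, h, hnth y]
      have h2 := hμ x
      rw [h1] at h2
      exact htrans (hsymm h2) (hμ y)
    · intro h
      rw [hμeq h]

theorem phi_surj (hl : 0 < l) (E : ↥(EInfL l hl)) : ∃ f : Rg l, phi hl f = E := by
  obtain ⟨f, hf⟩ := exists_toS hl E.1 E.2
  exact ⟨f, Subtype.ext hf⟩

theorem coarsens_mul (h e : Rg l) : Coarsens (toS (h * e)) (toS e) := by
  intro a b hab
  show h (e (code a)) = h (e (code b))
  rw [show e (code a) = e (code b) from hab]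

theorem exists_mul (hl : 0 < l) {f1 f : Rg l} (hc : Coarsens (toS f1) (toS f)) :
    ∃ u, f1 = u * f := by
  have hx : ∀ x y, f x = f y → f1 x = f1 y := by
    intro x y h
    have := hc (decodeL l hl x) (decodeL l hl y) (by
      rw [toS_r, code_decode, code_decode, h])
    rwa [toS_r, code_decode, code_decode] at this
  have hu : ∀ x, f1 (pp (f x) f) = f1 x := fun x => hx _ _ (apply_pp _ _)
  refine ⟨⟨fun v => f1 (pp v f), ?_, ?_, ?_, ?_⟩, ext' fun x => (hu x).symm⟩
  · intro n
    obtain ⟨x, hx⟩ := f1.surj n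
    exact ⟨f x, by rw [hu, hx]⟩
  · intro v j hj
    obtain ⟨y, hy, hy'⟩ := f1.rigid _ _ hj
    exact ⟨f y, lt_of_lt_pp hy, by rw [hu, hy']⟩
  · intro v
    have := f1.res (pp v f)
    rwa [pp_mod] at this
  · intro v hv
    have := f1.first (pp v f) (fun y hy => by
      have := hv (f y) (lt_of_lt_pp hy)
      rwa [hu] at this)
    rwa [pp_mod] at this

theorem CR_of_open (hl : 0 < l) (U : Set ↥(EInfL l hl)) (hU : (graphTop (EInfL l hl)).IsOpen U) :
    CR (phi hl ⁻¹' U) := by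
  apply CR_open hl
  intro B0 g hg
  obtain ⟨V, hV, rfl⟩ := hU
  have hg' : graphMap (toS (g * B0)) ∈ V := hg
  obtain ⟨I, w, hw, hsub⟩ := isOpen_pi_iff.1 hV _ hg'
  refine ⟨I.sup (fun q => code q.1 + code q.2), fun g' he => ?_⟩
  show graphMap (toS (g' * B0)) ∈ V
  apply hsub
  intro q hq
  have h0 : code q.1 + code q.2 ≤ I.sup (fun q => code q.1 + code q.2) :=
    Finset.le_sup (f := fun q : (ℕ × Fin l) × (ℕ × Fin l) => code q.1 + code q.2) hq
  have key : ∀ x, x ≤ I.sup (fun q => code q.1 + code q.2) → (g' * B0) x = (g * B0) x := by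
    intro x hx
    rw [mul_apply, mul_apply]
    exact he _ ((B0.le_self x).trans (hx.trans (le_pp _ _)))
  have : graphMap (toS (g' * B0)) q = graphMap (toS (g * B0)) q := by
    unfold graphMap
    congr 1
    show ((g' * B0) (code q.1) = (g' * B0) (code q.2)) = ((g * B0) (code q.1) = (g * B0) (code q.2))
    rw [key _ (by omega), key _ (by omega)]
  rw [this]
  exact (hw q hq).2

theorem CR_of_souslin (hl : 0 < l) (U : Set ↥(EInfL l hl))
    (hU : SouslinMeasurable (graphTop (EInfL l hl)) U) : CR (phi hl ⁻¹' U) := by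
  refine hU {X | CR (phi hl ⁻¹' X)} (CR_of_open hl) (fun A hA => CR.compl hA)
    (fun A hA B hB => CR_union hl hA hB) (fun A hA => ?_)
  have := CR_souslin hl (fun s => phi hl ⁻¹' (A s)) hA
  have he : phi hl ⁻¹' (souslinOp A) = souslinOp (fun s => phi hl ⁻¹' (A s)) := by
    simp only [souslinOp, Set.preimage_iUnion, Set.preimage_iInter]
  show CR (phi hl ⁻¹' (souslinOp A))
  rw [he]
  exact this

theorem final (hl : 0 < l) (m : ℕ) (c : ↥(EInfL l hl) → Fin m)
    (hc : ∀ i : Fin m, SouslinMeasurable (graphTop (EInfL l hl)) {E | c E = i})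
    (E : ↥(EInfL l hl)) :
    ∃ F : ↥(EInfL l hl), Coarsens F.1 E.1 ∧
      ∀ F₁ F₂ : ↥(EInfL l hl), Coarsens F₁.1 F.1 → Coarsens F₂.1 F.1 → c F₁ = c F₂ := by
  obtain ⟨e, rfl⟩ := phi_surj hl E
  obtain ⟨h, -, hh⟩ := finite_step
    (fun j B => ∀ i : Fin m, (i : ℕ) = j → hom (phi hl ⁻¹' {E | c E = i}) 1 0 B) 0 m
    (by
      intro j E
      by_cases hj : j < m
      · obtain ⟨h, hh, h1⟩ := CR_of_souslin hl _ (hc ⟨j, hj⟩) 0 1 (T_one 0) E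
        refine ⟨h, hh, fun i hi => ?_⟩
        obtain rfl : i = ⟨j, hj⟩ := Fin.ext hi
        exact h1
      · exact ⟨1, Fx_one 0, fun i hi => absurd (hi ▸ i.2) hj⟩)
    (fun j E h hD hh i hi => (hD i hi).mul hh) e
  refine ⟨phi hl (h * e), coarsens_mul h e, ?_⟩
  intro F₁ F₂ hF₁ hF₂
  obtain ⟨f₁, rfl⟩ := phi_surj hl F₁
  obtain ⟨f₂, rfl⟩ := phi_surj hl F₂
  obtain ⟨u₁, rfl⟩ := exists_mul hl hF₁
  obtain ⟨u₂, rfl⟩ := exists_mul hl hF₂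
  rcases hh _ (c (phi hl (u₁ * (h * e)))).2 _ rfl with h1 | h1
  · exact (h1 u₂ (Fx_zero _)).symm
  · exact absurd rfl (h1 u₁ (Fx_zero _))

end Rg

/-- **Corollary 3.7 (dual Silver theorem for `ω·l`):** for every finite Souslin
measurable colouring of `𝓔_∞(ω·l)` (with the topology inherited from
`2^((ω·l)×(ω·l))`) and every `E ∈ 𝓔_∞(ω·l)`, there is `F ∈ 𝓔_∞(ω·l)` with `F ≤ E`
such that the colouring is constant on `𝓔_∞(ω·l) ↾ F`. -/
theorem dualSilverOmegaL (l : ℕ) (hl : 0 < l)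
    (m : ℕ) (c : ↥(EInfL l hl) → Fin m)
    (hc : ∀ i : Fin m, SouslinMeasurable (graphTop (EInfL l hl)) {E | c E = i})
    (E : ↥(EInfL l hl)) :
    ∃ F : ↥(EInfL l hl), Coarsens F.1 E.1 ∧
      ∀ F₁ F₂ : ↥(EInfL l hl), Coarsens F₁.1 F.1 → Coarsens F₂.1 F.1 → c F₁ = c F₂ := by
  exact Rg.final hl m c hc E

end DualRamsey
end

section
/- Let l ≥ 1 and k < ω. For every finite Souslin measurable colouring c of 𝓔_k(ω·l) and every E ∈ 𝓔_∞(ω·l), there exists F ∈ 𝓔_∞(ω·l) with F ≤ E such that c is constant on 𝓔_k(ω·l) ↾ F = {F' ∈ 𝓔_k(ω·l) : F' ≤ F}. -/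
open Set

namespace DualRamsey

/-- `𝓔_k(ω·l)`: equivalence relations on `ω·l` with exactly `k` classes whose
`⪯`-increasing enumeration `(p_i)_{i<k}` of minimal representatives satisfies
`p_i ∈ ω × {i mod l}` for `i < k`, and whose `⪯`-minimal representatives coincide
with the (ordinal-)minimal representatives. -/
noncomputable def EkL (l : ℕ) (hl : 0 < l) (k : ℕ) : Set (Setoid (ℕ × Fin l)) :=
  {E | (classes E).Finite ∧ (classes E).ncard = k ∧
    (∀ i < k, (pRepL l hl E i).2 = ⟨i % l, Nat.mod_lt i hl⟩) ∧
    lexMinRepsL E = minRepsL E}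

section CS
attribute [local instance] Ultrafilter.mul Ultrafilter.semigroup

theorem exists_min_left_ideal {M : Type*} [Semigroup M] [Nonempty M] [TopologicalSpace M]
    [CompactSpace M] [T2Space M] (hcont : ∀ r : M, Continuous (· * r)) :
    ∃ N : Set M, IsClosed N ∧ N.Nonempty ∧ (∀ m, ∀ x ∈ N, m * x ∈ N) ∧
      ∀ e ∈ N, e * e = e → ∀ f ∈ N, f * e = f := by
  let S : Set (Set M) := { N | IsClosed N ∧ N.Nonempty ∧ ∀ m, ∀ x ∈ N, m * x ∈ N }
  rsuffices ⟨N, hN⟩ : ∃ N', Minimal (· ∈ S) N'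
  · obtain ⟨N_closed, hne, N_mul⟩ := hN.prop
    refine ⟨N, N_closed, hne, N_mul, fun e he hee f hf => ?_⟩
    have h1 : (· * e) '' N = N := by
      apply hN.eq_of_subset
      · refine ⟨(hcont e).isClosedMap _ N_closed, ⟨_, ⟨e, he, rfl⟩⟩, ?_⟩
        rintro m _ ⟨m', hm', rfl⟩
        exact ⟨m * m', N_mul _ _ hm', mul_assoc _ _ _⟩
      · rintro _ ⟨m', hm', rfl⟩
        exact N_mul _ _ he
    rw [← h1] at hf
    obtain ⟨g, hg, rfl⟩ := hf
    show g * e * e = g * e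
    rw [mul_assoc, hee]
  refine zorn_superset _ fun c hcs hc => ?_
  refine
    ⟨⋂₀ c, ⟨isClosed_sInter fun t ht => (hcs ht).1, ?_, fun m x hm => ?_⟩, fun s hs =>
      Set.sInter_subset_of_mem hs⟩
  · obtain rfl | hcnemp := c.eq_empty_or_nonempty
    · rw [Set.sInter_empty]
      apply Set.univ_nonempty
    convert!
      @IsCompact.nonempty_iInter_of_directed_nonempty_isCompact_isClosed _ _ _ hcnemp.coe_sort
        ((↑) : c → Set M) ?_ ?_ ?_ ?_
    · exact Set.sInter_eq_iInter
    · refine DirectedOn.directed_val (IsChain.directedOn hc.symm)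
    exacts [fun i => (hcs i.prop).2.1, fun i => (hcs i.prop).1.isCompact, fun i => (hcs i.prop).1]
  · rw [Set.mem_sInter]
    exact fun t ht => (hcs ht).2.2 m x (Set.mem_sInter.mp hm t ht)

/-- Substitution of a letter for the variable. -/
def subW {B : Type*} (a : B) : FreeMonoid (Option B) →* FreeMonoid B :=
  FreeMonoid.map (fun o => o.getD a)

theorem ultra_map_mul {M N : Type*} [Monoid M] [Monoid N] (f : M →* N) (U V : Ultrafilter M) :
    (U * V).map f = U.map f * V.map f := by
  apply Ultrafilter.coe_inj.mp
  apply Filter.ext'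
  intro p
  rw [Ultrafilter.eventually_mul]
  simp only [Ultrafilter.coe_map, Filter.eventually_map, Ultrafilter.eventually_mul, map_mul]

theorem cs_ultra (B : Type*) [Nonempty B] :
    ∃ U : Ultrafilter (FreeMonoid (Option B)),
      (∀ᶠ t in (U : Filter (FreeMonoid (Option B))), ∃ t', t = FreeMonoid.of none * t') ∧
      ∀ a b : B, U.map (subW a) * U.map (subW b) = U.map (subW a) := by
  obtain ⟨N, hNc, ⟨q, hq⟩, hNm, hNe⟩ := exists_min_left_ideal
    (M := Ultrafilter (FreeMonoid B)) Ultrafilter.continuous_mul_left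
  let A : Set (FreeMonoid (Option B)) := {t | ∃ t', t = FreeMonoid.of none * t'}
  let T : Set (Ultrafilter (FreeMonoid (Option B))) :=
    {U | A ∈ U} ∩ ⋂ a : B, (Ultrafilter.map (subW a)) ⁻¹' N
  have hmapc : ∀ a : B, Continuous (Ultrafilter.map (subW a)) := by
    intro a
    refine ultrafilterBasis_is_basis.continuous_iff.2 <| Set.forall_mem_range.mpr fun s ↦
      ultrafilter_isOpen_basic ((subW a) ⁻¹' s)
  have hTc : IsClosed T :=
    (ultrafilter_isClosed_basic A).inter (isClosed_iInter fun a => hNc.preimage (hmapc a))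
  have hTne : T.Nonempty := by
    let inc : FreeMonoid B →* FreeMonoid (Option B) := FreeMonoid.map some
    refine ⟨(pure (FreeMonoid.of none) : Ultrafilter _) * q.map inc, ?_, ?_⟩
    · show ∀ᶠ t in (((pure (FreeMonoid.of none) : Ultrafilter _) * q.map inc : Ultrafilter _) :
        Filter _), t ∈ A
      rw [Ultrafilter.eventually_mul]
      simp only [Ultrafilter.coe_pure, Filter.eventually_pure]
      exact Filter.Eventually.of_forall fun m => ⟨m, rfl⟩
    · simp only [mem_iInter, mem_preimage]
      intro a
      rw [ultra_map_mul]
      apply hNm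
      rw [Ultrafilter.map_map]
      have : (subW a) ∘ inc = id := by
        funext x
        simp only [subW, inc, Function.comp_apply, id]
        rw [FreeMonoid.map_map]
        have : ((fun o : Option B => o.getD a) ∘ some) = id := rfl
        rw [this, FreeMonoid.map_id]
        rfl
      rw [this]
      simpa using hq
  have hTm : ∀ᵉ (x ∈ T) (y ∈ T), x * y ∈ T := by
    rintro x ⟨hx1, hx2⟩ y ⟨hy1, hy2⟩
    refine ⟨?_, ?_⟩
    · show ∀ᶠ t in ((x * y : Ultrafilter _) : Filter _), t ∈ A
      rw [Ultrafilter.eventually_mul]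
      filter_upwards [hx1] with m hm
      refine Filter.Eventually.of_forall fun m' => ?_
      obtain ⟨t', rfl⟩ := hm
      exact ⟨t' * m', mul_assoc _ _ _⟩
    · simp only [mem_iInter, mem_preimage] at *
      intro a
      rw [ultra_map_mul]
      exact hNm _ _ (hy2 a)
  obtain ⟨U, ⟨hU1, hU2⟩, hU⟩ := exists_idempotent_in_compact_subsemigroup
    Ultrafilter.continuous_mul_left T hTne hTc.isCompact hTm
  simp only [mem_iInter, mem_preimage] at hU2
  refine ⟨U, hU1, fun a b => hNe _ (hU2 b) ?_ _ (hU2 a)⟩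
  rw [← ultra_map_mul, hU]

/-- Infinite left-variable Hales-Jewett, one-step form. -/
theorem cs_step (B : Type*) [Nonempty B] [Finite B] {κ : Type*} [Finite κ]
    (χ : List B → κ) :
    ∃ (i : κ) (P : Set (List B)), P.Nonempty ∧ (∀ s ∈ P, χ s = i) ∧
      ∀ A : Set (List B), A.Finite → A ⊆ P → ∃ t : List (Option B),
        ∀ s ∈ A, ∀ a : B, s ++ a :: t.map (fun o => o.getD a) ∈ P := by
  obtain ⟨U, hU1, hU2⟩ := cs_ultra B
  obtain ⟨b₀⟩ := ‹Nonempty B›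
  obtain ⟨i, hi⟩ : ∃ i, ∀ᶠ t in (U : Filter (FreeMonoid (Option B))),
      χ (subW b₀ t).toList = i := by
    have h : ∀ᶠ t in (U : Filter (FreeMonoid (Option B))), ∃ i : κ, χ (subW b₀ t).toList = i :=
      Filter.Eventually.of_forall fun s => ⟨_, rfl⟩
    exact Ultrafilter.eventually_exists_iff.mp h
  let P : Set (List B) := {s | χ s = i ∧ ∀ a : B, ∀ᶠ t in (U : Filter _),
    χ (s ++ (subW a t).toList) = i}
  have hup : ∀ a b : B, ∀ p : FreeMonoid B → Prop, (∀ᶠ t in (U : Filter _), p (subW a t)) ↔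
      ∀ᶠ t in (U : Filter _), ∀ᶠ t' in (U : Filter _), p (subW a t * subW b t') := by
    intro a b p
    have h := hU2 a b
    have : (∀ᶠ t in (U.map (subW a) : Filter _), p t) ↔
      ∀ᶠ t in ((U.map (subW a) * U.map (subW b) : Ultrafilter _) : Filter _), p t := by rw [h]
    rw [Ultrafilter.eventually_mul] at this
    simpa only [Ultrafilter.coe_map, Filter.eventually_map] using this
  refine ⟨i, P, ?_, fun s hs => hs.1, ?_⟩
  · have h2 : ∀ᶠ t in (U : Filter _), χ (subW b₀ t) = i := hi
    have h3 : ∀ᶠ t in (U : Filter _), ∀ a : B, ∀ᶠ t' in (U : Filter _),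
        χ (subW b₀ t * subW a t') = i :=
      Filter.eventually_all.2 fun a => (hup b₀ a (fun s => χ s = i)).1 h2
    obtain ⟨t, h4, h5⟩ := (h2.and h3).exists
    exact ⟨subW b₀ t, h4, h5⟩
  · intro A hA hAP
    have h : ∀ s ∈ A, ∀ᶠ t in (U : Filter _), ∀ a : B, s ++ (subW a t).toList ∈ P := by
      intro s hs
      refine Filter.eventually_all.2 fun a => ?_
      refine ((hAP hs).2 a).and (Filter.eventually_all.2 fun b => ?_)
      have := (hup a b (fun r => χ (s ++ r.toList) = i)).1 ((hAP hs).2 a)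
      simpa [List.append_assoc] using this
    have h' := (Filter.eventually_all_finite hA).2 h
    obtain ⟨t, ht, t', rfl⟩ := (h'.and hU1).exists
    refine ⟨t'.toList, fun s hs a => ?_⟩
    have := ht s hs a
    simpa [subW, FreeMonoid.toList_map] using this

/-- Infinite left-variable Hales-Jewett theorem (Carlson-Simpson), with an infinite word. -/
theorem cs_inf (B : Type) [Nonempty B] [Finite B] {κ : Type*} [Finite κ]
    (χ : List B → κ) :
    ∃ (i : κ) (T : ℕ → B ⊕ ℕ) (q : ℕ → ℕ),
      (∀ m, T (q m) = Sum.inr m ∧ ∀ q' < q m, ∀ m', T q' = Sum.inr m' → m' < m) ∧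
      ∀ (β : ℕ → B) (m : ℕ),
        χ ((List.range (q m)).map (fun p => Sum.elim id β (T p))) = i := by
  obtain ⟨i, P, ⟨s₀, hs₀⟩, hPi, hP⟩ := cs_step B χ
  let I : ℕ → List (B ⊕ ℕ) → Prop := fun m L =>
    (∀ m', Sum.inr m' ∈ L → m' < m) ∧ ∀ β : ℕ → B, L.map (Sum.elim id β) ∈ P
  have step : ∀ m L, I m L → ∃ t, I (m + 1) (L ++ Sum.inr m :: t) := by
    rintro m L ⟨h1, h2⟩
    let A : Set (List B) := range (fun β : ℕ → B => L.map (Sum.elim id β))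
    have hA : A.Finite := by
      refine (List.finite_length_eq B L.length).subset ?_
      rintro _ ⟨β, rfl⟩
      simp
    obtain ⟨t, ht⟩ := hP A hA (by rintro _ ⟨β, rfl⟩; exact h2 β)
    refine ⟨t.map (fun o => o.elim (Sum.inr m) Sum.inl), ?_, ?_⟩
    · intro m' hm'
      simp only [List.mem_append, List.mem_cons, List.mem_map] at hm'
      rcases hm' with h | h | ⟨o, -, ho⟩
      · exact (h1 _ h).trans (Nat.lt_succ_self m)
      · cases h; exact Nat.lt_succ_self m
      · cases o with
        | none => cases ho; exact Nat.lt_succ_self m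
        | some b => cases ho
    · intro β
      have := ht _ ⟨β, rfl⟩ (β m)
      convert this using 1
      simp only [List.map_append, List.map_cons, List.map_map, Sum.elim_inr]
      congr 2
      apply List.map_congr_left
      intro o _
      cases o <;> rfl
  choose! t ht using step
  let L : ℕ → List (B ⊕ ℕ) := fun n =>
    Nat.rec (s₀.map Sum.inl) (fun m L => L ++ Sum.inr m :: t m L) n
  have hL0 : L 0 = s₀.map Sum.inl := rfl
  have hLs : ∀ n, L (n + 1) = L n ++ Sum.inr n :: t n (L n) := fun n => rfl
  have hI : ∀ n, I n (L n) := by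
    intro n
    induction n with
    | zero =>
      refine ⟨?_, ?_⟩
      · intro m' hm'
        rw [hL0] at hm'
        simp at hm'
      · intro β
        rw [hL0]
        simpa using hs₀
    | succ n ih => rw [hLs]; exact ht n _ ih
  have hpre : ∀ n m, n ≤ m → L n <+: L m := by
    intro n m h
    induction m, h using Nat.le_induction with
    | base => exact List.prefix_rfl
    | succ m _ ih => rw [hLs]; exact ih.trans (List.prefix_append _ _)
  have hlen : ∀ n, n ≤ (L n).length := by
    intro n
    induction n with
    | zero => exact Nat.zero_le _
    | succ n ih => rw [hLs]; simp; omega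
  let T : ℕ → B ⊕ ℕ := fun p => (L (p + 1))[p]'(hlen (p + 1))
  have hT : ∀ n p (h : p < (L n).length), T p = (L n)[p] := by
    intro n p h
    rcases le_total n (p + 1) with h' | h'
    · exact ((hpre _ _ h').getElem h).symm
    · exact (hpre _ _ h').getElem (hlen (p + 1))
  refine ⟨i, T, fun m => (L m).length, ?_, ?_⟩
  · intro m
    refine ⟨?_, ?_⟩
    · rw [hT (m + 1) _ (by rw [hLs]; simp)]
      simp [hLs]
    · intro q' hq' m' hm'
      rw [hT m q' hq'] at hm'
      exact (hI m).1 m' (hm' ▸ List.getElem_mem _)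
  · intro β m
    apply hPi
    convert (hI m).2 β using 1
    apply List.ext_getElem
    · simp
    · intro p h1 h2
      simp only [List.getElem_map, List.getElem_range]
      rw [hT m p (by simpa using h1)]

end CS

section Words

/-- Typed rigid surjections from `ℕ` onto `S`. -/
def Wd (l : ℕ) (S : Set ℕ) (f : ℕ → ℕ) : Prop :=
  (∀ n, f n % l ≤ n % l) ∧ (∀ n, f n ∈ S) ∧
    ∀ j ∈ S, ∃ n, f n = j ∧ n % l = j % l ∧ ∀ m < n, f m < j

theorem Wd.id (l : ℕ) : Wd l univ id :=
  ⟨fun _ => le_rfl, fun _ => mem_univ _, fun j _ => ⟨j, rfl, rfl, fun _ h => h⟩⟩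

theorem Wd.comp {l : ℕ} {S : Set ℕ} {v w : ℕ → ℕ} (hv : Wd l S v) (hw : Wd l univ w) :
    Wd l S (v ∘ w) := by
  refine ⟨fun n => (hv.1 _).trans (hw.1 _), fun n => hv.2.1 _, fun j hj => ?_⟩
  obtain ⟨x, h1, h2, h3⟩ := hv.2.2 j hj
  obtain ⟨n, h4, h5, h6⟩ := hw.2.2 x (mem_univ _)
  exact ⟨n, by simp [h4, h1], h5.trans h2, fun m hm => h3 _ (h6 m hm)⟩

theorem Wd.le_self {l : ℕ} {w : ℕ → ℕ} (hw : Wd l univ w) (x : ℕ) : w x ≤ x := by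
  have h : ∀ j n, w n = j → (∀ m < n, w m < j) → j ≤ n := by
    intro j
    induction j with
    | zero => intros; exact Nat.zero_le _
    | succ j ih =>
      intro n h1 h2
      obtain ⟨n', h3, -, h5⟩ := hw.2.2 j (mem_univ _)
      have h6 := ih n' h3 h5
      by_contra hlt
      have : n' = n ∨ n < n' := by omega
      rcases this with rfl | h
      · omega
      · have := h5 n h; omega
  obtain ⟨n, h1, -, h3⟩ := hw.2.2 (w x) (mem_univ _)
  have := h _ n h1 h3
  have : n ≤ x := by
    by_contra hlt
    have := h3 x (by omega)
    omega
  omega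

/-- Factoring a word through a finer one. -/
theorem Wd.factor {l : ℕ} {S : Set ℕ} {f w : ℕ → ℕ} (hf : Wd l S f) (hw : Wd l univ w)
    (h : ∀ x y, w x = w y → f x = f y) : ∃ v, Wd l S v ∧ f = v ∘ w := by
  choose F hF1 hF2 hF3 using fun j => hw.2.2 j (mem_univ _)
  refine ⟨fun x => f (F x), ⟨fun n => ?_, fun n => hf.2.1 _, fun j hj => ?_⟩, ?_⟩
  · rw [← hF2 n]; exact hf.1 _
  · obtain ⟨n, h1, h2, h3⟩ := hf.2.2 j hj
    have e1 : f (F (w n)) = j := by rw [← h1]; exact h _ _ (hF1 _)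
    have e2 : F (w n) ≤ n := by
      by_contra hlt
      have := hF3 (w n) n (by omega)
      omega
    have e3 : F (w n) = n := by
      by_contra hne
      have := h3 (F (w n)) (by omega)
      omega
    refine ⟨w n, e1, ?_, ?_⟩
    · rw [← hF2 (w n), e3, h2]
    · intro y hy
      apply h3
      by_contra hlt
      rcases (not_lt.1 hlt).eq_or_lt with h' | h'
      · have := hF1 y; rw [← h'] at this; omega
      · have := hF3 y n h'; omega
  · funext x
    exact h _ _ (hF1 _).symm

/-- Fusion along a sequence of words with longer and longer fixed parts. -/
theorem Wd.fusion {l : ℕ} (w : ℕ → ℕ → ℕ) (hw : ∀ n, Wd l univ (w n))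
    (g : ℕ → ℕ → ℕ) (hg : ∀ n, Wd l univ (g n)) (hgf : ∀ n, ∀ i ≤ n, g n i = i)
    (hs : ∀ n, w (n + 1) = g n ∘ w n) :
    ∃ W, Wd l univ W ∧ ∀ n, ∃ G, Wd l univ G ∧ (∀ i ≤ n, G i = i) ∧ W = G ∘ w n := by
  have hstab : ∀ n m x, n ≤ m → w n x ≤ n → w m x = w n x := by
    intro n m x h hx
    induction m, h using Nat.le_induction with
    | base => rfl
    | succ m hm ih =>
      rw [hs, Function.comp_apply, ih]
      exact hgf m _ (hx.trans hm)
  have hmono : ∀ n m x, n ≤ m → w m x ≤ w n x := by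
    intro n m x h
    induction m, h using Nat.le_induction with
    | base => exact le_rfl
    | succ m hm ih =>
      rw [hs, Function.comp_apply]
      exact ((hg m).le_self _).trans ih
  have hker : ∀ n m x y, n ≤ m → w n x = w n y → w m x = w m y := by
    intro n m x y h hx
    induction m, h using Nat.le_induction with
    | base => exact hx
    | succ m hm ih => rw [hs, Function.comp_apply, Function.comp_apply, ih]
  have hlim : ∀ m x, x ≤ m → w m x = w x x := fun m x h => hstab x m x h ((hw x).le_self x)
  have hW : Wd l univ (fun x => w x x) := by
    refine ⟨fun x => (hw x).1 x, fun _ => mem_univ _, fun j _ => ?_⟩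
    obtain ⟨y, h1, h2, h3⟩ := (hw j).2.2 j (mem_univ _)
    refine ⟨y, ?_, h2, ?_⟩
    · show w y y = j
      rw [← hlim (max j y) y (le_max_right _ _), hstab j _ y (le_max_left _ _) h1.le, h1]
    · intro x hx
      show w x x < j
      rw [← hlim (max j x) x (le_max_right _ _)]
      exact (hmono j _ x (le_max_left _ _)).trans_lt (h3 x hx)
  refine ⟨_, hW, fun n => ?_⟩
  obtain ⟨G, hG, hGe⟩ := hW.factor (hw n) (by
    intro x y hxy
    show w x x = w y y
    rw [← hlim (max n (max x y)) x (by omega), ← hlim (max n (max x y)) y (by omega)]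
    exact hker n _ x y (by omega) hxy)
  refine ⟨G, hG, fun i hi => ?_, hGe⟩
  obtain ⟨y, h1, -, -⟩ := (hw n).2.2 i (mem_univ _)
  have e := congrFun hGe y
  simp only [Function.comp_apply, h1] at e
  rw [← e, ← hlim (max n y) y (by omega), hstab n _ y (by omega) (by omega), h1]

/-- `v` has its first value `j` at `n`. -/
def FO (v : ℕ → ℕ) (j n : ℕ) : Prop := v n = j ∧ ∀ m < n, v m < j

/-- Two functions agree on `[0,n]`. -/
def Agr (n : ℕ) (v v' : ℕ → ℕ) : Prop := ∀ i ≤ n, v i = v' i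

/-- Global fusion: local homogenisation gives a word after which the colour depends only on the
part up to the first occurrence of `j`. -/
theorem fusion_main {l k j : ℕ} {κ : Type*} (c : (ℕ → ℕ) → κ)
    (hloc : ∀ w, Wd l univ w → ∀ v₀, Wd l (Iio k) v₀ → ∀ n, FO v₀ j n →
      ∃ w', Wd l univ w' ∧ (∀ i ≤ n, w' i = i) ∧ ∀ v v', Wd l (Iio k) v → Wd l (Iio k) v' →
        Agr n v₀ v → Agr n v₀ v' → c (v ∘ w' ∘ w) = c (v' ∘ w' ∘ w)) :
    ∃ w, Wd l univ w ∧ ∀ n v v', Wd l (Iio k) v → Wd l (Iio k) v' → FO v j n → Agr n v v' →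
      c (v ∘ w) = c (v' ∘ w) := by
  have step : ∀ n (A : Finset (Fin (n + 1) → Fin k)), ∀ w, Wd l univ w →
      ∃ w', Wd l univ w' ∧ (∀ i ≤ n, w' i = i) ∧ ∀ u ∈ A, ∀ v v', Wd l (Iio k) v →
        Wd l (Iio k) v' → FO v j n → (∀ i, v (i : Fin (n+1)) = u i) →
        (∀ i, v' (i : Fin (n+1)) = u i) → c (v ∘ w' ∘ w) = c (v' ∘ w' ∘ w) := by
    intro n A
    classical
    induction A using Finset.induction_on with
    | empty => intro w hw; exact ⟨id, Wd.id l, fun _ _ => rfl, by simp⟩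
    | insert u A _ ih =>
      intro w hw
      obtain ⟨w1, h1, h2, h3⟩ := ih w hw
      by_cases hex : ∃ v₀, Wd l (Iio k) v₀ ∧ FO v₀ j n ∧ ∀ i, v₀ (i : Fin (n+1)) = u i
      · obtain ⟨v₀, hv₀, hfo, hu⟩ := hex
        obtain ⟨w2, h4, h5, h6⟩ := hloc (w1 ∘ w) (h1.comp hw) v₀ hv₀ n hfo
        refine ⟨w2 ∘ w1, h4.comp h1, ?_, ?_⟩
        · intro i hi; simp [h2 i hi, h5 i hi]
        · intro u' hu' v v' hv hv' hf hvu hvu'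
          rcases Finset.mem_insert.1 hu' with rfl | hu'
          · have ag : ∀ v : ℕ → ℕ, (∀ i, v (i : Fin (n+1)) = u' i) → Agr n v₀ v := by
              intro v hvu i hi
              have a := hu ⟨i, by omega⟩
              have b := hvu ⟨i, by omega⟩
              simp only at a b
              rw [a, b]
            exact h6 v v' hv hv' (ag v hvu) (ag v' hvu')
          · have key : ∀ v : ℕ → ℕ, (∀ i, v (i : Fin (n+1)) = u' i) →
                ∀ i, (v ∘ w2) (i : Fin (n+1)) = u' i := by
              intro v hvu i
              rw [Function.comp_apply, h5 i (by omega), hvu]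
            have hf' : FO (v ∘ w2) j n := by
              refine ⟨?_, fun m hm => ?_⟩
              · rw [Function.comp_apply, h5 n le_rfl]; exact hf.1
              · rw [Function.comp_apply, h5 m hm.le]; exact hf.2 m hm
            exact h3 u' hu' (v ∘ w2) (v' ∘ w2) (hv.comp h4) (hv'.comp h4) hf' (key v hvu)
              (key v' hvu')
      · refine ⟨w1, h1, h2, ?_⟩
        intro u' hu' v v' hv hv' hf hvu hvu'
        rcases Finset.mem_insert.1 hu' with rfl | hu'
        · exact absurd ⟨v, hv, hf, hvu⟩ hex
        · exact h3 u' hu' v v' hv hv' hf hvu hvu'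
  have step' : ∀ n w, ∃ w', Wd l univ w → (Wd l univ w' ∧ (∀ i ≤ n, w' i = i) ∧ ∀ v v',
      Wd l (Iio k) v → Wd l (Iio k) v' → FO v j n → Agr n v v' →
        c (v ∘ w' ∘ w) = c (v' ∘ w' ∘ w)) := by
    intro n w
    by_cases hw : Wd l univ w
    swap
    · exact ⟨w, fun h => absurd h hw⟩
    obtain ⟨w', h1, h2, h3⟩ := step n Finset.univ w hw
    refine ⟨w', fun _ => ⟨h1, h2, fun v v' hv hv' hf ha => ?_⟩⟩
    exact h3 (fun i => ⟨v i, hv.2.1 i⟩) (Finset.mem_univ _) v v' hv hv' hf (fun i => rfl)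
      (fun i => (ha i (by omega)).symm)
  choose g hg using step'
  let w : ℕ → ℕ → ℕ := fun n => Nat.rec id (fun n w => g n w ∘ w) n
  have hws : ∀ n, w (n + 1) = g n (w n) ∘ w n := fun n => rfl
  have hw : ∀ n, Wd l univ (w n) := by
    intro n
    induction n with
    | zero => exact Wd.id l
    | succ n ih => rw [hws]; exact (hg n _ ih).1.comp ih
  obtain ⟨W, hW, hWG⟩ := Wd.fusion w hw (fun n => g n (w n)) (fun n => (hg n _ (hw n)).1)
    (fun n => (hg n _ (hw n)).2.1) hws
  refine ⟨W, hW, fun n v v' hv hv' hf ha => ?_⟩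
  obtain ⟨G, hG, hGf, hGe⟩ := hWG (n + 1)
  have := (hg n _ (hw n)).2.2 (v ∘ G) (v' ∘ G) (hv.comp hG) (hv'.comp hG) ?_ ?_
  · rw [hGe, hws]; exact this
  · refine ⟨?_, fun m hm => ?_⟩
    · rw [Function.comp_apply, hGf n (by omega)]; exact hf.1
    · rw [Function.comp_apply, hGf m (by omega)]; exact hf.2 m hm
  · intro i hi
    rw [Function.comp_apply, Function.comp_apply, hGf i (by omega)]; exact ha i hi

end Words

section Local

theorem FO.unique {v : ℕ → ℕ} {j n n' : ℕ} (h : FO v j n) (h' : FO v j n') : n = n' := by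
  rcases lt_trichotomy n n' with hlt | he | hlt
  · have := h'.2 n hlt; have := h.1; omega
  · exact he
  · have := h.2 n' hlt; have := h'.1; omega

theorem Wd.fo_mod {l : ℕ} {S : Set ℕ} {v : ℕ → ℕ} (hv : Wd l S v) {j n : ℕ} (h : FO v j n) :
    n % l = j % l := by
  have hj : j ∈ S := h.1 ▸ hv.2.1 n
  obtain ⟨n', h1, h2, h3⟩ := hv.2.2 j hj
  rw [h.unique ⟨h1, h3⟩, h2]

theorem mod_aux {l n j : ℕ} (h : n % l = j % l) (Q R : ℕ) :
    (n + 1 + l * Q + R) % l = (j + 1 + R) % l := by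
  have e : n + 1 + l * Q + R = (n + (1 + R)) + l * Q := by ring
  rw [e, Nat.add_mul_mod_self_left, Nat.add_mod, h, ← Nat.add_mod]
  congr 1
  ring

theorem pos_aux {l : ℕ} (hl : 0 < l) (n p : ℕ) :
    p ≤ n ∨ ∃ Q R, R < l ∧ p = n + 1 + l * Q + R := by
  by_cases h : p ≤ n
  · exact Or.inl h
  · refine Or.inr ⟨(p - (n + 1)) / l, (p - (n + 1)) % l, Nat.mod_lt _ hl, ?_⟩
    have := Nat.div_add_mod (p - (n + 1)) l
    omega

/-- Superletters. -/
abbrev SupL (l j : ℕ) : Type := {b : Fin l → Fin (j + 1) // ∀ i, (b i : ℕ) % l ≤ (j + 1 + i) % l}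

theorem ext_exists {l k j : ℕ} (hl : 0 < l) (hj : j + 1 < k) (v₀ : ℕ → ℕ) (hv₀ : Wd l (Iio k) v₀)
    (n : ℕ) (hfo : FO v₀ j n) (s : List (SupL l j)) :
    ∃ e, Wd l (Iio k) e ∧ (∀ p ≤ n, e p = v₀ p) ∧
      (∀ Q (hQ : Q < s.length) R (hR : R < l), e (n + 1 + l * Q + R) = ((s[Q]).1 ⟨R, hR⟩ : ℕ)) ∧
      e (n + 1 + l * s.length) = j + 1 := by
  classical
  have hn := hv₀.fo_mod hfo
  let e : ℕ → ℕ := fun p => if p ≤ n then v₀ p else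
    if h : (p - (n + 1)) / l < s.length then
      ((s[(p - (n + 1)) / l]).1 ⟨(p - (n + 1)) % l, Nat.mod_lt _ hl⟩ : ℕ) else
    if j + 1 + (p - (n + 1) - l * s.length) < k then j + 1 + (p - (n + 1) - l * s.length) else 0
  have e1 : ∀ p ≤ n, e p = v₀ p := by
    intro p hp; simp only [e, if_pos hp]
  have e2 : ∀ Q (hQ : Q < s.length) R (hR : R < l),
      e (n + 1 + l * Q + R) = ((s[Q]).1 ⟨R, hR⟩ : ℕ) := by
    intro Q hQ R hR
    have a1 : n + 1 + l * Q + R - (n + 1) = l * Q + R := by omega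
    have a2 : (l * Q + R) / l = Q := by
      rw [Nat.mul_add_div hl, Nat.div_eq_of_lt hR, add_zero]
    have a3 : (l * Q + R) % l = R := by rw [Nat.mul_add_mod, Nat.mod_eq_of_lt hR]
    have a4 : ¬ (n + 1 + l * Q + R ≤ n) := by omega
    simp only [e, if_neg a4, a1, a2, a3, hQ, dif_pos]
  have e3 : ∀ x, e (n + 1 + l * s.length + x) = if j + 1 + x < k then j + 1 + x else 0 := by
    intro x
    have a4 : ¬ (n + 1 + l * s.length + x ≤ n) := by omega
    have a1 : n + 1 + l * s.length + x - (n + 1) = l * s.length + x := by omega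
    have a2 : ¬ ((l * s.length + x) / l < s.length) := by
      rw [Nat.mul_add_div hl]; exact not_lt.2 (Nat.le_add_right _ _)
    have a3 : l * s.length + x - l * s.length = x := by omega
    simp only [e, if_neg a4, a1, dif_neg a2, a3]
  have cas : ∀ p, p ≤ n ∨ (∃ Q R, Q < s.length ∧ R < l ∧ p = n + 1 + l * Q + R) ∨
      ∃ x, p = n + 1 + l * s.length + x := by
    intro p
    rcases pos_aux hl n p with h | ⟨Q, R, hR, rfl⟩
    · exact Or.inl h
    · by_cases hQ : Q < s.length
      · exact Or.inr (Or.inl ⟨Q, R, hQ, hR, rfl⟩)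
      · refine Or.inr (Or.inr ⟨l * Q + R - l * s.length, ?_⟩)
        have := Nat.mul_le_mul_left l (not_lt.1 hQ)
        omega
  have hsm : ∀ p ≤ n, v₀ p ≤ j := by
    intro p hp
    rcases hp.eq_or_lt with rfl | h
    · exact hfo.1.le
    · exact (hfo.2 p h).le
  refine ⟨e, ⟨?_, ?_, ?_⟩, e1, e2, ?_⟩
  · intro p
    rcases cas p with h | ⟨Q, R, hQ, hR, rfl⟩ | ⟨x, rfl⟩
    · rw [e1 p h]; exact hv₀.1 p
    · rw [e2 Q hQ R hR, mod_aux hn]; exact (s[Q]).2 ⟨R, hR⟩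
    · rw [e3]
      split_ifs
      · rw [mod_aux hn]
      · simp
  · intro p
    rw [mem_Iio]
    rcases cas p with h | ⟨Q, R, hQ, hR, rfl⟩ | ⟨x, rfl⟩
    · rw [e1 p h]; exact hv₀.2.1 p
    · rw [e2 Q hQ R hR]; have := ((s[Q]).1 ⟨R, hR⟩).2; omega
    · rw [e3]
      split_ifs <;> omega
  · intro j' hj'
    by_cases hjj : j' ≤ j
    · obtain ⟨x, h1, h2, h3⟩ := hv₀.2.2 j' hj'
      have hx : x ≤ n := by
        by_contra hlt
        have := h3 n (by omega)
        have := hfo.1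
        omega
      refine ⟨x, by rw [e1 x hx, h1], h2, fun m hm => ?_⟩
      rw [e1 m (by omega)]; exact h3 m hm
    · rw [mem_Iio] at hj'
      refine ⟨n + 1 + l * s.length + (j' - (j + 1)), ?_, ?_, ?_⟩
      · rw [e3, if_pos (by omega)]; omega
      · rw [mod_aux hn]; congr 1; omega
      · intro p hp
        rcases cas p with h | ⟨Q, R, hQ, hR, rfl⟩ | ⟨x, rfl⟩
        · rw [e1 p h]; have := hsm p h; omega
        · rw [e2 Q hQ R hR]; have := ((s[Q]).1 ⟨R, hR⟩).2; omega
        · rw [e3]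
          split_ifs <;> omega
  · have := e3 0
    rw [add_zero] at this
    rw [this, if_pos (by omega)]
    
theorem local_cs {l k j : ℕ} (hl : 0 < l) (hj : j + 1 < k) {κ : Type*} [Finite κ]
    (c : (ℕ → ℕ) → κ)
    (hdep : ∀ n v v', Wd l (Iio k) v → Wd l (Iio k) v' → FO v (j + 1) n → Agr n v v' →
      c v = c v')
    (v₀ : ℕ → ℕ) (hv₀ : Wd l (Iio k) v₀) (n : ℕ) (hfo : FO v₀ j n) :
    ∃ w', Wd l univ w' ∧ (∀ i ≤ n, w' i = i) ∧ ∀ v v', Wd l (Iio k) v → Wd l (Iio k) v' →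
        Agr n v₀ v → Agr n v₀ v' → c (v ∘ w') = c (v' ∘ w') := by
  classical
  have hn := hv₀.fo_mod hfo
  have hsm : ∀ p ≤ n, v₀ p ≤ j := by
    intro p hp
    rcases hp.eq_or_lt with rfl | h
    · exact hfo.1.le
    · exact (hfo.2 p h).le
  let zero : SupL l j := ⟨fun _ => 0, fun i => by simp⟩
  have : Nonempty (SupL l j) := ⟨zero⟩
  choose e he1 he2 he3 he4 using ext_exists hl hj v₀ hv₀ n hfo
  obtain ⟨i₀, T, q, hT, hχ⟩ := cs_inf (SupL l j) (fun s => c (e s))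
  have hF : ∀ b : Fin (j + 1), ∃ x, x ≤ n ∧ v₀ x = b ∧ x % l = (b : ℕ) % l := by
    intro b
    obtain ⟨x, h1, h2, h3⟩ := hv₀.2.2 b (by rw [mem_Iio]; have := b.2; omega)
    refine ⟨x, ?_, h1, h2⟩
    by_contra hlt
    have := h3 n (by omega)
    have := hfo.1
    have := b.2
    omega
  choose F hF1 hF2 hF3 using hF
  let w' : ℕ → ℕ := fun p => if p ≤ n then p else
    Sum.elim (fun b : SupL l j => F (b.1 ⟨(p - (n + 1)) % l, Nat.mod_lt _ hl⟩))
      (fun m => n + 1 + l * m + (p - (n + 1)) % l) (T ((p - (n + 1)) / l))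
  have w1 : ∀ p ≤ n, w' p = p := by
    intro p hp; simp only [w', if_pos hp]
  have w2 : ∀ Q R (hR : R < l), w' (n + 1 + l * Q + R) =
      Sum.elim (fun b : SupL l j => F (b.1 ⟨R, hR⟩)) (fun m => n + 1 + l * m + R) (T Q) := by
    intro Q R hR
    have a1 : n + 1 + l * Q + R - (n + 1) = l * Q + R := by omega
    have a2 : (l * Q + R) / l = Q := by
      rw [Nat.mul_add_div hl, Nat.div_eq_of_lt hR, add_zero]
    have a3 : (l * Q + R) % l = R := by rw [Nat.mul_add_mod, Nat.mod_eq_of_lt hR]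
    have a4 : ¬ (n + 1 + l * Q + R ≤ n) := by omega
    simp only [w', if_neg a4, a1, a2, a3]
  have hbef : ∀ m Q R, R < l → Q < q m → w' (n + 1 + l * Q + R) < n + 1 + l * m := by
    intro m Q R hR hQ
    rw [w2 Q R hR]
    rcases hTQ : T Q with b | m'
    · simp only [Sum.elim_inl]
      have := hF1 (b.1 ⟨R, hR⟩)
      omega
    · simp only [Sum.elim_inr]
      have h1 := (hT m).2 Q hQ m' hTQ
      have h2 := Nat.mul_le_mul_left l (Nat.succ_le_of_lt h1)
      rw [Nat.mul_succ] at h2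
      omega
  have hQlt : ∀ Q R Q' R', R < l → n + 1 + l * Q' + R' < n + 1 + l * Q + R → Q' ≤ Q := by
    intro Q R Q' R' hR h
    by_contra hlt
    have h2 := Nat.mul_le_mul_left l (Nat.succ_le_of_lt (not_le.1 hlt))
    rw [Nat.mul_succ] at h2
    omega
  have hw' : Wd l univ w' := by
    refine ⟨?_, fun _ => mem_univ _, ?_⟩
    · intro p
      rcases pos_aux hl n p with h | ⟨Q, R, hR, rfl⟩
      · rw [w1 p h]
      · rw [w2 Q R hR, mod_aux hn]
        rcases T Q with b | m'
        · simp only [Sum.elim_inl]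
          rw [hF3]
          exact b.2 ⟨R, hR⟩
        · simp only [Sum.elim_inr]
          rw [mod_aux hn]
    · intro x _
      rcases pos_aux hl n x with h | ⟨m, R, hR, rfl⟩
      · exact ⟨x, w1 x h, rfl, fun y hy => by rw [w1 y (by omega)]; exact hy⟩
      · refine ⟨n + 1 + l * q m + R, ?_, ?_, ?_⟩
        · rw [w2 _ R hR, (hT m).1]; rfl
        · rw [mod_aux hn, mod_aux hn]
        · intro y hy
          rcases pos_aux hl n y with h | ⟨Q, R', hR', rfl⟩
          · rw [w1 y h]; omega
          · rcases (hQlt _ _ _ _ hR hy).eq_or_lt with rfl | h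
            · rw [w2 _ R' hR', (hT m).1]
              simp only [Sum.elim_inr]
              omega
            · have := hbef m Q R' hR' h
              omega
  have key : ∀ v, Wd l (Iio k) v → Agr n v₀ v → c (v ∘ w') = i₀ := by
    intro v hv ha
    obtain ⟨x, hx1, hx2, hx3⟩ := hv.2.2 (j + 1) hj
    have hxn : ¬ x ≤ n := by
      intro h
      have h1 := ha x h
      have h2 := hsm x h
      omega
    obtain ⟨m, R, hR, hx⟩ := (pos_aux hl n x).resolve_left hxn
    have hR0 : R = 0 := by
      rw [hx, mod_aux hn] at hx2
      have h3 : (j + 1 + R) ≡ (j + 1 + 0) [MOD l] := hx2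
      have h4 := Nat.ModEq.add_left_cancel' _ h3
      unfold Nat.ModEq at h4
      rwa [Nat.mod_eq_of_lt hR, Nat.zero_mod] at h4
    subst hR0
    rw [add_zero] at hx
    let β : ℕ → SupL l j := fun m' =>
      if h : m' < m then ⟨fun R => ⟨v (n + 1 + l * m' + R), by
        apply hx3
        have h2 := Nat.mul_le_mul_left l (Nat.succ_le_of_lt h)
        rw [Nat.mul_succ] at h2
        have := R.2
        omega⟩, fun R => by
          show v _ % l ≤ _
          rw [← mod_aux hn m' R]
          exact hv.1 _⟩ else zero
    rw [← hχ β m]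
    set s := (List.range (q m)).map (fun p => Sum.elim id β (T p)) with hs
    have hlen : s.length = q m := by simp [hs]
    have hN : w' (n + 1 + l * q m) = x := by
      have := w2 (q m) 0 hl
      rw [add_zero, (hT m).1] at this
      rw [this, hx]
      simp
    have agr : ∀ p, p < n + 1 + l * q m → (v ∘ w') p = e s p := by
      intro p hp
      rw [Function.comp_apply]
      rcases pos_aux hl n p with h | ⟨Q, R, hR, rfl⟩
      · rw [w1 p h, he2 s p h]; exact (ha p h).symm
      · have hQ : Q < q m := by
          by_contra hlt
          have := Nat.mul_le_mul_left l (not_lt.1 hlt)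
          omega
        rw [he3 s Q (by omega) R hR, w2 Q R hR]
        have hsQ : s[Q]'(by omega) = Sum.elim id β (T Q) := by simp [hs]
        rw [hsQ]
        rcases hTQ : T Q with b | m'
        · simp only [Sum.elim_inl, id]
          rw [← ha _ (hF1 _), hF2]
        · simp only [Sum.elim_inr]
          have h1 := (hT m).2 Q hQ m' hTQ
          simp only [β, dif_pos h1]
    refine hdep (n + 1 + l * q m) _ _ (hv.comp hw') (he1 s) ⟨?_, ?_⟩ ?_
    · rw [Function.comp_apply, hN, hx1]
    · intro p hp
      rw [Function.comp_apply]
      apply hx3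
      rw [hx]
      rcases pos_aux hl n p with h | ⟨Q, R, hR, rfl⟩
      · rw [w1 p h]; omega
      · have hQ : Q < q m := by
          by_contra hlt
          have := Nat.mul_le_mul_left l (not_lt.1 hlt)
          omega
        exact hbef m Q R hR hQ
    · intro p hp
      rcases hp.eq_or_lt with rfl | hp
      · rw [Function.comp_apply, hN, hx1]
        have := he4 s
        rw [hlen] at this
        exact this.symm
      · exact agr p hp
  exact ⟨w', hw', w1, fun v v' hv hv' ha ha' => (key v hv ha).trans (key v' hv' ha').symm⟩

/-- Dependence passes to composition with a word. -/
theorem dep_comp {l k j : ℕ} {κ : Type*} {c : (ℕ → ℕ) → κ}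
    (hdep : ∀ n v v', Wd l (Iio k) v → Wd l (Iio k) v' → FO v j n → Agr n v v' →
      c v = c v') {w : ℕ → ℕ} (hw : Wd l univ w) :
    ∀ n v v', Wd l (Iio k) v → Wd l (Iio k) v' → FO v j n → Agr n v v' →
      c (v ∘ w) = c (v' ∘ w) := by
  intro n v v' hv hv' hf ha
  obtain ⟨N, h1, -, h3⟩ := hw.2.2 n (mem_univ _)
  refine hdep N _ _ (hv.comp hw) (hv'.comp hw) ⟨?_, ?_⟩ ?_
  · rw [Function.comp_apply, h1, hf.1]
  · intro m hm; exact hf.2 _ (h3 m hm)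
  · intro i hi
    apply ha
    rcases hi.eq_or_lt with rfl | h
    · exact h1.le
    · exact (h3 i h).le

/-- The finitary part: colours depending on the part up to the first occurrence of `j`. -/
theorem finitary {l k : ℕ} (hl : 0 < l) {κ : Type*} [Finite κ] : ∀ j, j < k →
    ∀ (c : (ℕ → ℕ) → κ),
    (∀ n v v', Wd l (Iio k) v → Wd l (Iio k) v' → FO v j n → Agr n v v' → c v = c v') →
    ∃ w, Wd l univ w ∧ ∀ v v', Wd l (Iio k) v → Wd l (Iio k) v' → c (v ∘ w) = c (v' ∘ w) := by
  intro j
  induction j with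
  | zero =>
    intro hj c hdep
    have hz : ∀ v, Wd l (Iio k) v → v 0 = 0 := by
      intro v hv
      obtain ⟨n, h1, h2, h3⟩ := hv.2.2 0 hj
      rcases Nat.eq_zero_or_pos n with rfl | h
      · exact h1
      · exact absurd (h3 0 h) (by omega)
    refine ⟨id, Wd.id l, fun v v' hv hv' => ?_⟩
    refine hdep 0 v v' hv hv' ⟨hz v hv, by simp⟩ ?_
    intro i hi
    obtain rfl : i = 0 := by omega
    rw [hz v hv, hz v' hv']
  | succ j ih =>
    intro hj c hdep
    obtain ⟨w, hw, h⟩ := fusion_main (l := l) (k := k) (j := j) c (by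
      intro w hw v₀ hv₀ n hfo
      exact local_cs hl hj (fun v => c (v ∘ w)) (dep_comp hdep hw) v₀ hv₀ n hfo)
    obtain ⟨w2, hw2, h2⟩ := ih (by omega) (fun v => c (v ∘ w)) h
    exact ⟨w2 ∘ w, hw2.comp hw, h2⟩

end Local

section Generic

theorem insert_block {l k : ℕ} (hl : 0 < l) {w : ℕ → ℕ} (hw : Wd l univ w) {n N : ℕ}
    (hN : ∀ p ≤ N, w p ≤ n) (hn : ∃ p ≤ N, w p = n)
    {v₀ : ℕ → ℕ} (hv₀ : Wd l (Iio (k + 1)) v₀) (hfull : ∃ i ≤ n, v₀ i = k)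
    {z : ℕ → ℕ} (hz : Wd l (Iio (k + 1)) z) (hag : Agr N (v₀ ∘ w) z) (M : ℕ) :
    ∃ w' N', Wd l univ w' ∧ N ≤ N' ∧ M ≤ N' ∧ Agr N w w' ∧ (∀ p ≤ N', w' p ≤ n) ∧
      ∀ z' v, Agr N' w' z' → Agr n v₀ v → Agr N' (v ∘ z') z := by
  classical
  have hF : ∀ b, b < k + 1 → ∃ x, x ≤ n ∧ v₀ x = b ∧ x % l = b % l := by
    intro b hb
    obtain ⟨x, h1, h2, h3⟩ := hv₀.2.2 b hb
    refine ⟨x, ?_, h1, h2⟩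
    obtain ⟨i, hi, hik⟩ := hfull
    by_contra hlt
    have := h3 i (by omega)
    omega
  choose! F hF1 hF2 hF3 using hF
  have hzk : ∀ p, z p < k + 1 := hz.2.1
  have hmul : N + M ≤ l * (N + M) := Nat.le_mul_of_pos_left _ hl
  let w' : ℕ → ℕ := fun p => if p ≤ N then w p else if p ≤ n + l * (N + M) then F (z p)
    else p - l * (N + M)
  have w1 : ∀ p ≤ N, w' p = w p := fun p hp => by simp only [w', if_pos hp]
  have w2 : ∀ p, N < p → p ≤ n + l * (N + M) → w' p = F (z p) := fun p hp hp' => by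
    simp only [w', if_neg (not_le.2 hp), if_pos hp']
  have w3 : ∀ p, n + l * (N + M) < p → w' p = p - l * (N + M) := fun p hp => by
    simp only [w', if_neg (show ¬ p ≤ N by omega), if_neg (not_le.2 hp)]
  have hle : ∀ p ≤ n + l * (N + M), w' p ≤ n := by
    intro p hp
    by_cases h : p ≤ N
    · rw [w1 p h]; exact hN p h
    · rw [w2 p (by omega) hp]; exact hF1 _ (hzk p)
  refine ⟨w', n + l * (N + M), ⟨?_, fun _ => mem_univ _, ?_⟩, by omega, by omega,
    fun p hp => (w1 p hp).symm, hle, ?_⟩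
  · intro p
    by_cases h : p ≤ N
    · rw [w1 p h]; exact hw.1 p
    · by_cases h' : p ≤ n + l * (N + M)
      · rw [w2 p (by omega) h', hF3 _ (hzk p)]; exact hz.1 p
      · rw [w3 p (by omega)]
        rw [Nat.sub_mul_mod (by omega)]
  · intro x _
    by_cases hx : x ≤ n
    · obtain ⟨y, h1, h2, h3⟩ := hw.2.2 x (mem_univ _)
      have hy : y ≤ N := by
        obtain ⟨p, hp, hpn⟩ := hn
        by_contra hlt
        have := h3 p (by omega)
        omega
      refine ⟨y, by rw [w1 y hy, h1], h2, fun m hm => ?_⟩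
      rw [w1 m (by omega)]; exact h3 m hm
    · refine ⟨x + l * (N + M), ?_, ?_, ?_⟩
      · rw [w3 _ (by omega)]; omega
      · rw [Nat.add_mul_mod_self_left]
      · intro m hm
        by_cases h' : m ≤ n + l * (N + M)
        · have := hle m h'; omega
        · rw [w3 m (by omega)]; omega
  · intro z' v hz' hv p hp
    rw [Function.comp_apply, ← hz' p hp, ← hv _ (hle p hp)]
    by_cases h : p ≤ N
    · rw [w1 p h]; exact hag p h
    · rw [w2 p (by omega) hp]; exact hF2 _ (hzk p)

theorem local_cont {l k : ℕ} (hl : 0 < l) {κ : Type*} (c : (ℕ → ℕ) → κ)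
    (hcont : ∀ v, Wd l (Iio (k + 1)) v → ∃ N, ∀ v', Wd l (Iio (k + 1)) v' → Agr N v v' →
      c v = c v')
    (v₀ : ℕ → ℕ) (hv₀ : Wd l (Iio (k + 1)) v₀) (n : ℕ) (hfo : FO v₀ k n) :
    ∃ w', Wd l univ w' ∧ (∀ i ≤ n, w' i = i) ∧ ∀ v v', Wd l (Iio (k + 1)) v →
      Wd l (Iio (k + 1)) v' → Agr n v₀ v → Agr n v₀ v' → c (v ∘ w') = c (v' ∘ w') := by
  obtain ⟨M, hM⟩ := hcont v₀ hv₀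
  obtain ⟨w', N', h1, h2, h3, h4, h5, h6⟩ := insert_block hl (Wd.id l) (n := n) (N := n)
    (fun p hp => hp) ⟨n, le_rfl, rfl⟩ hv₀ ⟨n, le_rfl, hfo.1⟩ hv₀ (fun p hp => rfl) M
  refine ⟨w', h1, fun i hi => (h4 i hi).symm, ?_⟩
  have key : ∀ v, Wd l (Iio (k + 1)) v → Agr n v₀ v → c v₀ = c (v ∘ w') := by
    intro v hv ha
    refine hM _ (hv.comp h1) fun i hi => ?_
    exact (h6 w' v (fun _ _ => rfl) ha i (by omega)).symm
  intro v v' hv hv' ha ha'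
  rw [← key v hv ha, ← key v' hv' ha']

/-- Mycielski-type lemma. -/
theorem generic_word {l k : ℕ} (hl : 0 < l) (D : ℕ → Set (ℕ → ℕ)) (hanti : ∀ n m, n ≤ m → D m ⊆ D n)
    (hop : ∀ n v, Wd l (Iio (k + 1)) v → v ∈ D n → ∃ M, ∀ v', Wd l (Iio (k + 1)) v' →
      Agr M v v' → v' ∈ D n)
    (hde : ∀ n v, Wd l (Iio (k + 1)) v → ∀ M, ∃ v' ∈ D n, Wd l (Iio (k + 1)) v' ∧ Agr M v v') :
    ∃ w, Wd l univ w ∧ ∀ v, Wd l (Iio (k + 1)) v → ∀ n, v ∘ w ∈ D n := by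
  classical
  let St : ℕ → (ℕ → ℕ) × ℕ → Prop := fun n x =>
    Wd l univ x.1 ∧ (∀ p ≤ x.2, x.1 p ≤ n) ∧ ∃ p ≤ x.2, x.1 p = n
  have sub : ∀ n (A : Finset (Fin (n + 1) → Fin (k + 1))) x, St n x → ∃ y, St n y ∧ x.2 ≤ y.2 ∧
      Agr x.2 x.1 y.1 ∧ ∀ u ∈ A, ∀ v, Wd l (Iio (k + 1)) v → (∃ i ≤ n, v i = k) →
        (∀ i, v (i : Fin (n + 1)) = u i) → ∀ z, Wd l univ z → Agr y.2 y.1 z → v ∘ z ∈ D n := by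
    intro n A
    induction A using Finset.induction_on with
    | empty => intro x hx; exact ⟨x, hx, le_rfl, fun _ _ => rfl, by simp⟩
    | insert u A _ ih =>
      intro x hx
      obtain ⟨y, hy, hxy, ha, hA⟩ := ih x hx
      by_cases hex : ∃ v₀, Wd l (Iio (k + 1)) v₀ ∧ (∃ i ≤ n, v₀ i = k) ∧
          ∀ i, v₀ (i : Fin (n + 1)) = u i
      · obtain ⟨v₀, hv₀, hfull, hu⟩ := hex
        obtain ⟨z₀, hz₀D, hz₀, hz₀a⟩ := hde n (v₀ ∘ y.1) (hv₀.comp hy.1) y.2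
        obtain ⟨M, hM⟩ := hop n z₀ hz₀ hz₀D
        obtain ⟨w', N', h1, h2, h3, h4, h5, h6⟩ :=
          insert_block hl hy.1 hy.2.1 hy.2.2 hv₀ hfull hz₀ hz₀a M
        refine ⟨(w', N'), ⟨h1, h5, ?_⟩, hxy.trans h2, ?_, ?_⟩
        · obtain ⟨p, hp, hpn⟩ := hy.2.2
          exact ⟨p, hp.trans h2, by rw [← hpn]; exact (h4 p hp).symm⟩
        · intro i hi
          rw [ha i hi]; exact h4 i (hi.trans hxy)
        · intro u' hu' v hv hvf hvu z hz hza
          rcases Finset.mem_insert.1 hu' with rfl | hu'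
          · refine hM _ (hv.comp hz) fun i hi => ?_
            refine (h6 z v hza ?_ i (hi.trans h3)).symm
            intro i hi
            have a := hu ⟨i, by omega⟩
            have b := hvu ⟨i, by omega⟩
            simp only at a b
            rw [a, b]
          · refine hA u' hu' v hv hvf hvu z hz fun i hi => ?_
            rw [h4 i hi]; exact hza i (hi.trans h2)
      · refine ⟨y, hy, hxy, ha, ?_⟩
        intro u' hu' v hv hvf hvu z hz hza
        rcases Finset.mem_insert.1 hu' with rfl | hu'
        · exact absurd ⟨v, hv, hvf, hvu⟩ hex
        · exact hA u' hu' v hv hvf hvu z hz hza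
  have step : ∀ n x, ∃ y, St n x → (St (n + 1) y ∧ x.2 < y.2 ∧ Agr x.2 x.1 y.1 ∧
      ∀ v, Wd l (Iio (k + 1)) v → (∃ i ≤ n, v i = k) →
        ∀ z, Wd l univ z → Agr y.2 y.1 z → v ∘ z ∈ D n) := by
    intro n x
    by_cases hx : St n x
    swap
    · exact ⟨x, fun h => absurd h hx⟩
    obtain ⟨y, hy, hxy, ha, hA⟩ := sub n Finset.univ x hx
    obtain ⟨N', h1, -, h3⟩ := hy.1.2.2 (n + 1) (mem_univ _)
    have hlt : y.2 < N' := by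
      by_contra hlt
      have := hy.2.1 N' (by omega)
      omega
    refine ⟨(y.1, N'), fun _ => ⟨⟨hy.1, ?_, N', le_rfl, h1⟩, hxy.trans_lt hlt, ha, ?_⟩⟩
    · intro p hp
      rcases hp.eq_or_lt with rfl | hp
      · exact h1.le
      · exact (h3 p hp).le
    · intro v hv hvf z hz hza
      exact hA (fun i => ⟨v i, hv.2.1 i⟩) (Finset.mem_univ _) v hv hvf (fun _ => rfl) z hz
        (fun i hi => hza i (hi.trans hlt.le))
  choose g hg using step
  let x : ℕ → (ℕ → ℕ) × ℕ := fun n => Nat.rec (id, 0) (fun n x => g n x) n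
  have hxs : ∀ n, x (n + 1) = g n (x n) := fun n => rfl
  have hx : ∀ n, St n (x n) := by
    intro n
    induction n with
    | zero => exact ⟨Wd.id l, fun p hp => hp, 0, le_rfl, rfl⟩
    | succ n ih => rw [hxs]; exact (hg n _ ih).1
  have hNlt : ∀ n, (x n).2 < (x (n + 1)).2 := fun n => (hg n _ (hx n)).2.1
  have hNm : StrictMono (fun n => (x n).2) := strictMono_nat_of_lt_succ hNlt
  have hag : ∀ n m, n ≤ m → Agr (x n).2 (x n).1 (x m).1 := by
    intro n m h
    induction m, h using Nat.le_induction with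
    | base => exact fun _ _ => rfl
    | succ m hm ih =>
      intro i hi
      rw [ih i hi]
      exact (hg m _ (hx m)).2.2.1 i (hi.trans (hNm.monotone hm))
  have hNge : ∀ n, n ≤ (x n).2 := hNm.id_le
  let W : ℕ → ℕ := fun p => (x p).1 p
  have hW : ∀ n, Agr (x n).2 (x n).1 W := by
    intro n i hi
    rcases le_total n i with h | h
    · exact hag n i h i hi
    · exact (hag i n h i (hNge i)).symm
  have hWw : Wd l univ W := by
    refine ⟨fun p => (hx p).1.1 p, fun _ => mem_univ _, fun j _ => ?_⟩
    obtain ⟨y, h1, h2, h3⟩ := (hx j).1.2.2 j (mem_univ _)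
    have hy : y ≤ (x j).2 := by
      obtain ⟨p, hp, hpn⟩ := (hx j).2.2
      by_contra hlt
      have := h3 p (by omega)
      omega
    refine ⟨y, by rw [← hW j y hy, h1], h2, fun m hm => ?_⟩
    rw [← hW j m (by omega)]; exact h3 m hm
  refine ⟨W, hWw, fun v hv n => ?_⟩
  obtain ⟨i, hi, -, -⟩ := hv.2.2 k (by simp)
  refine hanti n (max n i) (le_max_left _ _) ?_
  exact (hg (max n i) _ (hx _)).2.2.2 v hv ⟨i, le_max_right _ _, hi⟩ W hWw (hW (max n i + 1))

/-- The dual Ramsey theorem for colourings which are continuous on a comeagre set. -/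
theorem word_ramsey {l k : ℕ} (hl : 0 < l) {κ : Type*} [Finite κ] (c : (ℕ → ℕ) → κ)
    (D : ℕ → Set (ℕ → ℕ)) (hanti : ∀ n m, n ≤ m → D m ⊆ D n)
    (hop : ∀ n v, Wd l (Iio (k + 1)) v → v ∈ D n → ∃ M, ∀ v', Wd l (Iio (k + 1)) v' →
      Agr M v v' → v' ∈ D n)
    (hde : ∀ n v, Wd l (Iio (k + 1)) v → ∀ M, ∃ v' ∈ D n, Wd l (Iio (k + 1)) v' ∧ Agr M v v')
    (hc : ∀ v, Wd l (Iio (k + 1)) v → (∀ n, v ∈ D n) → ∃ M, ∀ v', Wd l (Iio (k + 1)) v' →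
      (∀ n, v' ∈ D n) → Agr M v v' → c v = c v') :
    ∃ w, Wd l univ w ∧ ∀ v v', Wd l (Iio (k + 1)) v → Wd l (Iio (k + 1)) v' →
      c (v ∘ w) = c (v' ∘ w) := by
  obtain ⟨w, hw, hwD⟩ := generic_word hl D hanti hop hde
  have hcont : ∀ w', Wd l univ w' → ∀ v, Wd l (Iio (k + 1)) v → ∃ N, ∀ v',
      Wd l (Iio (k + 1)) v' → Agr N v v' → c ((v ∘ w') ∘ w) = c ((v' ∘ w') ∘ w) := by
    intro w' hw' v hv
    obtain ⟨M, hM⟩ := hc _ ((hv.comp hw').comp hw) (hwD _ (hv.comp hw'))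
    refine ⟨M, fun v' hv' ha => hM _ ((hv'.comp hw').comp hw) (hwD _ (hv'.comp hw')) ?_⟩
    intro i hi
    simp only [Function.comp_apply]
    exact ha _ (((hw'.le_self _).trans (hw.le_self _)).trans hi)
  obtain ⟨w1, hw1, h1⟩ := fusion_main (l := l) (k := k + 1) (j := k) (fun v => c (v ∘ w)) (by
    intro w' hw' v₀ hv₀ n hfo
    exact local_cont hl (fun v => c ((v ∘ w') ∘ w)) (hcont w' hw') v₀ hv₀ n hfo)
  obtain ⟨w2, hw2, h2⟩ := finitary hl k (Nat.lt_succ_self k) (fun v => c ((v ∘ w1) ∘ w)) h1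
  exact ⟨w2 ∘ w1 ∘ w, hw2.comp (hw1.comp hw), h2⟩

end Generic

section Nikodym
open Topology Filter

theorem bm_envelope {X : Type*} [TopologicalSpace X] [SecondCountableTopology X] (A : Set X) :
    ∃ B, BaireMeasurableSet B ∧ A ⊆ B ∧ ∀ C, BaireMeasurableSet C → A ⊆ C → IsMeagre (B \ C) := by
  classical
  set b := TopologicalSpace.countableBasis X with hb
  have hbc : b.Countable := TopologicalSpace.countable_countableBasis X
  have hbb : TopologicalSpace.IsTopologicalBasis b := TopologicalSpace.isBasis_countableBasis X
  set b' : Set (Set X) := {V | V ∈ b ∧ IsMeagre (A ∩ V)} with hb'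
  have hb'c : b'.Countable := hbc.mono fun V hV => hV.1
  set U := ⋃ V ∈ b', V with hU
  have hUo : IsOpen U := isOpen_biUnion fun V hV => hbb.isOpen hV.1
  have hAU : IsMeagre (A ∩ U) := by
    have : A ∩ U = ⋃ V ∈ b', A ∩ V := by rw [hU, inter_iUnion₂]
    rw [this]
    have := hb'c.to_subtype
    rw [biUnion_eq_iUnion]
    exact isMeagre_iUnion fun V => V.2.2
  refine ⟨Uᶜ ∪ (A ∩ U), hUo.baireMeasurableSet.compl.union hAU.baireMeasurableSet, ?_, ?_⟩
  · intro x hx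
    by_cases h : x ∈ U
    · exact Or.inr ⟨hx, h⟩
    · exact Or.inl h
  · intro C hC hAC
    obtain ⟨O, hO, hOe⟩ := ((hUo.baireMeasurableSet.compl.union
      hAU.baireMeasurableSet).diff hC).residualEq_isOpen
    have hm : {x | x ∈ (Uᶜ ∪ (A ∩ U)) \ C ↔ x ∈ O} ∈ residual X :=
      Filter.eventuallyEq_set.1 hOe
    have hOU : O ⊆ U := by
      intro x hx
      obtain ⟨V, hV, hxV, hVO⟩ := hbb.exists_subset_of_mem_open hx hO
      refine mem_biUnion (x := V) ⟨hV, ?_⟩ hxV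
      show (A ∩ V)ᶜ ∈ residual X
      filter_upwards [hm] with y hy hyA
      exact (hy.2 (hVO hyA.2)).2 (hAC hyA.1)
    show ((Uᶜ ∪ (A ∩ U)) \ C)ᶜ ∈ residual X
    filter_upwards [hm] with y hy hyB
    have h1 := hOU (hy.1 hyB)
    rcases hyB.1 with h | h
    · exact h h1
    · exact hyB.2 (hAC h.1)

theorem bm_souslin {X : Type*} [TopologicalSpace X] [SecondCountableTopology X]
    (A : List ℕ → Set X) (hA : ∀ s, BaireMeasurableSet (A s)) :
    BaireMeasurableSet (souslinOp A) := by
  classical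
  set T : List ℕ → Set X := fun s =>
    {y | ∃ x : ℕ → ℕ, (∀ n, y ∈ A ((List.range n).map x)) ∧ (List.range s.length).map x = s}
    with hT
  have hTA : ∀ s, T s ⊆ A s := by
    rintro s y ⟨x, h1, h2⟩
    rw [← h2]; exact h1 _
  have hTS : ∀ s, T s ⊆ ⋃ m, T (s ++ [m]) := by
    rintro s y ⟨x, h1, h2⟩
    refine mem_iUnion.2 ⟨x s.length, x, h1, ?_⟩
    rw [List.length_append, List.length_singleton, List.range_succ, List.map_append, h2]
    rfl
  have hT0 : T [] = souslinOp A := by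
    ext y
    simp [hT, souslinOp]
  choose B hB1 hB2 hB3 using fun s => bm_envelope (T s)
  set H : List ℕ → Set X := fun s => B s ∩ A s with hH
  have hHb : ∀ s, BaireMeasurableSet (H s) := fun s => (hB1 s).inter (hA s)
  have hTH : ∀ s, T s ⊆ H s := fun s => subset_inter (hB2 s) (hTA s)
  have hM : ∀ s, IsMeagre (H s \ ⋃ m, H (s ++ [m])) := by
    intro s
    refine (hB3 s _ (BaireMeasurableSet.iUnion fun m => hHb (s ++ [m])) ?_).mono ?_
    · exact (hTS s).trans (iUnion_mono fun m => hTH _)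
    · exact sdiff_subset_sdiff_left inter_subset_left
  have hMM := isMeagre_iUnion hM
  rw [← hT0]
  refine (hHb []).congr ?_
  rw [Filter.eventuallyEq_set]
  have hMM' : (⋃ s, H s \ ⋃ m, H (s ++ [m]))ᶜ ∈ residual X := hMM
  filter_upwards [hMM'] with y hy
  refine ⟨fun hyH => ?_, fun h => hTH _ h⟩
  have hstep : ∀ s, ∃ m, y ∈ H s → y ∈ H (s ++ [m]) := by
    intro s
    by_cases hs : y ∈ H s
    · by_contra hcon
      push Not at hcon
      refine hy (mem_iUnion.2 ⟨s, hs, fun h => ?_⟩)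
      obtain ⟨m, hm⟩ := mem_iUnion.1 h
      exact (hcon m).2 hm
    · exact ⟨0, fun h => absurd h hs⟩
  choose g hg using hstep
  let S : ℕ → List ℕ := fun n => Nat.rec [] (fun _ s => s ++ [g s]) n
  have hS : ∀ n, S (n + 1) = S n ++ [g (S n)] := fun n => rfl
  have hSH : ∀ n, y ∈ H (S n) := by
    intro n
    induction n with
    | zero => exact hyH
    | succ n ih => rw [hS]; exact hg _ ih
  have hSx : ∀ n, (List.range n).map (fun n => g (S n)) = S n := by
    intro n
    induction n with
    | zero => rfl
    | succ n ih => rw [List.range_succ, List.map_append, ih, hS]; rfl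
  refine ⟨fun n => g (S n), fun n => ?_, rfl⟩
  rw [hSx]
  exact (hSH n).2

end Nikodym

section Translation

/-- The position of a point in the lexicographic order. -/
def codeL {l : ℕ} (a : ℕ × Fin l) : ℕ := a.1 * l + a.2

theorem codeL_mod {l : ℕ} (a : ℕ × Fin l) : codeL a % l = a.2 := by
  rw [codeL, Nat.mul_comm, Nat.mul_add_mod, Nat.mod_eq_of_lt a.2.2]

theorem codeL_div {l : ℕ} (hl : 0 < l) (a : ℕ × Fin l) : codeL a / l = a.1 := by
  rw [codeL, Nat.add_div_of_dvd_right (Dvd.intro_left _ rfl), Nat.mul_div_cancel _ hl,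
    Nat.div_eq_of_lt a.2.2, add_zero]

theorem decodeL_codeL {l : ℕ} (hl : 0 < l) (a : ℕ × Fin l) : decodeL l hl (codeL a) = a := by
  apply Prod.ext
  · exact codeL_div hl a
  · apply Fin.ext; exact codeL_mod a

theorem codeL_decodeL {l : ℕ} (hl : 0 < l) (n : ℕ) : codeL (decodeL l hl n) = n :=
  Nat.div_add_mod' n l

theorem lexLE_iff {l : ℕ} (hl : 0 < l) (n m : ℕ) :
    lexLE (decodeL l hl n) (decodeL l hl m) ↔ n ≤ m := by
  have h1 := Nat.div_add_mod' n l
  have h2 := Nat.div_add_mod' m l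
  have h3 := Nat.mod_lt n hl
  have h4 := Nat.mod_lt m hl
  simp only [lexLE, decodeL, Fin.mk_le_mk]
  constructor
  · rintro (h | ⟨h, h'⟩)
    · exact (Nat.lt_of_div_lt_div h).le
    · rw [h] at h1; omega
  · intro h
    rcases (Nat.div_le_div_right (c := l) h).lt_or_eq with h' | h'
    · exact Or.inl h'
    · refine Or.inr ⟨h', ?_⟩
      rw [h'] at h1; omega

theorem ordLE_iff {l : ℕ} (hl : 0 < l) (n m : ℕ) :
    ordLE (decodeL l hl n) (decodeL l hl m) ↔ n % l < m % l ∨ (n % l = m % l ∧ n ≤ m) := by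
  have h1 := Nat.div_add_mod' n l
  have h2 := Nat.div_add_mod' m l
  simp only [ordLE, decodeL, Fin.mk_lt_mk, Fin.mk.injEq]
  constructor
  · rintro (h | ⟨h, h'⟩)
    · exact Or.inl h
    · refine Or.inr ⟨h, ?_⟩
      have := Nat.mul_le_mul_right l h'
      omega
  · rintro (h | ⟨h, h'⟩)
    · exact Or.inl h
    · exact Or.inr ⟨h, Nat.div_le_div_right h'⟩

/-- The equivalence relation attached to a word. -/
def kerL (l : ℕ) (f : ℕ → ℕ) : Setoid (ℕ × Fin l) := Setoid.ker fun a => f (codeL a)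

theorem kerL_r {l : ℕ} (f : ℕ → ℕ) (a b : ℕ × Fin l) :
    (kerL l f).r a b ↔ f (codeL a) = f (codeL b) := Iff.rfl

theorem Wd.forward {l : ℕ} (hl : 0 < l) {S : Set ℕ} {f : ℕ → ℕ} (hf : Wd l S f)
    (hS : ∀ j ∈ S, ∀ i ≤ j, i ∈ S) :
    lexMinRepsL (kerL l f) = minRepsL (kerL l f) ∧
    (∀ j ∈ S, (pRepL l hl (kerL l f) j).2 = ⟨j % l, Nat.mod_lt j hl⟩) ∧
    classes (kerL l f) = (fun j => {a : ℕ × Fin l | f (codeL a) = j}) '' S ∧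
    InjOn (fun j => {a : ℕ × Fin l | f (codeL a) = j}) S := by
  classical
  have hex : ∀ j, ∃ n, j ∈ S → f n = j ∧ n % l = j % l ∧ ∀ m < n, f m < j := by
    intro j
    by_cases hj : j ∈ S
    · obtain ⟨n, hn⟩ := hf.2.2 j hj; exact ⟨n, fun _ => hn⟩
    · exact ⟨0, fun h => absurd h hj⟩
  choose F hF using hex
  have hFle : ∀ n, F (f n) ≤ n := by
    intro n
    by_contra h
    have := (hF (f n) (hf.2.1 n)).2.2 n (by omega)
    omega
  have hlex : ∀ n, decodeL l hl n ∈ lexMinRepsL (kerL l f) ↔ F (f n) = n := by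
    intro n
    constructor
    · intro h
      have := h (decodeL l hl (F (f n)))
        (by rw [kerL_r, codeL_decodeL, codeL_decodeL, (hF _ (hf.2.1 n)).1])
      rw [lexLE_iff] at this
      exact le_antisymm (hFle n) this
    · intro h b hb
      rw [← decodeL_codeL hl b] at hb ⊢
      rw [kerL_r, codeL_decodeL, codeL_decodeL] at hb
      rw [lexLE_iff, ← h, hb]
      exact hFle _
  have hmin : ∀ n, decodeL l hl n ∈ minRepsL (kerL l f) ↔ F (f n) = n := by
    intro n
    constructor
    · intro h
      have := h (decodeL l hl (F (f n)))
        (by rw [kerL_r, codeL_decodeL, codeL_decodeL, (hF _ (hf.2.1 n)).1])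
      rw [ordLE_iff] at this
      have h1 := (hF _ (hf.2.1 n)).2.1
      have h2 := hf.1 n
      have h3 := hFle n
      omega
    · intro h b hb
      rw [← decodeL_codeL hl b] at hb ⊢
      rw [kerL_r, codeL_decodeL, codeL_decodeL] at hb
      rw [ordLE_iff]
      have h1 := (hF _ (hf.2.1 n)).2.1
      have h2 := hf.1 (codeL b)
      have h3 := hFle (codeL b)
      rw [← hb] at h2 h3
      rw [h] at h1 h3
      omega
  have hFm : ∀ i j, j ∈ S → i < j → F i < F j := by
    intro i j hj hij
    have h1 := hF i (hS j hj i hij.le)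
    have h2 := hF j hj
    by_contra hle
    rcases (not_lt.1 hle).lt_or_eq with h | h
    · have := h1.2.2 _ h; omega
    · rw [← h] at h1; omega
  refine ⟨?_, ?_, ?_, ?_⟩
  · ext a
    rw [← decodeL_codeL hl a, hlex, hmin]
  · intro j hj
    have hQ : decodeL l hl (F j) ∈ minRepsL (kerL l f) := by
      rw [hmin, (hF j hj).1]
    have hcount : Nat.count (fun n => decodeL l hl n ∈ minRepsL (kerL l f)) (F j) = j := by
      rw [Nat.count_eq_card_filter_range]
      have : (Finset.range (F j)).filter (fun n => decodeL l hl n ∈ minRepsL (kerL l f))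
          = (Finset.range j).image F := by
        ext n
        simp only [Finset.mem_filter, Finset.mem_range, Finset.mem_image, hmin]
        constructor
        · rintro ⟨h1, h2⟩
          exact ⟨f n, (hF j hj).2.2 n h1, h2⟩
        · rintro ⟨i, h1, rfl⟩
          refine ⟨hFm i j hj h1, ?_⟩
          rw [(hF i (hS j hj i h1.le)).1]
      rw [this, Finset.card_image_of_injOn, Finset.card_range]
      intro a ha b hb hab
      simp only [Finset.coe_range, mem_Iio] at ha hb
      rcases lt_trichotomy a b with h | h | h
      · have := hFm a b (hS j hj b hb.le) h; omega
      · exact h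
      · have := hFm b a (hS j hj a ha.le) h; omega
    have hnth := Nat.nth_count (p := fun n => decodeL l hl n ∈ minRepsL (kerL l f)) hQ
    rw [hcount] at hnth
    rw [pRepL, hnth]
    apply Fin.ext
    exact (hF j hj).2.1
  · ext C
    constructor
    · rintro ⟨x, rfl⟩
      refine ⟨f (codeL x), hf.2.1 _, ?_⟩
      ext y
      exact ⟨fun h => Eq.symm h, fun h => Eq.symm h⟩
    · rintro ⟨j, hj, rfl⟩
      refine ⟨decodeL l hl (F j), ?_⟩
      ext y
      show f (codeL y) = j ↔ f (codeL (decodeL l hl (F j))) = f (codeL y)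
      rw [codeL_decodeL, (hF j hj).1, eq_comm]
  · intro i hi j hj hij
    have : decodeL l hl (F i) ∈ {a : ℕ × Fin l | f (codeL a) = i} := by
      show f (codeL (decodeL l hl (F i))) = i
      rw [codeL_decodeL, (hF i hi).1]
    rw [show {a : ℕ × Fin l | f (codeL a) = i} = {a : ℕ × Fin l | f (codeL a) = j} from hij]
      at this
    have h2 : f (codeL (decodeL l hl (F i))) = j := this
    rw [codeL_decodeL, (hF i hi).1] at h2
    exact h2

theorem Wd.kerL_mem_EInfL {l : ℕ} (hl : 0 < l) {f : ℕ → ℕ} (hf : Wd l univ f) :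
    kerL l f ∈ EInfL l hl := by
  obtain ⟨h1, h2, h3, h4⟩ := hf.forward hl (fun _ _ _ _ => mem_univ _)
  refine ⟨?_, fun k => h2 k (mem_univ _), h1⟩
  rw [h3]
  exact infinite_univ.image h4

theorem Wd.kerL_mem_EkL {l k : ℕ} (hl : 0 < l) {f : ℕ → ℕ} (hf : Wd l (Iio k) f) :
    kerL l f ∈ EkL l hl k := by
  obtain ⟨h1, h2, h3, h4⟩ := hf.forward hl (fun j hj i hi => lt_of_le_of_lt hi hj)
  refine ⟨?_, ?_, fun i hi => h2 i hi, h1⟩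
  · rw [h3]; exact (finite_Iio k).image _
  · rw [h3, h4.ncard_image, ← Finset.coe_Iio, ncard_coe_finset, Nat.card_Iio]

theorem backward {l : ℕ} (hl : 0 < l) (E : Setoid (ℕ × Fin l)) (S : Set ℕ)
    (hE : lexMinRepsL E = minRepsL E)
    (hp : ∀ j ∈ S, (pRepL l hl E j).2 = ⟨j % l, Nat.mod_lt j hl⟩)
    (hSS : ((classes E).Infinite ∧ S = univ) ∨
      ((classes E).Finite ∧ S = Iio (classes E).ncard)) :
    ∃ f, Wd l S f ∧ E = kerL l f := by
  classical
  set Q : ℕ → Prop := fun n => decodeL l hl n ∈ minRepsL E with hQ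
  have hQl : ∀ n, Q n ↔ ∀ m, E.r (decodeL l hl n) (decodeL l hl m) → n ≤ m := by
    intro n
    rw [hQ, ← hE]
    constructor
    · intro h m hm
      have := h _ hm
      rwa [lexLE_iff] at this
    · intro h b hb
      rw [← decodeL_codeL hl b] at hb ⊢
      rw [lexLE_iff]; exact h _ hb
  have hex : ∀ n, ∃ m, E.r (decodeL l hl n) (decodeL l hl m) := fun n => ⟨n, E.refl _⟩
  set r : ℕ → ℕ := fun n => Nat.find (hex n) with hr
  have hr1 : ∀ n, E.r (decodeL l hl n) (decodeL l hl (r n)) := fun n => Nat.find_spec (hex n)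
  have hr2 : ∀ n m, E.r (decodeL l hl n) (decodeL l hl m) → r n ≤ m :=
    fun n m h => Nat.find_min' (hex n) h
  have hrr : ∀ n m, E.r (decodeL l hl n) (decodeL l hl m) → r n = r m := fun n m h =>
    le_antisymm (hr2 _ _ (E.trans h (hr1 m))) (hr2 _ _ (E.trans (E.symm h) (hr1 n)))
  have hQr : ∀ n, Q (r n) := fun n => (hQl _).2 fun m h => hr2 _ _ (E.trans (hr1 n) h)
  have hrQ : ∀ n, Q n → r n = n := fun n h =>
    le_antisymm (hr2 _ _ (E.refl _)) ((hQl n).1 h _ (hr1 n))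
  have hcl : classes E = (fun n => {y | E.r (decodeL l hl n) y}) '' (Set.ofPred Q) := by
    ext C
    constructor
    · rintro ⟨x, rfl⟩
      refine ⟨r (codeL x), hQr _, ?_⟩
      have h1 := hr1 (codeL x)
      rw [decodeL_codeL] at h1
      ext y
      exact ⟨fun h => E.trans h1 h, fun h => E.trans (E.symm h1) h⟩
    · rintro ⟨n, _, rfl⟩
      exact ⟨_, rfl⟩
  have hinj : InjOn (fun n => {y | E.r (decodeL l hl n) y}) (Set.ofPred Q) := by
    intro n hn m hm h
    have h1 : decodeL l hl m ∈ {y | E.r (decodeL l hl m) y} := E.refl _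
    rw [show {y | E.r (decodeL l hl m) y} = {y | E.r (decodeL l hl n) y} from h.symm] at h1
    have h2 : E.r (decodeL l hl n) (decodeL l hl m) := h1
    rw [← hrQ n hn, ← hrQ m hm]
    exact hrr _ _ h2
  have hSQ : ∀ j, j ∈ S ↔ ∀ hf : (Set.ofPred Q).Finite, j < hf.toFinset.card := by
    intro j
    rcases hSS with ⟨h1, rfl⟩ | ⟨h1, rfl⟩
    · refine ⟨fun _ hf => absurd (hcl ▸ hf.image _) h1, fun _ => mem_univ _⟩
    · have hf : (Set.ofPred Q).Finite := by
        rw [hcl] at h1; exact h1.of_finite_image hinj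
      rw [hcl, hinj.ncard_image, ncard_eq_toFinset_card _ hf]
      exact ⟨fun h _ => h, fun h => h hf⟩
  have hnthm : ∀ j ∈ S, Nat.nth Q j % l = j % l := by
    intro j hj
    have := congrArg Fin.val (hp j hj)
    exact this
  have hcS : ∀ p, Q p → Nat.count Q p ∈ S := by
    intro p hpQ
    obtain ⟨j, h1, h2⟩ := Nat.exists_lt_card_nth_eq hpQ
    rw [← h2, Nat.count_nth h1]
    exact (hSQ j).2 h1
  refine ⟨fun n => Nat.count Q (r n), ⟨fun n => ?_, fun n => hcS _ (hQr n), fun j hj => ?_⟩, ?_⟩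
  · have h1 := hnthm _ (hcS _ (hQr n))
    rw [Nat.nth_count (hQr n)] at h1
    have h2 : ordLE (decodeL l hl (r n)) (decodeL l hl n) := hQr n _ (E.symm (hr1 n))
    rw [ordLE_iff] at h2
    show Nat.count Q (r n) % l ≤ n % l
    omega
  · have hq : Q (Nat.nth Q j) := Nat.nth_mem j ((hSQ j).1 hj)
    refine ⟨Nat.nth Q j, ?_, hnthm j hj, fun m hm => ?_⟩
    · show Nat.count Q (r (Nat.nth Q j)) = j
      rw [hrQ _ hq, Nat.count_nth ((hSQ j).1 hj)]
    · have h1 : r m < Nat.nth Q j := (hr2 m m (E.refl _)).trans_lt hm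
      have := Nat.count_strict_mono (hQr m) h1
      rwa [Nat.count_nth ((hSQ j).1 hj)] at this
  · ext a b
    show E.r a b ↔ (kerL l _).r a b
    rw [kerL_r]
    conv_lhs => rw [← decodeL_codeL hl a, ← decodeL_codeL hl b]
    constructor
    · intro h
      show Nat.count Q _ = Nat.count Q _
      rw [hrr _ _ h]
    · intro h
      have := Nat.count_injective (hQr _) (hQr _) h
      have h1 := hr1 (codeL a)
      rw [this] at h1
      exact E.trans h1 (E.symm (hr1 _))

theorem exists_word_EInfL {l : ℕ} (hl : 0 < l) {E : Setoid (ℕ × Fin l)} (hE : E ∈ EInfL l hl) :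
    ∃ f, Wd l univ f ∧ E = kerL l f :=
  backward hl E univ hE.2.2 (fun j _ => hE.2.1 j) (Or.inl ⟨hE.1, rfl⟩)

theorem exists_word_EkL {l k : ℕ} (hl : 0 < l) {E : Setoid (ℕ × Fin l)} (hE : E ∈ EkL l hl k) :
    ∃ f, Wd l (Iio k) f ∧ E = kerL l f :=
  backward hl E (Iio k) hE.2.2.2 (fun j hj => hE.2.2.1 j hj)
    (Or.inr ⟨hE.1, by rw [hE.2.1]⟩)

end Translation

section Assembly
open Topology

/-- The space of words onto `k`. -/
abbrev WSp (l k : ℕ) : Type := {v : ℕ → ℕ // Wd l (Iio k) v}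

theorem WSp.exists_agr {l k : ℕ} {U : Set (WSp l k)} (hU : IsOpen U) {v : WSp l k} (hv : v ∈ U) :
    ∃ M, ∀ v' : WSp l k, Agr M v.1 v'.1 → v' ∈ U := by
  obtain ⟨W, hW, rfl⟩ := isOpen_induced_iff.1 hU
  obtain ⟨I, u, h1, h2⟩ := isOpen_pi_iff.1 hW v.1 hv
  refine ⟨I.sup id, fun v' h => h2 ?_⟩
  intro i hi
  rw [← h i (Finset.le_sup (f := id) hi)]
  exact (h1 i hi).2

theorem WSp.isOpen_agr {l k : ℕ} (M : ℕ) (v : ℕ → ℕ) :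
    IsOpen {v' : WSp l k | Agr M v v'.1} := by
  have : {v' : WSp l k | Agr M v v'.1} =
      ⋂ i ∈ Finset.range (M + 1), (fun v' : WSp l k => v'.1 i) ⁻¹' {v i} := by
    ext v'
    simp only [Agr, mem_iInter, Finset.mem_range, Nat.lt_succ_iff, mem_preimage,
      mem_singleton_iff, mem_ofPred_eq]
    exact forall₂_congr fun i _ => eq_comm
  rw [this]
  refine isOpen_biInter_finset fun i _ => ?_
  exact (isOpen_discrete _).preimage ((continuous_apply i).comp continuous_subtype_val)

theorem WSp.continuous_ker {l k : ℕ} (hl : 0 < l) {w : ℕ → ℕ} (hw : Wd l univ w) :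
    @Continuous _ _ _ (graphTop (EkL l hl k))
      (fun v : WSp l k => (⟨kerL l (v.1 ∘ w), (v.2.comp hw).kerL_mem_EkL hl⟩ : ↥(EkL l hl k))) := by
  refine continuous_induced_rng.2 ?_
  refine continuous_pi fun q => ?_
  have h1 : Continuous (fun v : WSp l k => (v.1 (w (codeL q.1)), v.1 (w (codeL q.2)))) :=
    ((continuous_apply _).comp continuous_subtype_val).prodMk
      ((continuous_apply _).comp continuous_subtype_val)
  have h2 : Continuous (fun p : ℕ × ℕ => @decide (p.1 = p.2) (Classical.dec _)) :=
    continuous_of_discreteTopology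
  exact h2.comp h1

theorem preimage_souslinOp {X Y : Type*} (g : X → Y) (A : List ℕ → Set Y) :
    g ⁻¹' souslinOp A = souslinOp fun s => g ⁻¹' A s := by
  simp only [souslinOp, preimage_iUnion, preimage_iInter]

theorem SouslinMeasurable.baire {X Y : Type*} [TopologicalSpace X] [SecondCountableTopology X]
    {t : TopologicalSpace Y} {g : X → Y} (hg : @Continuous _ _ _ t g) {A : Set Y}
    (hA : SouslinMeasurable t A) : BaireMeasurableSet (g ⁻¹' A) := by
  refine hA {A | BaireMeasurableSet (g ⁻¹' A)} ?_ ?_ ?_ ?_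
  · intro U hU
    exact (hg.isOpen_preimage U hU).baireMeasurableSet
  · intro A hA
    exact BaireMeasurableSet.compl hA
  · intro A hA B hB
    exact BaireMeasurableSet.union hA hB
  · intro f hf
    show BaireMeasurableSet (g ⁻¹' souslinOp f)
    rw [preimage_souslinOp]
    exact bm_souslin _ hf

theorem residual_seq {X : Type*} [TopologicalSpace X] {G : Set X} (hG : G ∈ residual X) :
    ∃ D : ℕ → Set X, (∀ n, IsOpen (D n)) ∧ (∀ n, Dense (D n)) ∧
      (∀ n m, n ≤ m → D m ⊆ D n) ∧ (⋂ n, D n) ⊆ G := by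
  obtain ⟨S, h1, h2, h3, h4⟩ := mem_residual_iff.1 hG
  obtain ⟨g, hg⟩ := (h3.insert univ).exists_eq_range (insert_nonempty _ _)
  have hgo : ∀ n, IsOpen (g n) ∧ Dense (g n) := by
    intro n
    have : g n ∈ insert univ S := by rw [hg]; exact mem_range_self n
    rcases this with h | h
    · rw [h]; exact ⟨isOpen_univ, dense_univ⟩
    · exact ⟨h1 _ h, h2 _ h⟩
  let D : ℕ → Set X := fun n => Nat.rec (g 0) (fun n s => s ∩ g (n + 1)) n
  have hD : ∀ n, D (n + 1) = D n ∩ g (n + 1) := fun n => rfl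
  have hop : ∀ n, IsOpen (D n) ∧ Dense (D n) := by
    intro n
    induction n with
    | zero => exact hgo 0
    | succ n ih =>
      rw [hD]
      exact ⟨ih.1.inter (hgo _).1, ih.2.inter_of_isOpen_left (hgo _).2 ih.1⟩
  have hDg : ∀ n, D n ⊆ g n := by
    intro n
    cases n with
    | zero => exact subset_rfl
    | succ n => rw [hD]; exact inter_subset_right
  refine ⟨D, fun n => (hop n).1, fun n => (hop n).2, ?_, ?_⟩
  · intro n m h
    induction m, h using Nat.le_induction with
    | base => exact subset_rfl
    | succ m _ ih => rw [hD]; exact inter_subset_left.trans ih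
  · intro x hx
    apply h4
    intro t ht
    have : t ∈ range g := by rw [← hg]; exact Or.inr ht
    obtain ⟨n, rfl⟩ := this
    exact hDg n (mem_iInter.1 hx n)

end Assembly


/-- **Corollary 3.8 (dual Ramsey theorem for `ω·l`):** for every `k < ω` and every
finite Souslin measurable colouring of `𝓔_k(ω·l)` (with the topology inherited from
`2^((ω·l)×(ω·l))`) and every `E ∈ 𝓔_∞(ω·l)`, there is `F ∈ 𝓔_∞(ω·l)` with `F ≤ E`
such that the colouring is constant on `𝓔_k(ω·l) ↾ F`. -/
theorem dualRamseyOmegaL (l : ℕ) (hl : 0 < l) (k : ℕ)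
    (m : ℕ) (c : ↥(EkL l hl k) → Fin m)
    (hc : ∀ i : Fin m, SouslinMeasurable (graphTop (EkL l hl k)) {E | c E = i})
    (E : ↥(EInfL l hl)) :
    ∃ F ∈ EInfL l hl, Coarsens F E.1 ∧
      ∀ F₁ F₂ : ↥(EkL l hl k), Coarsens F₁.1 F → Coarsens F₂.1 F → c F₁ = c F₂ := by
  classical
  have hsc : SecondCountableTopology (WSp l k) :=
    TopologicalSpace.Subtype.secondCountableTopology {v : ℕ → ℕ | Wd l (Iio k) v}
  obtain ⟨wE, hwE, hE⟩ := exists_word_EInfL hl E.2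
  rcases Nat.eq_zero_or_pos k with rfl | hk
  · refine ⟨E.1, E.2, fun a b h => h, fun F₁ => ?_⟩
    exfalso
    have h1 := F₁.2.2.1
    rw [ncard_eq_zero F₁.2.1] at h1
    have : {y | F₁.1.r (decodeL l hl 0) y} ∈ classes F₁.1 := ⟨_, rfl⟩
    rw [h1] at this
    exact this
  obtain ⟨k, rfl⟩ : ∃ k', k = k' + 1 := ⟨k - 1, by omega⟩
  set φ : WSp l (k + 1) → ↥(EkL l hl (k + 1)) := fun v =>
    ⟨kerL l (v.1 ∘ wE), (v.2.comp hwE).kerL_mem_EkL hl⟩ with hφ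
  have hφc : @Continuous _ _ _ (graphTop (EkL l hl (k + 1))) φ := WSp.continuous_ker hl hwE
  have hU : ∀ i : Fin m, ∃ U : Set (WSp l (k + 1)), IsOpen U ∧
      {v | c (φ v) = i ↔ v ∈ U} ∈ residual (WSp l (k + 1)) := by
    intro i
    obtain ⟨U, h1, h2⟩ := ((hc i).baire hφc).residualEq_isOpen
    exact ⟨U, h1, Filter.eventuallyEq_set.1 h2⟩
  choose U hUo hUr using hU
  have hG : (⋂ i, {v | c (φ v) = i ↔ v ∈ U i}) ∈ residual (WSp l (k + 1)) :=
    countable_iInter_mem.2 hUr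
  obtain ⟨D, hDo, hDd, hDa, hDG⟩ := residual_seq hG
  obtain ⟨w, hw, hwc⟩ := word_ramsey (l := l) (k := k) hl (κ := Option (Fin m))
    (fun v => if h : Wd l (Iio (k + 1)) v then some (c (φ ⟨v, h⟩)) else none)
    (fun n => {v | ∃ h : Wd l (Iio (k + 1)) v, (⟨v, h⟩ : WSp l (k + 1)) ∈ D n})
    (by
      rintro n m' h v ⟨h1, h2⟩
      exact ⟨h1, hDa n m' h h2⟩)
    (by
      rintro n v hv ⟨h1, h2⟩
      obtain ⟨M, hM⟩ := WSp.exists_agr (hDo n) h2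
      exact ⟨M, fun v' hv' ha => ⟨hv', hM ⟨v', hv'⟩ ha⟩⟩)
    (by
      intro n v hv M
      obtain ⟨v', h1, h2⟩ := (hDd n).inter_open_nonempty _
        (WSp.isOpen_agr (l := l) (k := k + 1) M v) ⟨⟨v, hv⟩, fun i _ => rfl⟩
      exact ⟨v'.1, ⟨v'.2, h2⟩, v'.2, h1⟩)
    (by
      intro v hv hvD
      have key : ∀ v' : ℕ → ℕ, ∀ hv' : Wd l (Iio (k + 1)) v',
          (∀ n, v' ∈ {v | ∃ h : Wd l (Iio (k + 1)) v, (⟨v, h⟩ : WSp l (k + 1)) ∈ D n}) →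
          ∀ i, c (φ ⟨v', hv'⟩) = i ↔ (⟨v', hv'⟩ : WSp l (k + 1)) ∈ U i := by
        intro v' hv' h i
        have h1 : (⟨v', hv'⟩ : WSp l (k + 1)) ∈ ⋂ n, D n :=
          mem_iInter.2 fun n => (h n).choose_spec
        exact mem_iInter.1 (hDG h1) i
      obtain ⟨M, hM⟩ := WSp.exists_agr (hUo _) ((key v hv hvD _).1 rfl)
      refine ⟨M, fun v' hv' hvD' ha => ?_⟩
      have := (key v' hv' hvD' _).2 (hM ⟨v', hv'⟩ ha)
      simp only [hv, hv', dite_true, this])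
  have hww : Wd l univ (w ∘ wE) := hw.comp hwE
  have main : ∀ F₁ : ↥(EkL l hl (k + 1)), Coarsens F₁.1 (kerL l (w ∘ wE)) →
      ∃ v, ∃ hv : Wd l (Iio (k + 1)) v, F₁ = φ ⟨v ∘ w, hv.comp hw⟩ := by
    intro F₁ hF
    obtain ⟨f, hf, hff⟩ := exists_word_EkL hl F₁.2
    obtain ⟨v, hv, hvf⟩ := hf.factor hww (by
      intro x y hxy
      have h1 := hF (decodeL l hl x) (decodeL l hl y)
        (by rw [kerL_r, codeL_decodeL, codeL_decodeL]; exact hxy)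
      rw [hff, kerL_r, codeL_decodeL, codeL_decodeL] at h1
      exact h1)
    refine ⟨v, hv, Subtype.ext ?_⟩
    rw [hff, hvf]
    rfl
  refine ⟨kerL l (w ∘ wE), hww.kerL_mem_EInfL hl, ?_, ?_⟩
  · intro a b hab
    rw [hE, kerL_r] at hab
    rw [kerL_r, Function.comp_apply, Function.comp_apply, hab]
  · intro F₁ F₂ h1 h2
    obtain ⟨v₁, hv₁, rfl⟩ := main F₁ h1
    obtain ⟨v₂, hv₂, rfl⟩ := main F₂ h2
    have := hwc v₁ v₂ hv₁ hv₂
    simpa only [hv₁.comp hw, hv₂.comp hw, dite_true, Option.some.injEq] using this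

end DualRamsey
end
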